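/- arXiv:2203.06268 — 2 statements merged into one kernel-verified Lean document; each statement's English description precedes it below -/
import Mathlib

section
/- There exists a constant δ > 0 and N ∈ ℕ such that for all n ≥ N, C(n) ≤ n!·(c + exp(−δ·(log n · log log n)^{1/2}))^n. -/
open Real Filter

/-- `C(n)`: the number of coprime permutations of `{1, …, n}`,
i.e. permutations `σ` with `gcd(m, σ(m)) = 1` for all `m ∈ {1, …, n}`. -/
noncomputable def coprimePermCount (n : ℕ) : ℕ :=
  Nat.card {σ : Equiv.Perm (Fin n) // ∀ m : Fin n, Nat.gcd (m.1 + 1) ((σ m).1 + 1) = 1}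

/-- The constant `c = ∏_p (p-1)^{2(1-1/p)} / (p · (p-2)^{1-2/p})`, where the factor at
`p = 2` is `1/2` (real powers, with `(0:ℝ) ^ (0:ℝ) = 1`). -/
noncomputable def coprimeConst : ℝ :=
  ∏' p : Nat.Primes,
    (((p : ℕ) : ℝ) - 1) ^ (2 * (1 - 1 / ((p : ℕ) : ℝ))) /
      (((p : ℕ) : ℝ) * (((p : ℕ) : ℝ) - 2) ^ (1 - 2 / ((p : ℕ) : ℝ)))

/-- The number of permutations `σ` with `t ∘ σ = t ∘ σ₀` is the product of the factorials of the
fibre sizes of `t`. -/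
theorem card_perm_comp_eq {α β : Type*} [Fintype α] [DecidableEq α] [DecidableEq β]
    (t : α → β) (σ₀ : Equiv.Perm α) :
    (Finset.univ.filter fun σ : Equiv.Perm α => t ∘ σ = t ∘ σ₀).card =
      ∏ i ∈ Finset.univ.image t, (Finset.univ.filter fun a => t a = i).card.factorial := by
  have h := DomMulAct.stabilizer_card' t
  simp only [Fintype.card_subtype] at h
  rw [← h]
  refine Finset.card_bij (fun σ _ => σ * σ₀⁻¹) ?_ ?_ ?_
  · intro σ hσ
    simp only [Finset.mem_filter, Finset.mem_univ, true_and] at hσ ⊢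
    ext a
    simpa using congrFun hσ (σ₀⁻¹ a)
  · intro σ _ τ _ h
    simpa using h
  · intro g hg
    simp only [Finset.mem_filter, Finset.mem_univ, true_and] at hg
    refine ⟨g * σ₀, ?_, by simp⟩
    simp only [Finset.mem_filter, Finset.mem_univ, true_and]
    ext a
    simpa using congrFun hg (σ₀ a)

/-- A permanent bound for nonnegative matrices whose columns depend only on a type `t`. -/
theorem sum_perm_prod_mul_le {α β : Type*} [Fintype α] [DecidableEq α] [DecidableEq β]
    (t : α → β) (G : α → β → ℝ) (hG : ∀ a b, 0 ≤ G a b) :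
    (∏ a, ((Finset.univ.filter fun b => t b = t a).card : ℝ)) *
        ∑ σ : Equiv.Perm α, ∏ a, G a (t (σ a)) ≤
      (∏ i ∈ Finset.univ.image t,
        ((Finset.univ.filter fun a => t a = i).card.factorial : ℝ)) *
        ∏ a, ∑ b, G a (t b) := by
  classical
  set I : Finset (α → β) := Finset.univ.image fun σ : Equiv.Perm α => t ∘ σ with hI
  have hperm : ∑ σ : Equiv.Perm α, ∏ a, G a (t (σ a)) =
      ∑ τ ∈ I, (∏ i ∈ Finset.univ.image t,
        ((Finset.univ.filter fun a => t a = i).card.factorial : ℝ)) * ∏ a, G a (τ a) := by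
    rw [← Finset.sum_fiberwise_of_maps_to (s := Finset.univ) (t := I)
      (g := fun σ : Equiv.Perm α => t ∘ σ)
      (fun σ _ => Finset.mem_image_of_mem _ (Finset.mem_univ _))]
    refine Finset.sum_congr rfl fun τ hτ => ?_
    obtain ⟨σ₀, -, rfl⟩ := Finset.mem_image.1 hτ
    rw [Finset.sum_congr rfl (g := fun _ => ∏ a, G a ((t ∘ σ₀) a))]
    · rw [Finset.sum_const, card_perm_comp_eq, nsmul_eq_mul]
      push_cast
      rfl
    · intro σ hσ
      rw [← (Finset.mem_filter.1 hσ).2]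
      rfl
  have hfun : ∑ τ ∈ I, (∏ a, ((Finset.univ.filter fun b => t b = t a).card : ℝ)) *
      ∏ a, G a (τ a) ≤ ∏ a, ∑ b, G a (t b) := by
    rw [Finset.prod_univ_sum, Fintype.piFinset_univ]
    calc _ = ∑ τ ∈ I, ∑ φ ∈ Finset.univ.filter fun φ : α → α => t ∘ φ = τ,
          ∏ a, G a (t (φ a)) := by
          refine Finset.sum_congr rfl fun τ hτ => ?_
          rw [Finset.sum_congr rfl (g := fun _ => ∏ a, G a (τ a))]
          · rw [Finset.sum_const, nsmul_eq_mul]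
            congr 1
            have : (Finset.univ.filter fun φ : α → α => t ∘ φ = τ) =
                Fintype.piFinset fun a => Finset.univ.filter fun b => t b = τ a := by
              ext φ
              simp [funext_iff]
            rw [this, Fintype.card_piFinset]
            obtain ⟨σ₀, -, rfl⟩ := Finset.mem_image.1 hτ
            push_cast
            exact (Equiv.prod_comp σ₀
              fun a => ((Finset.univ.filter fun b => t b = t a).card : ℝ)).symm
          · intro φ hφ
            rw [← (Finset.mem_filter.1 hφ).2]
            rfl
      _ ≤ _ := by
          refine Finset.sum_fiberwise_le_sum_of_sum_fiber_nonneg fun τ _ => ?_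
          exact Finset.sum_nonneg fun φ _ => Finset.prod_nonneg fun a _ => hG _ _
  rw [hperm, Finset.mul_sum]
  calc _ = (∏ i ∈ Finset.univ.image t,
        ((Finset.univ.filter fun a => t a = i).card.factorial : ℝ)) *
        ∑ τ ∈ I, (∏ a, ((Finset.univ.filter fun b => t b = t a).card : ℝ)) *
          ∏ a, G a (τ a) := by
        rw [Finset.mul_sum]
        exact Finset.sum_congr rfl fun τ _ => by ring
    _ ≤ _ := by gcongr

theorem factorial_le_exp_mul_pow {m : ℕ} (hm : m ≠ 0) :
    (m.factorial : ℝ) ≤ (exp 1 * m) * ((m : ℝ) ^ m * exp (-m)) := by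
  induction m, Nat.one_le_iff_ne_zero.2 hm using Nat.le_induction with
  | base => simp [← Real.exp_add]
  | succ m h ih =>
    have hm0 : (0 : ℝ) < m := by exact_mod_cast h
    have key : (m : ℝ) ^ (m + 1) * exp 1 ≤ (m + 1 : ℝ) ^ (m + 1) := by
      have h1 : exp (1 / (m + 1 : ℝ)) ≤ (m + 1) / m := by
        have h2 := Real.add_one_le_exp (-(1 / (m + 1 : ℝ)))
        have h3 : -(1 / (m + 1 : ℝ)) + 1 = m / (m + 1) := by field_simp; ring
        rw [h3] at h2
        have h5 := inv_anti₀ (by positivity) h2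
        rwa [Real.exp_neg, inv_inv, inv_div] at h5
      have h4 : exp 1 = exp (1 / (m + 1 : ℝ)) ^ (m + 1) := by
        rw [← Real.exp_nat_mul]
        congr 1
        push_cast
        field_simp
      rw [h4, ← mul_pow]
      gcongr
      calc (m : ℝ) * exp (1 / (m + 1 : ℝ)) ≤ m * ((m + 1) / m) := by gcongr
        _ = m + 1 := by field_simp
    rw [Nat.factorial_succ]
    push_cast
    calc ((m : ℝ) + 1) * m.factorial
        ≤ (m + 1) * ((exp 1 * m) * ((m : ℝ) ^ m * exp (-m))) := by
          gcongr
          exact ih (by omega)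
      _ = (m + 1) * exp (-m) * ((m : ℝ) ^ (m + 1) * exp 1) := by ring
      _ ≤ (m + 1) * exp (-m) * ((m + 1 : ℝ) ^ (m + 1)) := by gcongr
      _ = exp 1 * (m + 1) * ((m + 1) ^ (m + 1) * exp (-(m + 1))) := by
          rw [neg_add, Real.exp_add, Real.exp_neg 1]
          field_simp

theorem exp_neg_le_factorial_div {n : ℕ} : (n : ℝ) ^ n * exp (-n) ≤ n.factorial := by
  have h := Real.pow_div_factorial_le_exp (n : ℝ) (Nat.cast_nonneg n) n
  rw [div_le_iff₀ (by positivity)] at h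
  rw [Real.exp_neg, ← div_eq_mul_inv, div_le_iff₀ (Real.exp_pos _)]
  linarith

/-- The permanent bound with the fibre sizes estimated by Stirling's inequalities. -/
theorem sum_perm_prod_le {α β : Type*} [Fintype α] [DecidableEq α] [DecidableEq β]
    (t : α → β) (G : α → β → ℝ) (hG : ∀ a b, 0 ≤ G a b) :
    ∑ σ : Equiv.Perm α, ∏ a, G a (t (σ a)) ≤
      (exp 1 * Fintype.card α) ^ (Finset.univ.image t).card * exp (-Fintype.card α) *
        ∏ a, ∑ b, G a (t b) := by
  classical
  set N : β → ℕ := fun i => (Finset.univ.filter fun a => t a = i).card with hN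
  have hNpos : ∀ a, 0 < N (t a) := fun a =>
    Finset.card_pos.2 ⟨a, by simp⟩
  have hN' : ∀ i ∈ Finset.univ.image t, N i ≠ 0 := by
    intro i hi
    obtain ⟨a, -, rfl⟩ := Finset.mem_image.1 hi
    exact (hNpos a).ne'
  have hsum : ∑ i ∈ Finset.univ.image t, N i = Fintype.card α :=
    (Finset.card_eq_sum_card_image t Finset.univ).symm
  have hpow : ∏ a, (N (t a) : ℝ) = ∏ i ∈ Finset.univ.image t, (N i : ℝ) ^ N i := by
    rw [← Finset.prod_fiberwise_of_maps_to (s := Finset.univ) (t := Finset.univ.image t) (g := t)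
      (fun a _ => Finset.mem_image_of_mem _ (Finset.mem_univ _))]
    refine Finset.prod_congr rfl fun i _ => ?_
    rw [Finset.prod_congr rfl (g := fun _ => (N i : ℝ)), Finset.prod_const]
    intro a ha
    rw [(Finset.mem_filter.1 ha).2]
  have hfac : ∏ i ∈ Finset.univ.image t, ((N i).factorial : ℝ) ≤
      (exp 1 * Fintype.card α) ^ (Finset.univ.image t).card * exp (-Fintype.card α) *
        ∏ a, (N (t a) : ℝ) := by
    calc ∏ i ∈ Finset.univ.image t, ((N i).factorial : ℝ)
        ≤ ∏ i ∈ Finset.univ.image t,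
          ((exp 1 * Fintype.card α) * ((N i : ℝ) ^ N i * exp (-N i))) := by
          refine Finset.prod_le_prod (fun _ _ => by positivity) fun i hi => ?_
          refine (factorial_le_exp_mul_pow (hN' i hi)).trans ?_
          gcongr
          exact Finset.card_le_univ _
      _ = _ := by
          rw [Finset.prod_mul_distrib, Finset.prod_const, Finset.prod_mul_distrib, hpow,
            ← Real.exp_sum, Finset.sum_neg_distrib, ← hsum]
          push_cast
          ring
  have hpos : 0 < ∏ a, (N (t a) : ℝ) := Finset.prod_pos fun a _ => by exact_mod_cast hNpos a
  have hR : 0 ≤ ∏ a, ∑ b, G a (t b) :=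
    Finset.prod_nonneg fun a _ => Finset.sum_nonneg fun b _ => hG _ _
  refine le_of_mul_le_mul_left ?_ hpos
  calc _ ≤ (∏ i ∈ Finset.univ.image t, ((N i).factorial : ℝ)) * ∏ a, ∑ b, G a (t b) :=
        sum_perm_prod_mul_le t G hG
    _ ≤ ((exp 1 * Fintype.card α) ^ (Finset.univ.image t).card * exp (-Fintype.card α) *
        ∏ a, (N (t a) : ℝ)) * ∏ a, ∑ b, G a (t b) := by gcongr
    _ = _ := by ring

/-- The normalised Ramanujan sum `c_p(a) / φ(p)`. -/
noncomputable def ramanujanRatio (p a : ℕ) : ℝ :=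
  if p ∣ a then 1 else -1 / ((p : ℝ) - 1)

theorem prod_dvd_indicator {U : Finset ℕ} (hU : ∀ p ∈ U, p.Prime) (a : ℕ) :
    ∏ p ∈ U, (if p ∣ a then (p : ℝ) else 0) =
      if (∏ p ∈ U, p) ∣ a then ((∏ p ∈ U, p : ℕ) : ℝ) else 0 := by
  by_cases h : ∀ p ∈ U, p ∣ a
  · rw [if_pos (Finset.prod_primes_dvd a (fun p hp => (hU p hp).prime) h),
      Finset.prod_congr rfl fun p hp => if_pos (h p hp)]
    push_cast
    rfl
  · push Not at h
    obtain ⟨p, hp, hpa⟩ := h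
    rw [if_neg fun h => hpa ((Finset.dvd_prod_of_mem _ hp).trans h)]
    exact Finset.prod_eq_zero hp (if_neg hpa)

theorem sum_prod_dvd_indicator {U : Finset ℕ} (hU : ∀ p ∈ U, p.Prime) (n : ℕ) :
    ∑ a ∈ Finset.range n, ∏ p ∈ U, (if p ∣ a + 1 then (p : ℝ) else 0) =
      n - ((n % ∏ p ∈ U, p : ℕ) : ℝ) := by
  simp_rw [prod_dvd_indicator hU]
  rw [← Finset.sum_filter, Finset.sum_const, Nat.card_multiples, nsmul_eq_mul, eq_sub_iff_add_eq]
  exact_mod_cast Nat.div_add_mod' n _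

theorem prod_ramanujanRatio {S : Finset ℕ} (hS : ∀ p ∈ S, p.Prime) (a : ℕ) :
    (∏ p ∈ S, ((p : ℝ) - 1)) * ∏ p ∈ S, ramanujanRatio p a =
      ∑ U ∈ S.powerset, (∏ p ∈ U, if p ∣ a then (p : ℝ) else 0) * ∏ _p ∈ S \ U, (-1 : ℝ) := by
  rw [← Finset.prod_mul_distrib, ← Finset.prod_add]
  refine Finset.prod_congr rfl fun p hp => ?_
  have : (1 : ℝ) < p := by exact_mod_cast (hS p hp).one_lt
  have h' : (p : ℝ) - 1 ≠ 0 := by linarith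
  unfold ramanujanRatio
  split_ifs
  · ring
  · field_simp
    ring

theorem sq_sum_prod_ramanujanRatio_le {S : Finset ℕ} (hS : ∀ p ∈ S, p.Prime) (hne : S.Nonempty)
    (n : ℕ) :
    (∑ a ∈ Finset.range n, ∏ p ∈ S, ramanujanRatio p (a + 1)) ^ 2 ≤
      n * ∏ p ∈ S, (12 / (p : ℝ)) := by
  have hp1 : ∀ p ∈ S, (1 : ℝ) < p := fun p hp => by exact_mod_cast (hS p hp).one_lt
  set D : ℝ := ∏ p ∈ S, ((p : ℝ) - 1) with hD
  set H : ℝ := ∑ a ∈ Finset.range n, ∏ p ∈ S, ramanujanRatio p (a + 1) with hH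
  have hDpos : 0 < D := Finset.prod_pos fun p hp => by linarith [hp1 p hp]
  have hM : D * H = ∑ U ∈ S.powerset,
      ((n : ℝ) - ((n % ∏ p ∈ U, p : ℕ) : ℝ)) * ∏ _p ∈ S \ U, (-1 : ℝ) := by
    rw [hH, Finset.mul_sum]
    simp_rw [hD, prod_ramanujanRatio hS]
    rw [Finset.sum_comm]
    refine Finset.sum_congr rfl fun U hU => ?_
    rw [← Finset.sum_mul, sum_prod_dvd_indicator]
    exact fun p hp => hS p (Finset.mem_powerset.1 hU hp)
  have habs : ∀ U : Finset ℕ, |∏ _p ∈ S \ U, (-1 : ℝ)| = 1 := fun U => by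
    simp
  have hzero : ∑ U ∈ S.powerset, (∏ _p ∈ U, (1 : ℝ)) * ∏ _p ∈ S \ U, (-1 : ℝ) = 0 := by
    rw [← Finset.prod_add]
    obtain ⟨p, hp⟩ := hne
    exact Finset.prod_eq_zero hp (by norm_num)
  have hB1 : |D * H| ≤ 2 ^ S.card * n := by
    rw [hM]
    refine (Finset.abs_sum_le_sum_abs _ _).trans ?_
    have hcard : (2 : ℝ) ^ S.card = S.powerset.card := by
      rw [Finset.card_powerset]
      push_cast
      rfl
    rw [hcard, ← nsmul_eq_mul, ← Finset.sum_const]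
    refine Finset.sum_le_sum fun U _ => ?_
    rw [abs_mul, habs, mul_one]
    have : ((n % ∏ p ∈ U, p : ℕ) : ℝ) ≤ n := by exact_mod_cast Nat.mod_le _ _
    rw [abs_of_nonneg (by linarith)]
    have : (0 : ℝ) ≤ ((n % ∏ p ∈ U, p : ℕ) : ℝ) := by positivity
    linarith
  have hB2 : |D * H| ≤ ∏ p ∈ S, ((p : ℝ) + 1) := by
    have : D * H = -∑ U ∈ S.powerset,
        ((n % ∏ p ∈ U, p : ℕ) : ℝ) * ∏ _p ∈ S \ U, (-1 : ℝ) := by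
      rw [hM]
      simp_rw [sub_mul]
      rw [Finset.sum_sub_distrib, ← Finset.mul_sum]
      simp only [Finset.prod_const_one, one_mul] at hzero
      rw [hzero]
      ring
    rw [this, abs_neg, Finset.prod_add]
    refine (Finset.abs_sum_le_sum_abs _ _).trans (Finset.sum_le_sum fun U hU => ?_)
    rw [abs_mul, habs, Finset.prod_const_one, abs_of_nonneg (by positivity)]
    have hpos : 0 < ∏ p ∈ U, p :=
      Finset.prod_pos fun p hp => (hS p (Finset.mem_powerset.1 hU hp)).pos
    have : ((n % ∏ p ∈ U, p : ℕ) : ℝ) ≤ ((∏ p ∈ U, p : ℕ) : ℝ) := by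
      exact_mod_cast (Nat.mod_lt _ hpos).le
    push_cast at this ⊢
    linarith
  have hmul : (D * H) ^ 2 ≤ n * (D ^ 2 * ∏ p ∈ S, (12 / (p : ℝ))) := by
    calc (D * H) ^ 2 = |D * H| * |D * H| := by rw [← sq_abs]; ring
      _ ≤ (2 ^ S.card * n) * ∏ p ∈ S, ((p : ℝ) + 1) := by gcongr
      _ = n * ∏ p ∈ S, (2 * ((p : ℝ) + 1)) := by
          rw [Finset.prod_mul_distrib, Finset.prod_const]; ring
      _ ≤ _ := by
          rw [hD, ← Finset.prod_pow, ← Finset.prod_mul_distrib]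
          refine mul_le_mul_of_nonneg_left (Finset.prod_le_prod (fun p _ => by positivity)
            fun p hp => ?_) (Nat.cast_nonneg n)
          have h2 : (2 : ℝ) ≤ p := by exact_mod_cast (hS p hp).two_le
          rw [mul_div_assoc', le_div_iff₀ (by linarith)]
          nlinarith
  rw [mul_pow] at hmul
  refine le_of_mul_le_mul_left (hmul.trans_eq ?_) (pow_pos hDpos 2)
  ring

/-- The matrix `∏_p (1 - θ_p h_p(a) h_p(b))` has average entry close to at most `1`. -/
theorem sum_sum_prod_le {P : Finset ℕ} (hP : ∀ p ∈ P, p.Prime) (θ : ℕ → ℝ)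
    (hθ : ∀ p, |θ p| ≤ 1) (n : ℕ) :
    ∑ a ∈ Finset.range n, ∑ b ∈ Finset.range n,
        ∏ p ∈ P, (1 - θ p * ramanujanRatio p (a + 1) * ramanujanRatio p (b + 1)) ≤
      (n : ℝ) ^ 2 + n * ∏ p ∈ P, (1 + 12 / (p : ℝ)) := by
  have hexp : ∀ a b, ∏ p ∈ P, (1 - θ p * ramanujanRatio p (a + 1) * ramanujanRatio p (b + 1)) =
      ∑ S ∈ P.powerset, (∏ p ∈ S, -θ p) *
        ((∏ p ∈ S, ramanujanRatio p (a + 1)) * ∏ p ∈ S, ramanujanRatio p (b + 1)) := by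
    intro a b
    simp_rw [sub_eq_add_neg]
    rw [Finset.prod_one_add]
    refine Finset.sum_congr rfl fun S _ => ?_
    rw [← Finset.prod_mul_distrib, ← Finset.prod_mul_distrib]
    exact Finset.prod_congr rfl fun p _ => by ring
  have hsum : ∑ a ∈ Finset.range n, ∑ b ∈ Finset.range n,
        ∏ p ∈ P, (1 - θ p * ramanujanRatio p (a + 1) * ramanujanRatio p (b + 1)) =
      ∑ S ∈ P.powerset, (∏ p ∈ S, -θ p) *
        (∑ a ∈ Finset.range n, ∏ p ∈ S, ramanujanRatio p (a + 1)) ^ 2 := by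
    simp_rw [hexp]
    simp_rw [Finset.sum_comm (s := Finset.range n) (t := P.powerset)]
    refine Finset.sum_congr rfl fun S _ => ?_
    simp_rw [← Finset.mul_sum]
    rw [← Finset.sum_mul, pow_two]
  have hempty : ∅ ∈ P.powerset := Finset.empty_mem_powerset P
  rw [hsum, ← Finset.add_sum_erase _ _ hempty, Finset.prod_one_add, Finset.mul_sum]
  refine add_le_add (by simp) ?_
  refine (Finset.sum_le_sum fun S hS => ?_).trans
    (Finset.sum_le_sum_of_subset_of_nonneg (Finset.erase_subset ∅ P.powerset)
      fun S _ _ => by positivity)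
  obtain ⟨hS0, hSP⟩ := Finset.mem_erase.1 hS
  have h1 := sq_sum_prod_ramanujanRatio_le (fun p hp => hP p (Finset.mem_powerset.1 hSP hp))
    (Finset.nonempty_iff_ne_empty.2 hS0) n
  have h2 : ∏ p ∈ S, -θ p ≤ 1 := by
    refine (le_abs_self _).trans ?_
    rw [Finset.abs_prod]
    exact Finset.prod_le_one (fun _ _ => abs_nonneg _) fun p _ => by simpa using hθ p
  calc _ ≤ 1 * (∑ a ∈ Finset.range n, ∏ p ∈ S, ramanujanRatio p (a + 1)) ^ 2 := by gcongr
    _ ≤ _ := by rwa [one_mul]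

/-- The Euler factor at `p` of `coprimeConst`. -/
noncomputable def coprimeFactor (p : ℕ) : ℝ :=
  ((p : ℝ) - 1) ^ (2 * (1 - 1 / (p : ℝ))) / ((p : ℝ) * ((p : ℝ) - 2) ^ (1 - 2 / (p : ℝ)))

theorem coprimeFactor_two : coprimeFactor 2 = 1 / 2 := by
  norm_num [coprimeFactor]

theorem coprimeFactor_pos {p : ℕ} (hp : 2 ≤ p) : 0 < coprimeFactor p := by
  rcases hp.eq_or_lt with rfl | hp
  · norm_num [coprimeFactor_two]
  have hp3 : (3 : ℝ) ≤ p := by exact_mod_cast hp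
  have h1 : (0 : ℝ) < p - 1 := by linarith
  have h2 : (0 : ℝ) < p - 2 := by linarith
  unfold coprimeFactor
  positivity

theorem log_coprimeFactor {p : ℕ} (hp : 3 ≤ p) :
    log (coprimeFactor p) = 2 * (1 - 1 / (p : ℝ)) * log (p - 1) - log p -
      (1 - 2 / (p : ℝ)) * log (p - 2) := by
  have hp3 : (3 : ℝ) ≤ p := by exact_mod_cast hp
  have h1 : (0 : ℝ) < p - 1 := by linarith
  have h2 : (0 : ℝ) < p - 2 := by linarith
  rw [coprimeFactor, Real.log_div (by positivity) (by positivity),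
    Real.log_mul (by positivity) (by positivity), Real.log_rpow h1, Real.log_rpow h2]
  ring

theorem log_coprimeFactor_eq_mul_log {p : ℕ} (hp : 3 ≤ p) :
    log (coprimeFactor p) = 2 * ((1 - 1 / (p : ℝ)) * log (1 - 1 / (p : ℝ))) -
      (1 - 2 / (p : ℝ)) * log (1 - 2 / (p : ℝ)) := by
  have hp3 : (3 : ℝ) ≤ p := by exact_mod_cast hp
  have h0 : (p : ℝ) ≠ 0 := by linarith
  have e1 : 1 - 1 / (p : ℝ) = (p - 1) / p := by field_simp
  have e2 : 1 - 2 / (p : ℝ) = (p - 2) / p := by field_simp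
  have l1 : log (1 - 1 / (p : ℝ)) = log (p - 1) - log p := by
    rw [e1, Real.log_div (by linarith) h0]
  have l2 : log (1 - 2 / (p : ℝ)) = log (p - 2) - log p := by
    rw [e2, Real.log_div (by linarith) h0]
  rw [log_coprimeFactor hp, l1, l2]
  ring

theorem coprimeFactor_le_one {p : ℕ} (hp : 2 ≤ p) : coprimeFactor p ≤ 1 := by
  rcases hp.eq_or_lt with rfl | hp
  · norm_num [coprimeFactor_two]
  have hp3 : (3 : ℝ) ≤ p := by exact_mod_cast hp
  have hx : 2 / (p : ℝ) ≤ 1 := by rw [div_le_one (by linarith)]; linarith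
  have h := Real.convexOn_mul_log.2 (show (1 : ℝ) ∈ Set.Ici 0 by simp)
    (show 1 - 2 / (p : ℝ) ∈ Set.Ici 0 by simpa using hx) (show (0 : ℝ) ≤ 1 / 2 by norm_num)
    (show (0 : ℝ) ≤ 1 / 2 by norm_num) (by norm_num)
  simp only [smul_eq_mul, Real.log_one, mul_zero, zero_add] at h
  have e : 1 / 2 * 1 + 1 / 2 * (1 - 2 / (p : ℝ)) = 1 - 1 / p := by ring
  rw [e] at h
  rw [← Real.log_nonpos_iff (coprimeFactor_pos hp.le).le, log_coprimeFactor_eq_mul_log hp]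
  linarith

theorem one_sub_le_coprimeFactor {p : ℕ} (hp : 2 ≤ p) :
    1 - 4 / (p : ℝ) ^ 2 ≤ coprimeFactor p := by
  rcases hp.eq_or_lt with rfl | hp
  · norm_num [coprimeFactor_two]
  have hp3 : (3 : ℝ) ≤ p := by exact_mod_cast hp
  have hx2 : 0 < 1 - 2 / (p : ℝ) := by rw [sub_pos, div_lt_one (by linarith)]; linarith
  have hx1 : 0 < 1 - 1 / (p : ℝ) := by rw [sub_pos, div_lt_one (by linarith)]; linarith
  have h1 := Real.one_sub_inv_le_log_of_pos hx1
  have h1' := mul_le_mul_of_nonneg_left h1 hx1.le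
  rw [mul_sub, mul_inv_cancel₀ hx1.ne'] at h1'
  have h2 := mul_le_mul_of_nonneg_left (Real.log_le_sub_one_of_pos hx2) hx2.le
  have h3 : -(4 / (p : ℝ) ^ 2) ≤ log (coprimeFactor p) := by
    rw [log_coprimeFactor_eq_mul_log hp]
    have e : 4 / (p : ℝ) ^ 2 = 2 / p * (2 / p) := by field_simp; norm_num
    have e' : 2 / (p : ℝ) = 2 * (1 / p) := by ring
    rw [e]
    rw [e'] at h2 ⊢
    nlinarith
  have h4 := Real.add_one_le_exp (log (coprimeFactor p))
  rw [Real.exp_log (coprimeFactor_pos hp.le)] at h4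
  linarith

/-- The damping used at the prime `2` to keep the row and column weights positive. -/
noncomputable def damping (n p : ℕ) : ℝ := if p = 2 then 1 - 1 / (n : ℝ) else 1

/-- The `p`-component of the sieve kernel at two non-multiples of `p`. -/
noncomputable def kernelOff (n p : ℕ) : ℝ := 1 - damping n p / ((p : ℝ) - 1) ^ 2

/-- The `p`-component of the sieve kernel at a multiple and a non-multiple of `p`. -/
noncomputable def kernelMixed (n p : ℕ) : ℝ := 1 + damping n p / ((p : ℝ) - 1)

theorem damping_nonneg (n p : ℕ) : 0 ≤ damping n p := by
  unfold damping
  split_ifs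
  · have : 1 / (n : ℝ) ≤ 1 := by
      rcases Nat.eq_zero_or_pos n with rfl | h
      · simp
      · rw [div_le_one (by exact_mod_cast h)]; exact_mod_cast h
    linarith
  · norm_num

theorem damping_le_one (n p : ℕ) : damping n p ≤ 1 := by
  unfold damping
  split_ifs
  · have : 0 ≤ 1 / (n : ℝ) := by positivity
    linarith
  · norm_num

theorem kernelOff_eq {n p : ℕ} (hp : 3 ≤ p) :
    kernelOff n p = p * (p - 2) / ((p : ℝ) - 1) ^ 2 := by
  have hp3 : (3 : ℝ) ≤ p := by exact_mod_cast hp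
  have h1 : (p : ℝ) - 1 ≠ 0 := by linarith
  rw [kernelOff, damping, if_neg (by omega)]
  field_simp
  ring

theorem kernelMixed_eq {n p : ℕ} (hp : 3 ≤ p) :
    kernelMixed n p = p / ((p : ℝ) - 1) := by
  have hp3 : (3 : ℝ) ≤ p := by exact_mod_cast hp
  have h1 : (p : ℝ) - 1 ≠ 0 := by linarith
  rw [kernelMixed, damping, if_neg (by omega)]
  field_simp
  ring

theorem kernelOff_pos {n p : ℕ} (hn : 0 < n) (hp : 2 ≤ p) : 0 < kernelOff n p := by
  rcases hp.eq_or_lt with rfl | hp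
  · norm_num [kernelOff, damping, hn]
  · have hp3 : (3 : ℝ) ≤ p := by exact_mod_cast hp
    rw [kernelOff_eq hp]
    have : (0 : ℝ) < p - 2 := by linarith
    have : (0 : ℝ) < p - 1 := by linarith
    positivity

theorem kernelMixed_pos {n p : ℕ} (hp : 2 ≤ p) : 0 < kernelMixed n p := by
  have hp3 : (2 : ℝ) ≤ p := by exact_mod_cast hp
  have := damping_nonneg n p
  have : (0 : ℝ) < p - 1 := by linarith
  unfold kernelMixed
  positivity

/-- Up to a bounded factor (up to `4n` at `p = 2`), the product of the row and column weights at
`p` is `coprimeFactor p ^ (-n)`. -/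
theorem one_le_weight_mul_coprimeFactor_pow {n p : ℕ} (hn : 0 < n) (hp : 2 ≤ p) :
    1 ≤ (kernelOff n p ^ (n - 2 * (n / p)) * kernelMixed n p ^ (2 * (n / p))) *
      coprimeFactor p ^ n * (4 * if p = 2 then (n : ℝ) else 1) := by
  have hn1 : (1 : ℝ) ≤ n := by exact_mod_cast hn
  rcases hp.eq_or_lt with rfl | hp
  · have hx : kernelOff n 2 = (n : ℝ)⁻¹ := by norm_num [kernelOff, damping]
    have hy : kernelMixed n 2 = 2 - (n : ℝ)⁻¹ := by norm_num [kernelMixed, damping]; ring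
    have hinv : (n : ℝ)⁻¹ ≤ 1 := inv_le_one_of_one_le₀ hn1
    have hinv0 : 0 < (n : ℝ)⁻¹ := by positivity
    have hB : (1 : ℝ) / 2 ≤ (1 - (n : ℝ)⁻¹ / 2) ^ n := by
      have := one_add_mul_le_pow (a := -((n : ℝ)⁻¹ / 2)) (by linarith) n
      have e : 1 + (n : ℝ) * -((n : ℝ)⁻¹ / 2) = 1 / 2 := by field_simp; norm_num
      rw [e] at this
      simpa [sub_eq_add_neg] using this
    have hy2 : kernelMixed n 2 ^ n * (1 / 2) ^ n = (1 - (n : ℝ)⁻¹ / 2) ^ n := by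
      rw [← mul_pow, hy]; congr 1; ring
    have hmain : kernelMixed n 2 ^ n ≤
        2 * n * (kernelOff n 2 ^ (n - 2 * (n / 2)) * kernelMixed n 2 ^ (2 * (n / 2))) := by
      rcases Nat.mod_two_eq_zero_or_one n with h | h
      · have e1 : n - 2 * (n / 2) = 0 := by omega
        have e2 : 2 * (n / 2) = n := by omega
        rw [e1, e2, pow_zero, one_mul]
        have : 0 < kernelMixed n 2 ^ n := pow_pos (kernelMixed_pos le_rfl) n
        nlinarith
      · have e1 : n - 2 * (n / 2) = 1 := by omega
        have e2 : n = 2 * (n / 2) + 1 := by omega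
        have e4 : kernelMixed n 2 ^ n = kernelMixed n 2 ^ (2 * (n / 2)) * kernelMixed n 2 := by
          rw [← pow_succ, ← e2]
        rw [e1, pow_one, hx, e4]
        have : 0 < kernelMixed n 2 ^ (2 * (n / 2)) := pow_pos (kernelMixed_pos le_rfl) _
        have e3 : 2 * (n : ℝ) * ((n : ℝ)⁻¹ * kernelMixed n 2 ^ (2 * (n / 2))) =
            kernelMixed n 2 ^ (2 * (n / 2)) * 2 := by field_simp
        rw [e3]
        have : kernelMixed n 2 ≤ 2 := by rw [hy]; linarith
        gcongr
    rw [coprimeFactor_two, if_pos rfl]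
    have : 0 < ((1 : ℝ) / 2) ^ n := by positivity
    have h3 := mul_le_mul_of_nonneg_right hmain this.le
    rw [hy2] at h3
    nlinarith
  · have hp3 : (3 : ℝ) ≤ p := by exact_mod_cast hp
    have hx := kernelOff_pos (p := p) hn hp.le
    have hy := kernelMixed_pos (n := n) hp.le
    have hc := coprimeFactor_pos hp.le
    rw [if_neg (by omega), mul_one, ← Real.log_nonneg_iff (by positivity),
      Real.log_mul (by positivity) (by norm_num), Real.log_mul (by positivity) (by positivity),
      Real.log_mul (by positivity) (by positivity), Real.log_pow, Real.log_pow, Real.log_pow,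
      log_coprimeFactor hp]
    have hlx : log (kernelOff n p) = log p + log (p - 2) - 2 * log (p - 1) := by
      rw [kernelOff_eq hp, Real.log_div, Real.log_mul, Real.log_pow]
      · push_cast; ring
      · linarith
      · linarith
      · have : (0 : ℝ) < p - 2 := by linarith
        positivity
      · have : (0 : ℝ) < p - 1 := by linarith
        positivity
    have hly : log (kernelMixed n p) = log p - log (p - 1) := by
      rw [kernelMixed_eq hp, Real.log_div]
      · linarith
      · linarith
    have hm : 2 * (n / p) ≤ n := by
      calc 2 * (n / p) ≤ p * (n / p) := Nat.mul_le_mul_right _ hp.le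
        _ ≤ n := Nat.mul_div_le n p
    rw [hlx, hly]
    push_cast [Nat.cast_sub hm]
    set m : ℝ := ((n / p : ℕ) : ℝ) with hmdef
    have hm1 : m ≤ n / p := Nat.cast_div_le
    have hm2 : n / p < m + 1 := by
      rw [div_lt_iff₀ (by linarith)]
      have := Nat.lt_mul_of_div_lt (Nat.lt_add_one (n / p)) (by omega : 0 < p)
      rw [hmdef]
      exact_mod_cast this
    have hlog : log (p - 1) - log (p - 2) ≤ log 2 := by
      rw [← Real.log_div (by linarith) (by linarith)]
      apply Real.log_le_log
      · exact div_pos (by linarith) (by linarith)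
      · rw [div_le_iff₀ (by linarith)]; linarith
    have hlog0 : 0 ≤ log (p - 1) - log (p - 2) := by
      rw [sub_nonneg]
      exact Real.log_le_log (by linarith) (by linarith)
    have h4 : log 4 = 2 * log 2 := by
      rw [show (4 : ℝ) = 2 ^ 2 by norm_num, Real.log_pow]; push_cast; ring
    have key : (n - 2 * m) * (log p + log (p - 2) - 2 * log (p - 1)) +
        2 * m * (log p - log (p - 1)) +
        n * (2 * (1 - 1 / (p : ℝ)) * log (p - 1) - log p - (1 - 2 / (p : ℝ)) * log (p - 2)) =
        -(2 * (n / p - m) * (log (p - 1) - log (p - 2))) := by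
      field_simp
      ring
    rw [key, h4]
    nlinarith

theorem one_sub_damping_mul_eq {n p a b : ℕ} (hn : 0 < n) (hp : 2 ≤ p) (hab : ¬(p ∣ a ∧ p ∣ b)) :
    1 - damping n p * ramanujanRatio p a * ramanujanRatio p b =
      (if p ∣ a then kernelMixed n p else kernelOff n p) *
        (if p ∣ b then kernelMixed n p / kernelOff n p else 1) := by
  have hp1 : (2 : ℝ) ≤ p := by exact_mod_cast hp
  have h1 : (p : ℝ) - 1 ≠ 0 := by linarith
  have hx := (kernelOff_pos hn hp).ne'
  unfold ramanujanRatio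
  by_cases ha : p ∣ a <;> by_cases hb : p ∣ b
  · exact absurd ⟨ha, hb⟩ hab
  · simp only [ha, hb, if_true, if_false, kernelMixed]
    ring
  · simp only [ha, hb, if_true, if_false, mul_div_cancel₀ _ hx]
    rw [kernelMixed]
    ring
  · simp only [ha, hb, if_false, kernelOff]
    field_simp

theorem one_sub_damping_mul_nonneg (n : ℕ) {p : ℕ} (hp : 2 ≤ p) (a b : ℕ) :
    0 ≤ 1 - damping n p * ramanujanRatio p a * ramanujanRatio p b := by
  have hp1 : (2 : ℝ) ≤ p := by exact_mod_cast hp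
  have hr : ∀ a, |ramanujanRatio p a| ≤ 1 := by
    intro a
    unfold ramanujanRatio
    split_ifs
    · simp
    · rw [abs_div, abs_neg, abs_one, abs_of_pos (by linarith), div_le_one (by linarith)]
      linarith
  have : |damping n p * ramanujanRatio p a * ramanujanRatio p b| ≤ 1 := by
    rw [abs_mul, abs_mul, abs_of_nonneg (damping_nonneg n p)]
    exact mul_le_one₀ (mul_le_one₀ (damping_le_one n p) (abs_nonneg _) (hr a)) (abs_nonneg _) (hr b)
  linarith [le_abs_self (damping n p * ramanujanRatio p a * ramanujanRatio p b)]

theorem prod_weight_eq (n : ℕ) {p : ℕ} (hn : 0 < n) (hp : 2 ≤ p) :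
    ∏ a : Fin n, ((if p ∣ a.1 + 1 then kernelMixed n p else kernelOff n p) *
        (if p ∣ a.1 + 1 then kernelMixed n p / kernelOff n p else 1)) =
      kernelOff n p ^ (n - 2 * (n / p)) * kernelMixed n p ^ (2 * (n / p)) := by
  have hx := (kernelOff_pos hn hp).ne'
  have hm : 2 * (n / p) ≤ n := by
    calc 2 * (n / p) ≤ p * (n / p) := Nat.mul_le_mul_right _ hp
      _ ≤ n := Nat.mul_div_le n p
  have hcomb : ∀ a, (if p ∣ a + 1 then kernelMixed n p else kernelOff n p) *
        (if p ∣ a + 1 then kernelMixed n p / kernelOff n p else 1) =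
      kernelOff n p * if p ∣ a + 1 then (kernelMixed n p / kernelOff n p) ^ 2 else 1 := by
    intro a
    split_ifs
    · field_simp
    · rfl
  rw [← Finset.prod_range fun a => (if p ∣ a + 1 then kernelMixed n p else kernelOff n p) *
        (if p ∣ a + 1 then kernelMixed n p / kernelOff n p else 1)]
  simp_rw [hcomb]
  rw [Finset.prod_mul_distrib, Finset.prod_const, Finset.card_range, ← Finset.prod_filter,
    Finset.prod_const, Nat.card_multiples, ← pow_mul, div_pow]
  have hpow : kernelOff n p ^ n =
      kernelOff n p ^ (n - 2 * (n / p)) * kernelOff n p ^ (2 * (n / p)) := by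
    rw [← pow_add, Nat.sub_add_cancel hm]
  rw [hpow]
  field_simp

/-- Sieving by a finite set `P` of primes bounds the number of coprime permutations by the partial
product of the constant, up to the number of divisibility types. -/
theorem coprimePermCount_le {n : ℕ} (hn : 0 < n) {P : Finset ℕ} (hP : ∀ p ∈ P, p.Prime) :
    (coprimePermCount n : ℝ) ≤ n.factorial * ((∏ p ∈ P, coprimeFactor p) ^ n *
      (4 ^ P.card * n * (exp 1 * n) ^
        (Finset.univ.image fun b : Fin n => P.filter (· ∣ b.1 + 1)).card *
        exp (∏ p ∈ P, (1 + 12 / (p : ℝ))))) := by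
  classical
  have hn0 : (0 : ℝ) < n := by exact_mod_cast hn
  set R : ℝ := ∏ p ∈ P, (1 + 12 / (p : ℝ)) with hR
  set t : Fin n → Finset ℕ := fun b => P.filter (· ∣ b.1 + 1) with ht
  set F : ℕ → ℕ → ℝ := fun a b =>
    ∏ p ∈ P, (1 - damping n p * ramanujanRatio p (a + 1) * ramanujanRatio p (b + 1)) with hF
  set G : Fin n → Finset ℕ → ℝ := fun a T =>
    ∏ p ∈ P, (1 - damping n p * ramanujanRatio p (a.1 + 1) * ramanujanRatio p (∏ q ∈ T, q))
    with hG
  have hGF : ∀ a b : Fin n, G a (t b) = F a b := by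
    intro a b
    refine Finset.prod_congr rfl fun p hp => ?_
    have : p ∣ ∏ q ∈ t b, q ↔ p ∣ b.1 + 1 := by
      constructor
      · intro h
        obtain ⟨q, hq, hpq⟩ := ((hP p hp).prime.dvd_finsetProd_iff _).1 h
        obtain ⟨hqP, hqb⟩ := Finset.mem_filter.1 hq
        exact hpq.trans hqb
      · intro h
        exact Finset.dvd_prod_of_mem _ (Finset.mem_filter.2 ⟨hp, h⟩)
    simp only [ramanujanRatio, this]
  have hGnn : ∀ a T, 0 ≤ G a T := fun a T => Finset.prod_nonneg fun p hp =>
    one_sub_damping_mul_nonneg n (hP p hp).two_le _ _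
  have hFnn : ∀ a b, 0 ≤ F a b := fun a b => Finset.prod_nonneg fun p hp =>
    one_sub_damping_mul_nonneg n (hP p hp).two_le _ _
  have hperm := sum_perm_prod_le t G hGnn
  simp only [hGF, Fintype.card_fin] at hperm
  have hrows : ∏ a : Fin n, ∑ b : Fin n, F a b ≤ (n : ℝ) ^ n * exp R := by
    calc ∏ a : Fin n, ∑ b : Fin n, F a b
        ≤ ∏ a : Fin n, ((n : ℝ) * exp ((∑ b : Fin n, F a b) / n - 1)) := by
          refine Finset.prod_le_prod (fun a _ => Finset.sum_nonneg fun b _ => hFnn _ _)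
            fun a _ => ?_
          have := Real.add_one_le_exp ((∑ b : Fin n, F a b) / n - 1)
          rw [sub_add_cancel, div_le_iff₀ hn0] at this
          linarith
      _ = (n : ℝ) ^ n * exp ((∑ a : Fin n, ∑ b : Fin n, F a b) / n - n) := by
          rw [Finset.prod_mul_distrib, ← Real.exp_sum]
          simp [Finset.sum_div]
      _ ≤ _ := by
          have hs := sum_sum_prod_le hP (damping n)
            (fun p => abs_le.2 ⟨by linarith [damping_nonneg n p], damping_le_one n p⟩) n
          rw [Finset.sum_range] at hs
          simp_rw [Finset.sum_range] at hs
          gcongr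
          rw [sub_le_iff_le_add, div_le_iff₀ hn0]
          linarith
  set W : ℝ := ∏ p ∈ P, (kernelOff n p ^ (n - 2 * (n / p)) * kernelMixed n p ^ (2 * (n / p)))
    with hW
  have hWC : W * coprimePermCount n ≤ ∑ σ : Equiv.Perm (Fin n), ∏ a : Fin n, F a (σ a) := by
    rw [coprimePermCount, Nat.card_eq_fintype_card, Fintype.card_subtype, mul_comm,
      ← nsmul_eq_mul, ← Finset.sum_const]
    refine (Finset.sum_le_sum fun σ hσ => ?_).trans (Finset.sum_le_sum_of_subset_of_nonneg
      (Finset.filter_subset _ _) fun σ _ _ => Finset.prod_nonneg fun a _ => hFnn _ _)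
    have hσ' := (Finset.mem_filter.1 hσ).2
    have : ∏ a : Fin n, F a (σ a) = W := by
      rw [hW, hF, Finset.prod_comm]
      refine Finset.prod_congr rfl fun p hp => ?_
      rw [← prod_weight_eq n hn (hP p hp).two_le, Finset.prod_mul_distrib,
        ← Equiv.prod_comp σ fun b : Fin n =>
          if p ∣ b.1 + 1 then kernelMixed n p / kernelOff n p else 1,
        ← Finset.prod_mul_distrib]
      refine Finset.prod_congr rfl fun a _ => one_sub_damping_mul_eq hn (hP p hp).two_le ?_
      rintro ⟨h1, h2⟩
      exact Nat.not_coprime_of_dvd_of_dvd (hP p hp).one_lt h1 h2 (hσ' a)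
    exact this.ge
  have hWQ : 1 ≤ W * (∏ p ∈ P, coprimeFactor p) ^ n * (4 ^ P.card * n) := by
    calc (1 : ℝ) = ∏ p ∈ P, 1 := by simp
      _ ≤ ∏ p ∈ P, ((kernelOff n p ^ (n - 2 * (n / p)) * kernelMixed n p ^ (2 * (n / p))) *
          coprimeFactor p ^ n * (4 * if p = 2 then (n : ℝ) else 1)) :=
          Finset.prod_le_prod (fun _ _ => zero_le_one) fun p hp =>
            one_le_weight_mul_coprimeFactor_pow hn (hP p hp).two_le
      _ = W * (∏ p ∈ P, coprimeFactor p) ^ n *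
          (4 ^ P.card * ∏ p ∈ P, if p = 2 then (n : ℝ) else 1) := by
          rw [Finset.prod_mul_distrib, Finset.prod_mul_distrib, Finset.prod_pow, ← hW,
            Finset.prod_mul_distrib (f := fun _ => (4 : ℝ)), Finset.prod_const]
      _ ≤ _ := by
          have hWpos : 0 ≤ W := Finset.prod_nonneg fun p hp =>
            mul_nonneg (pow_nonneg (kernelOff_pos hn (hP p hp).two_le).le _)
              (pow_nonneg (kernelMixed_pos (hP p hp).two_le).le _)
          have hQ : 0 ≤ ∏ p ∈ P, coprimeFactor p := Finset.prod_nonneg fun p hp =>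
            (coprimeFactor_pos (hP p hp).two_le).le
          gcongr
          rw [Finset.prod_ite_eq' P 2 fun _ => (n : ℝ)]
          split_ifs
          · exact le_rfl
          · exact_mod_cast hn
  have hQ : 0 ≤ ∏ p ∈ P, coprimeFactor p := Finset.prod_nonneg fun p hp =>
    (coprimeFactor_pos (hP p hp).two_le).le
  calc (coprimePermCount n : ℝ)
      ≤ (W * (∏ p ∈ P, coprimeFactor p) ^ n * (4 ^ P.card * n)) * coprimePermCount n :=
        le_mul_of_one_le_left (Nat.cast_nonneg _) hWQ
    _ = ((∏ p ∈ P, coprimeFactor p) ^ n * (4 ^ P.card * n)) * (W * coprimePermCount n) := by ring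
    _ ≤ ((∏ p ∈ P, coprimeFactor p) ^ n * (4 ^ P.card * n)) *
        ((exp 1 * n) ^ (Finset.univ.image t).card * exp (-n) * ((n : ℝ) ^ n * exp R)) := by
        refine mul_le_mul_of_nonneg_left (hWC.trans (hperm.trans ?_)) (by positivity)
        gcongr
    _ = ((∏ p ∈ P, coprimeFactor p) ^ n * (4 ^ P.card * n * (exp 1 * n) ^
        (Finset.univ.image t).card * exp R)) * ((n : ℝ) ^ n * exp (-n)) := by ring
    _ ≤ ((∏ p ∈ P, coprimeFactor p) ^ n * (4 ^ P.card * n * (exp 1 * n) ^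
        (Finset.univ.image t).card * exp R)) * n.factorial := by
        gcongr
        exact exp_neg_le_factorial_div
    _ = _ := by ring

/-- Rankin's bound for the number of divisibility types of the integers up to `n`. -/
theorem card_divisibilityTypes_le {n : ℕ} {P : Finset ℕ} (hP : ∀ p ∈ P, p.Prime) {z η : ℝ}
    (hz : ∀ p ∈ P, (p : ℝ) ≤ z) (hη0 : 0 ≤ η) (hη1 : η ≤ 1) :
    ((Finset.univ.image fun b : Fin n => P.filter (· ∣ b.1 + 1)).card : ℝ) ≤
      (n : ℝ) ^ (1 - η) * exp (z ^ η * ∑ p ∈ P, 1 / (p : ℝ)) := by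
  set I := Finset.univ.image fun b : Fin n => P.filter (· ∣ b.1 + 1) with hI
  have hIP : I ⊆ P.powerset := by
    intro T hT
    obtain ⟨b, -, rfl⟩ := Finset.mem_image.1 hT
    exact Finset.mem_powerset.2 (Finset.filter_subset _ _)
  have hterm : ∀ T ∈ I, 1 ≤ (n : ℝ) ^ (1 - η) * ∏ p ∈ T, (z ^ η / (p : ℝ)) := by
    intro T hT
    have hTP := Finset.mem_powerset.1 (hIP hT)
    obtain ⟨b, -, rfl⟩ := Finset.mem_image.1 hT
    set T := P.filter (· ∣ b.1 + 1) with hTdef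
    have hpos : ∀ p ∈ T, (0 : ℝ) < p := fun p hp => by exact_mod_cast (hP p (hTP hp)).pos
    have hle : ∏ p ∈ T, (p : ℝ) ≤ n := by
      have h : ∏ p ∈ T, p ∣ b.1 + 1 := Finset.prod_primes_dvd _
        (fun p hp => (hP p (hTP hp)).prime) fun p hp => (Finset.mem_filter.1 hp).2
      have h' : ((∏ p ∈ T, p : ℕ) : ℝ) ≤ n := by
        exact_mod_cast (Nat.le_of_dvd (Nat.succ_pos _) h).trans b.2
      rwa [Nat.cast_prod] at h'
    have hprod : 0 < ∏ p ∈ T, (p : ℝ) := Finset.prod_pos hpos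
    calc (1 : ℝ) = (∏ p ∈ T, (p : ℝ)) ^ (1 - η) * ∏ p ∈ T, ((p : ℝ) ^ η / p) := by
          rw [← Real.finsetProd_rpow _ _ fun p hp => (hpos p hp).le, ← Finset.prod_mul_distrib]
          refine (Finset.prod_eq_one fun p hp => ?_).symm
          rw [mul_div_assoc', ← Real.rpow_add (hpos p hp), sub_add_cancel, Real.rpow_one,
            div_self (hpos p hp).ne']
      _ ≤ _ := by
          refine mul_le_mul (Real.rpow_le_rpow hprod.le hle (by linarith)) ?_
            (Finset.prod_nonneg fun p hp => by positivity) (by positivity)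
          refine Finset.prod_le_prod (fun p hp => by positivity) fun p hp => ?_
          have h1 := hpos p hp
          have h2 := hz p (hTP hp)
          gcongr
  have hz0 : ∀ p ∈ P, 0 ≤ z ^ η / (p : ℝ) := fun p hp =>
    div_nonneg (Real.rpow_nonneg ((Nat.cast_nonneg p).trans (hz p hp)) _) (Nat.cast_nonneg p)
  calc (I.card : ℝ) = ∑ _T ∈ I, 1 := by simp
    _ ≤ ∑ T ∈ I, (n : ℝ) ^ (1 - η) * ∏ p ∈ T, (z ^ η / (p : ℝ)) := Finset.sum_le_sum hterm
    _ ≤ ∑ T ∈ P.powerset, (n : ℝ) ^ (1 - η) * ∏ p ∈ T, (z ^ η / (p : ℝ)) := by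
        refine Finset.sum_le_sum_of_subset_of_nonneg hIP fun T hT _ => ?_
        exact mul_nonneg (by positivity)
          (Finset.prod_nonneg fun p hp => hz0 p (Finset.mem_powerset.1 hT hp))
    _ = (n : ℝ) ^ (1 - η) * ∏ p ∈ P, (1 + z ^ η / (p : ℝ)) := by
        rw [Finset.prod_one_add, Finset.mul_sum]
    _ ≤ _ := by
        gcongr
        rw [Finset.mul_sum, Real.exp_sum]
        refine Finset.prod_le_prod (fun p hp => add_nonneg zero_le_one (hz0 p hp)) fun p _ => ?_
        rw [add_comm, mul_one_div]
        exact Real.add_one_le_exp _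

/-- The primes up to `N`. -/
def primesUpTo (N : ℕ) : Finset ℕ := (Finset.range (N + 1)).filter Nat.Prime

theorem mem_primesUpTo {N p : ℕ} : p ∈ primesUpTo N ↔ p ≤ N ∧ p.Prime := by
  simp [primesUpTo]

theorem sum_inv_prime_dyadic_le {j : ℕ} (hj : 0 < j) :
    ∑ p ∈ (Finset.Ioc (2 ^ j) (2 ^ (j + 1))).filter Nat.Prime, 1 / (p : ℝ) ≤ 4 / j := by
  set B := (Finset.Ioc (2 ^ j) (2 ^ (j + 1))).filter Nat.Prime with hB
  have hcard : j * B.card ≤ 2 ^ (j + 2) := by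
    have h1 : (2 ^ j) ^ B.card ≤ ∏ p ∈ B, p := by
      refine Finset.pow_card_le_prod _ _ _ fun p hp => ?_
      exact (Finset.mem_Ioc.1 (Finset.mem_filter.1 hp).1).1.le
    have h2 : ∏ p ∈ B, p ≤ primorial (2 ^ (j + 1)) := by
      refine Finset.prod_le_prod_of_subset_of_one_le' ?_ fun p hp _ =>
        (Finset.mem_filter.1 hp).2.pos
      intro p hp
      have := Finset.mem_filter.1 hp
      have h3 := Finset.mem_Ioc.1 this.1
      simp only [Finset.mem_filter, Finset.mem_range]
      exact ⟨by omega, this.2⟩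
    have h4 := (h1.trans h2).trans (primorial_le_four_pow _)
    rw [← pow_mul, show (4 : ℕ) = 2 ^ 2 by norm_num, ← pow_mul] at h4
    have h5 := (Nat.pow_le_pow_iff_right (by norm_num)).1 h4
    calc j * B.card ≤ 2 * 2 ^ (j + 1) := h5
      _ = 2 ^ (j + 2) := by ring
  have hj' : (0 : ℝ) < j := by exact_mod_cast hj
  calc ∑ p ∈ B, 1 / (p : ℝ) ≤ ∑ _p ∈ B, 1 / (2 : ℝ) ^ j := by
        refine Finset.sum_le_sum fun p hp => ?_
        have : (2 : ℝ) ^ j ≤ p := by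
          exact_mod_cast (Finset.mem_Ioc.1 (Finset.mem_filter.1 hp).1).1.le
        gcongr
    _ = B.card / 2 ^ j := by rw [Finset.sum_const, nsmul_eq_mul]; ring
    _ ≤ 4 / j := by
        rw [div_le_div_iff₀ (by positivity) hj']
        have : (j : ℝ) * B.card ≤ 2 ^ (j + 2) := by exact_mod_cast hcard
        rw [pow_add] at this
        linarith

theorem sum_inv_primesUpTo_two_pow_le (m : ℕ) :
    ∑ p ∈ primesUpTo (2 ^ (m + 1)), 1 / (p : ℝ) ≤ 5 + 4 * log m := by
  have h : ∀ m : ℕ, ∑ p ∈ primesUpTo (2 ^ (m + 1)), 1 / (p : ℝ) ≤ 1 + 4 * harmonic m := by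
    intro m
    induction m with
    | zero =>
      have : primesUpTo (2 ^ (0 + 1)) = {2} := by decide
      rw [this]
      norm_num
    | succ m ih =>
      have hsplit : primesUpTo (2 ^ (m + 1 + 1)) = primesUpTo (2 ^ (m + 1)) ∪
          (Finset.Ioc (2 ^ (m + 1)) (2 ^ (m + 1 + 1))).filter Nat.Prime := by
        ext p
        have : 2 ^ (m + 1) ≤ 2 ^ (m + 1 + 1) := Nat.pow_le_pow_right (by norm_num) (by omega)
        simp only [mem_primesUpTo, Finset.mem_union, Finset.mem_filter, Finset.mem_Ioc]
        constructor
        · rintro ⟨h1, h2⟩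
          rcases le_or_gt p (2 ^ (m + 1)) with h | h
          · exact Or.inl ⟨h, h2⟩
          · exact Or.inr ⟨⟨h, h1⟩, h2⟩
        · rintro (⟨h1, h2⟩ | ⟨⟨-, h1⟩, h2⟩)
          · exact ⟨h1.trans this, h2⟩
          · exact ⟨h1, h2⟩
      have hdisj : Disjoint (primesUpTo (2 ^ (m + 1)))
          ((Finset.Ioc (2 ^ (m + 1)) (2 ^ (m + 1 + 1))).filter Nat.Prime) := by
        rw [Finset.disjoint_left]
        intro p hp hp'
        have h1 := (mem_primesUpTo.1 hp).1
        have h2 := (Finset.mem_Ioc.1 (Finset.mem_filter.1 hp').1).1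
        omega
      rw [hsplit, Finset.sum_union hdisj, harmonic_succ]
      have := sum_inv_prime_dyadic_le (j := m + 1) (Nat.succ_pos m)
      push_cast at this ⊢
      rw [div_eq_mul_inv] at this
      linarith
  have := harmonic_le_one_add_log m
  linarith [h m]

theorem one_sub_sum_le_prod {ι : Type*} (s : Finset ι) {f g : ι → ℝ}
    (hg : ∀ i ∈ s, 1 - g i ≤ f i) (hg0 : ∀ i ∈ s, 0 ≤ g i)
    (hf0 : ∀ i ∈ s, 0 ≤ f i) (hf1 : ∀ i ∈ s, f i ≤ 1) :
    1 - ∑ i ∈ s, g i ≤ ∏ i ∈ s, f i := by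
  classical
  induction s using Finset.induction_on with
  | empty => simp
  | insert a s ha ih =>
    rw [Finset.sum_insert ha, Finset.prod_insert ha]
    have ih' := ih (fun i hi => hg i (Finset.mem_insert_of_mem hi))
      (fun i hi => hg0 i (Finset.mem_insert_of_mem hi))
      (fun i hi => hf0 i (Finset.mem_insert_of_mem hi))
      (fun i hi => hf1 i (Finset.mem_insert_of_mem hi))
    have hprod : ∏ i ∈ s, f i ≤ 1 := Finset.prod_le_one
      (fun i hi => hf0 i (Finset.mem_insert_of_mem hi))
      (fun i hi => hf1 i (Finset.mem_insert_of_mem hi))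
    have hprod0 : 0 ≤ ∏ i ∈ s, f i := Finset.prod_nonneg
      (fun i hi => hf0 i (Finset.mem_insert_of_mem hi))
    have h1 := hg a (Finset.mem_insert_self a s)
    have h2 := hg0 a (Finset.mem_insert_self a s)
    nlinarith

theorem multipliable_coprimeFactor : Multipliable fun p : Nat.Primes => coprimeFactor p := by
  have hsum : Summable fun p : Nat.Primes => coprimeFactor p - 1 := by
    have h : Summable fun p : Nat.Primes => 4 / ((p : ℕ) : ℝ) ^ 2 := by
      have := (Real.summable_one_div_nat_pow (p := 2)).2 (by norm_num)
      have := (this.mul_left 4).comp_injective Nat.Primes.coe_nat_injective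
      refine this.congr fun p => ?_
      simp [div_eq_mul_inv]
    refine h.of_norm_bounded fun p => ?_
    rw [Real.norm_eq_abs, abs_le]
    have h1 := one_sub_le_coprimeFactor p.2.two_le
    have h2 := coprimeFactor_le_one p.2.two_le
    have h3 : 0 ≤ 4 / ((p : ℕ) : ℝ) ^ 2 := by positivity
    constructor <;> linarith
  simpa using Real.multipliable_one_add_of_summable hsum

theorem prod_coprimeFactor_le (z : ℕ) :
    ∏ p ∈ primesUpTo z, coprimeFactor p ≤ coprimeConst + 8 / ((z : ℝ) + 1) := by
  classical
  set Q := ∏ p ∈ primesUpTo z, coprimeFactor p with hQ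
  have hQ0 : 0 ≤ Q := Finset.prod_nonneg fun p hp =>
    (coprimeFactor_pos (mem_primesUpTo.1 hp).2.two_le).le
  have hQ1 : Q ≤ 1 := Finset.prod_le_one
    (fun p hp => (coprimeFactor_pos (mem_primesUpTo.1 hp).2.two_le).le)
    fun p hp => coprimeFactor_le_one (mem_primesUpTo.1 hp).2.two_le
  have hprod : HasProd (fun p : Nat.Primes => coprimeFactor p) coprimeConst :=
    multipliable_coprimeFactor.hasProd
  rw [HasProd, SummationFilter.unconditional_filter] at hprod
  suffices Q - 8 / ((z : ℝ) + 1) ≤ coprimeConst by linarith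
  refine ge_of_tendsto hprod ?_
  filter_upwards [eventually_ge_atTop
    ((primesUpTo z).preimage ((↑) : Nat.Primes → ℕ) Nat.Primes.coe_nat_injective.injOn)] with s hs
  set s' : Finset ℕ := s.map ⟨(↑), Nat.Primes.coe_nat_injective⟩ with hs'
  have hprime : ∀ p ∈ s', p.Prime := by
    intro p hp
    obtain ⟨q, -, rfl⟩ := Finset.mem_map.1 hp
    exact q.2
  have hsub : primesUpTo z ⊆ s' := by
    intro p hp
    refine Finset.mem_map.2 ⟨⟨p, (mem_primesUpTo.1 hp).2⟩, hs ?_, rfl⟩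
    simpa using hp
  have htail : ∑ p ∈ s' \ primesUpTo z, 4 / (p : ℝ) ^ 2 ≤ 8 / ((z : ℝ) + 1) := by
    obtain ⟨M, hM⟩ := s'.exists_nat_subset_range
    calc ∑ p ∈ s' \ primesUpTo z, 4 / (p : ℝ) ^ 2
        ≤ ∑ p ∈ Finset.Ioo z M, 4 / (p : ℝ) ^ 2 := by
          refine Finset.sum_le_sum_of_subset_of_nonneg (fun p hp => ?_) fun _ _ _ => by positivity
          obtain ⟨hp1, hp2⟩ := Finset.mem_sdiff.1 hp
          refine Finset.mem_Ioo.2 ⟨?_, Finset.mem_range.1 (hM hp1)⟩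
          by_contra! h
          exact hp2 (mem_primesUpTo.2 ⟨h, hprime p hp1⟩)
      _ = 4 * ∑ p ∈ Finset.Ioo z M, ((p : ℝ) ^ 2)⁻¹ := by
          rw [Finset.mul_sum]; rfl
      _ ≤ 4 * (2 / ((z : ℝ) + 1)) := by
          gcongr
          exact sum_Ioo_inv_sq_le z M
      _ = 8 / ((z : ℝ) + 1) := by ring
  have hrest : 1 - 8 / ((z : ℝ) + 1) ≤ ∏ p ∈ s' \ primesUpTo z, coprimeFactor p := by
    have h2 : ∀ p ∈ s' \ primesUpTo z, 2 ≤ p := fun p hp =>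
      (hprime p (Finset.mem_sdiff.1 hp).1).two_le
    have := one_sub_sum_le_prod (s' \ primesUpTo z) (f := coprimeFactor)
      (g := fun p => 4 / (p : ℝ) ^ 2) (fun p hp => one_sub_le_coprimeFactor (h2 p hp))
      (fun _ _ => by positivity) (fun p hp => (coprimeFactor_pos (h2 p hp)).le)
      (fun p hp => coprimeFactor_le_one (h2 p hp))
    linarith
  have hmap : ∏ p ∈ s, coprimeFactor p = ∏ p ∈ s', coprimeFactor p := by
    rw [hs', Finset.prod_map]
    rfl
  have h8 : 0 ≤ 8 / ((z : ℝ) + 1) := by positivity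
  rw [hmap, ← Finset.prod_sdiff hsub]
  nlinarith

/-- The relative error obtained by sieving up to about `2 ^ y`. -/
noncomputable def sieveError (y : ℝ) : ℝ :=
  4 * exp (-y) + y ^ 2 * exp (-(2 * y)) +
    (1 + y ^ 2) * exp (-(y / 4) + sqrt y * (5 + 4 * log y)) +
    exp (-(2 * y)) * exp (60 + 48 * log y)

theorem two_pow_floor_add_one_bounds {y : ℝ} (hy : 3 ≤ y) :
    (2 : ℝ) ^ (⌊y⌋₊ + 1) ≤ exp y ∧ exp (y / 2) ≤ 2 ^ (⌊y⌋₊ + 1) := by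
  have hl := Real.log_two_lt_d9
  have hl' := Real.log_two_gt_d9
  have h1 : (⌊y⌋₊ : ℝ) ≤ y := Nat.floor_le (by linarith)
  have h2 : y < ⌊y⌋₊ + 1 := Nat.lt_floor_add_one y
  have h : (2 : ℝ) ^ (⌊y⌋₊ + 1) = exp ((⌊y⌋₊ + 1) * log 2) := by
    rw [mul_comm, Real.exp_mul, Real.exp_log two_pos, ← Real.rpow_natCast]
    push_cast
    rfl
  rw [h, Real.exp_le_exp, Real.exp_le_exp]
  constructor <;> nlinarith

theorem coprimePermCount_le_sieveError {n : ℕ} {y : ℝ} (hℓ : 1 ≤ log (log n))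
    (hy : y ^ 2 = log n * log (log n)) (hy3 : 3 ≤ y) (hyℓ : 2 * y ≤ log n) :
    (coprimePermCount n : ℝ) ≤ n.factorial *
      ((∏ p ∈ primesUpTo (2 ^ (⌊y⌋₊ + 1)), coprimeFactor p) * exp (sieveError y)) ^ n := by
  set ℓ := log n with hℓdef
  have hy0 : 0 < y := by linarith
  have hℓ0 : 0 < ℓ := by linarith
  have hn : 0 < n := by
    rcases Nat.eq_zero_or_pos n with rfl | h
    · simp [hℓdef] at hℓ0
    · exact h
  have hn0 : (0 : ℝ) < n := by exact_mod_cast hn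
  have hexpℓ : exp ℓ = n := Real.exp_log hn0
  have hny : exp (2 * y) ≤ n := by rw [← hexpℓ]; exact Real.exp_le_exp.2 hyℓ
  have hnn : 1 ≤ n * exp (-(2 * y)) := by
    rw [Real.exp_neg, ← div_eq_mul_inv, le_div_iff₀ (Real.exp_pos _)]
    linarith
  have hℓy : ℓ ≤ y ^ 2 := by rw [hy]; nlinarith
  obtain ⟨hzexp, -⟩ := two_pow_floor_add_one_bounds hy3
  set m := ⌊y⌋₊ with hm
  set P := primesUpTo (2 ^ (m + 1)) with hPdef
  have hP : ∀ p ∈ P, p.Prime := fun p hp => (mem_primesUpTo.1 hp).2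
  set S := ∑ p ∈ P, 1 / (p : ℝ) with hS
  have hSle : S ≤ 5 + 4 * log y := by
    refine (sum_inv_primesUpTo_two_pow_le m).trans ?_
    have hm0 : (0 : ℝ) < m := by
      exact_mod_cast Nat.floor_pos.2 (by linarith : (1 : ℝ) ≤ y)
    have := Real.log_le_log hm0 (Nat.floor_le hy0.le)
    linarith
  have hR : exp (∏ p ∈ P, (1 + 12 / (p : ℝ))) ≤
      exp (n * (exp (-(2 * y)) * exp (60 + 48 * log y))) := by
    refine Real.exp_le_exp.2 ?_
    calc ∏ p ∈ P, (1 + 12 / (p : ℝ)) ≤ ∏ p ∈ P, exp (12 / (p : ℝ)) := by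
          refine Finset.prod_le_prod (fun _ _ => by positivity) fun p _ => ?_
          rw [add_comm]
          exact Real.add_one_le_exp _
      _ = exp (12 * S) := by
          rw [← Real.exp_sum, hS, Finset.mul_sum]
          simp only [mul_one_div]
      _ ≤ 1 * exp (60 + 48 * log y) := by
          rw [one_mul]
          exact Real.exp_le_exp.2 (by linarith)
      _ ≤ (n * exp (-(2 * y))) * exp (60 + 48 * log y) := by gcongr
      _ = _ := by ring
  have hcard : (4 : ℝ) ^ P.card ≤ exp (n * (4 * exp (-y))) := by
    have h4 : (4 : ℝ) ≤ exp 2 := by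
      rw [show (2 : ℝ) = 1 + 1 by norm_num, Real.exp_add]
      nlinarith [Real.add_one_le_exp (1 : ℝ)]
    have hc : (P.card : ℝ) ≤ 2 ^ (m + 1) + 1 := by
      have : P.card ≤ 2 ^ (m + 1) + 1 :=
        (Finset.card_filter_le (Finset.range (2 ^ (m + 1) + 1)) Nat.Prime).trans_eq
          (Finset.card_range _)
      exact_mod_cast this
    have hey : exp y ≤ n * exp (-y) := by
      rw [Real.exp_neg, ← div_eq_mul_inv, le_div_iff₀ (Real.exp_pos _), ← Real.exp_add]
      rwa [← two_mul]
    have h1 : 1 ≤ exp y := Real.one_le_exp hy0.le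
    calc (4 : ℝ) ^ P.card ≤ exp 2 ^ P.card := by gcongr
      _ = exp (P.card * 2) := by rw [Real.exp_nat_mul]
      _ ≤ _ := Real.exp_le_exp.2 (by linarith)
  have hnexp : (n : ℝ) ≤ exp (n * (y ^ 2 * exp (-(2 * y)))) := by
    rw [← hexpℓ]
    refine Real.exp_le_exp.2 (hℓy.trans ?_)
    rw [hexpℓ]
    nlinarith [sq_nonneg y]
  set K := (Finset.univ.image fun b : Fin n => P.filter (· ∣ b.1 + 1)).card with hK
  have hKle : (K : ℝ) ≤ n * exp (-(y / 4) + sqrt y * (5 + 4 * log y)) := by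
    have hlogle : log ℓ ≤ y := by
      have : log ℓ ≤ ℓ := (Real.log_le_sub_one_of_pos hℓ0).trans (by linarith)
      nlinarith
    have hη0 : 0 ≤ log ℓ / (4 * y) := by positivity
    refine (card_divisibilityTypes_le hP (z := exp y) (η := log ℓ / (4 * y)) ?_ hη0 ?_).trans ?_
    · intro p hp
      refine le_trans ?_ hzexp
      exact_mod_cast (mem_primesUpTo.1 hp).1
    · rw [div_le_one (by positivity)]
      linarith
    · have e1 : (n : ℝ) ^ (1 - log ℓ / (4 * y)) = n * exp (-(y / 4)) := by
        rw [Real.rpow_def_of_pos hn0, ← hℓdef]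
        rw [← hexpℓ, ← Real.exp_add]
        congr 1
        field_simp
        linarith
      have e2 : exp y ^ (log ℓ / (4 * y)) ≤ sqrt y := by
        rw [← Real.exp_mul]
        have : y * (log ℓ / (4 * y)) = log ℓ / 4 := by field_simp
        rw [this]
        have h4 : log ℓ / 4 ≤ log y / 2 := by
          have := Real.log_le_log hℓ0 hℓy
          rw [Real.log_pow] at this
          push_cast at this
          linarith
        rw [← Real.log_sqrt hy0.le] at h4
        calc exp (log ℓ / 4) ≤ exp (log (sqrt y)) := Real.exp_le_exp.2 h4
          _ = sqrt y := Real.exp_log (Real.sqrt_pos.2 hy0)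
      rw [e1, mul_assoc, ← Real.exp_add]
      gcongr
  have hKexp : (exp 1 * n) ^ K ≤
      exp (n * ((1 + y ^ 2) * exp (-(y / 4) + sqrt y * (5 + 4 * log y)))) := by
    rw [← hexpℓ, ← Real.exp_add, ← Real.exp_nat_mul, hexpℓ]
    refine Real.exp_le_exp.2 ?_
    calc (K : ℝ) * (1 + ℓ) ≤ (n * exp (-(y / 4) + sqrt y * (5 + 4 * log y))) * (1 + y ^ 2) := by
          gcongr
      _ = _ := by ring
  have hQ : 0 ≤ ∏ p ∈ P, coprimeFactor p := Finset.prod_nonneg fun p hp =>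
    (coprimeFactor_pos (hP p hp).two_le).le
  refine (coprimePermCount_le hn hP).trans ?_
  rw [mul_pow (∏ p ∈ P, coprimeFactor p) (exp (sieveError y)) n,
    ← Real.exp_nat_mul (sieveError y) n]
  gcongr
  rw [sieveError, mul_add, mul_add, mul_add, Real.exp_add, Real.exp_add, Real.exp_add]
  gcongr

theorem eventually_sieveError_le :
    ∀ᶠ y : ℝ in atTop, sieveError y ≤ 1 / 2 ∧
      8 * exp (-(y / 2)) + 2 * sieveError y ≤ exp (-(1 / 16) * y) := by
  have hlog : ∀ᶠ y : ℝ in atTop, log y ≤ 1 / 128 * y ^ (1 / 2 : ℝ) := by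
    filter_upwards [(isLittleO_log_rpow_atTop (by norm_num : (0 : ℝ) < 1 / 2)).bound
      (by norm_num : (0 : ℝ) < 1 / 128), eventually_ge_atTop 1] with y h hy
    rw [Real.norm_of_nonneg (Real.log_nonneg hy), Real.norm_of_nonneg (by positivity)] at h
    exact h
  have hpoly : ∀ᶠ y : ℝ in atTop, y ^ 2 ≤ 1 / 2 * exp (1 / 32 * y) := by
    filter_upwards [(isLittleO_pow_exp_pos_mul_atTop 2 (by norm_num : (0 : ℝ) < 1 / 32)).bound
      (by norm_num : (0 : ℝ) < 1 / 2)] with y h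
    rwa [Real.norm_of_nonneg (by positivity), Real.norm_of_nonneg (Real.exp_pos _).le] at h
  filter_upwards [hlog, hpoly, eventually_ge_atTop (40000 : ℝ)] with y h1 h2 h3
  rw [← Real.sqrt_eq_rpow] at h1
  have hs : 200 ≤ sqrt y := Real.le_sqrt_of_sq_le (by norm_num; linarith)
  have hss : sqrt y * sqrt y = y := Real.mul_self_sqrt (by linarith)
  have hA : sqrt y * (5 + 4 * log y) ≤ y / 16 := by nlinarith
  have hB : 60 + 48 * log y ≤ y := by nlinarith
  have hmono : ∀ {a b : ℝ}, a ≤ b → exp a ≤ exp b := fun h => Real.exp_le_exp.2 h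
  have t1 : exp (-y) ≤ exp (-(y / 8)) := hmono (by linarith)
  have t2 : y ^ 2 * exp (-(2 * y)) ≤ exp (-(y / 8)) := by
    calc y ^ 2 * exp (-(2 * y)) ≤ exp (1 / 32 * y) * exp (-(2 * y)) := by
          have := Real.exp_pos (1 / 32 * y)
          gcongr
          linarith
      _ ≤ _ := by rw [← Real.exp_add]; exact hmono (by linarith)
  have t3 : (1 + y ^ 2) * exp (-(y / 4) + sqrt y * (5 + 4 * log y)) ≤ exp (-(y / 8)) := by
    calc _ ≤ exp (1 / 32 * y) * exp (-(y / 4) + y / 16) := by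
          have := Real.add_one_le_exp (1 / 32 * y)
          gcongr
          linarith
      _ ≤ _ := by rw [← Real.exp_add]; exact hmono (by linarith)
  have t4 : exp (-(2 * y)) * exp (60 + 48 * log y) ≤ exp (-(y / 8)) := by
    rw [← Real.exp_add]
    exact hmono (by linarith)
  have t5 : exp (-(y / 2)) ≤ exp (-(y / 8)) := hmono (by linarith)
  have hE : sieveError y ≤ 7 * exp (-(y / 8)) := by
    unfold sieveError
    linarith
  have hsplit : exp (-(y / 8)) = exp (-(1 / 16) * y) * exp (-(1 / 16) * y) := by
    rw [← Real.exp_add]; congr 1; ring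
  have hsmall : 22 * exp (-(1 / 16) * y) ≤ 1 := by
    have := Real.add_one_le_exp (1 / 16 * y)
    rw [neg_mul, Real.exp_neg, ← div_eq_mul_inv, div_le_one (Real.exp_pos _)]
    linarith
  have hpos := Real.exp_pos (-(1 / 16) * y)
  constructor
  · nlinarith
  · nlinarith

/-- Upper bound: there are `δ > 0` and `N` such that for all `n ≥ N`,
`C(n) ≤ n!·(c + exp(−δ√(log n log log n)))^n`. -/
theorem coprimePermCount_upper :
    ∃ δ : ℝ, 0 < δ ∧ ∃ N : ℕ, ∀ n : ℕ, N ≤ n →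
      (coprimePermCount n : ℝ) ≤
        (n.factorial : ℝ) *
          (coprimeConst + Real.exp (-δ * Real.sqrt (Real.log n * Real.log (Real.log n)))) ^ n := by
  refine ⟨1 / 16, by norm_num, ?_⟩
  have hlog : Tendsto (fun n : ℕ => log (n : ℝ)) atTop atTop :=
    Real.tendsto_log_atTop.comp tendsto_natCast_atTop_atTop
  have hloglog : Tendsto (fun n : ℕ => log (log (n : ℝ))) atTop atTop :=
    Real.tendsto_log_atTop.comp hlog
  have hy : Tendsto (fun n : ℕ => sqrt (log (n : ℝ) * log (log (n : ℝ)))) atTop atTop :=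
    Real.tendsto_sqrt_atTop.comp (hlog.atTop_mul_atTop₀ hloglog)
  have hsmall : ∀ᶠ x : ℝ in atTop, 4 * log x ≤ x := by
    filter_upwards [Real.isLittleO_log_id_atTop.bound (by norm_num : (0 : ℝ) < 1 / 4),
      eventually_ge_atTop 1] with x h hx
    rw [Real.norm_of_nonneg (Real.log_nonneg hx), id, Real.norm_of_nonneg (by linarith)] at h
    linarith
  refine eventually_atTop.1 ?_
  filter_upwards [hloglog.eventually_ge_atTop 1, hlog.eventually_ge_atTop 1,
    hy.eventually_ge_atTop 3, hy.eventually eventually_sieveError_le, hlog.eventually hsmall]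
    with n hll hl hy3 hE h4
  set y := sqrt (log (n : ℝ) * log (log (n : ℝ))) with hydef
  have hysq : y ^ 2 = log n * log (log n) := Real.sq_sqrt (by nlinarith)
  have hyl : 2 * y ≤ log n := by
    refine abs_le_of_sq_le_sq' ?_ (by linarith) |>.2
    nlinarith
  refine (coprimePermCount_le_sieveError hll hysq hy3 hyl).trans ?_
  obtain ⟨hE1, hE2⟩ := hE
  set E := sieveError y with hEdef
  set Q := ∏ p ∈ primesUpTo (2 ^ (⌊y⌋₊ + 1)), coprimeFactor p with hQdef
  have hQ0 : 0 ≤ Q := Finset.prod_nonneg fun p hp =>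
    (coprimeFactor_pos (mem_primesUpTo.1 hp).2.two_le).le
  have hQ1 : Q ≤ 1 := Finset.prod_le_one
    (fun p hp => (coprimeFactor_pos (mem_primesUpTo.1 hp).2.two_le).le)
    fun p hp => coprimeFactor_le_one (mem_primesUpTo.1 hp).2.two_le
  have hE0 : 0 ≤ E := by
    rw [hEdef, sieveError]
    positivity
  have hQc : Q ≤ coprimeConst + 8 * exp (-(y / 2)) := by
    refine (prod_coprimeFactor_le _).trans ?_
    have hz := (two_pow_floor_add_one_bounds hy3).2
    rw [Real.exp_neg, ← div_eq_mul_inv]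
    push_cast
    gcongr
    linarith
  have hexp : exp E ≤ 1 + 2 * E := by
    have h1 := Real.add_one_le_exp (-E)
    have h2 : exp (-E) * exp E = 1 := by rw [← Real.exp_add]; simp
    have h3 := Real.exp_pos E
    nlinarith
  gcongr
  calc Q * exp E ≤ Q * (1 + 2 * E) := by gcongr
    _ ≤ coprimeConst + exp (-(1 / 16) * y) := by nlinarith
end

section
/- There exists a constant δ > 0 and N ∈ ℕ such that for all n ≥ N, C(n) ≥ n!·(c − exp(−δ·(log n · log log n)^{1/2}))^n. -/
open Real Filter

/-- Evaluating a homogeneous polynomial at a scaled point. -/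
theorem MvPolynomial.IsHomogeneous.eval_mul_left {σ : Type*} {p : MvPolynomial σ ℂ} {n : ℕ}
    (hp : p.IsHomogeneous n) (w : ℂ) (z : σ → ℂ) :
    MvPolynomial.eval (fun i => w * z i) p = w ^ n * MvPolynomial.eval z p := by
  rw [MvPolynomial.eval_eq, MvPolynomial.eval_eq, Finset.mul_sum]
  refine Finset.sum_congr rfl fun d hd => ?_
  have h : ∑ i ∈ d.support, d i = n := by
    by_contra hne
    exact MvPolynomial.mem_support_iff.1 hd (hp.coeff_eq_zero hne)
  simp only [mul_pow, Finset.prod_mul_distrib, Finset.prod_pow_eq_pow_sum, h]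
  ring

theorem Polynomial.eval_zero_derivative_div {P : Polynomial ℂ} (h0 : P.eval 0 ≠ 0) :
    P.coeff 1 / P.eval 0 = (P.roots.map fun r => -r⁻¹).sum := by
  have h := (IsAlgClosed.splits P).eval_derivative_div_eval_of_ne_zero h0
  have h1 : P.derivative.eval 0 = P.coeff 1 := by
    rw [← Polynomial.coeff_zero_eq_eval_zero, Polynomial.coeff_derivative]; simp
  rw [h1] at h
  rw [h]
  congr 1
  refine Multiset.map_congr rfl fun r _ => ?_
  rw [zero_sub, one_div, inv_neg]

theorem neg_inv_re_pos {r : ℂ} (hr : r.re < 0) : 0 < (-r⁻¹).re := by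
  rw [Complex.neg_re, Complex.inv_re, ← neg_div]
  have : r ≠ 0 := by rintro rfl; simp at hr
  exact div_pos (by linarith) (Complex.normSq_pos.2 this)

theorem Multiset.re_sum_map_pos {s : Multiset ℂ} (hs : s ≠ 0) {f : ℂ → ℂ}
    (h : ∀ r ∈ s, 0 < (f r).re) : 0 < (s.map f).sum.re := by
  induction s using Multiset.induction_on with
  | empty => exact absurd rfl hs
  | cons a s ih =>
    rw [Multiset.map_cons, Multiset.sum_cons, Complex.add_re]
    have ha := h a (Multiset.mem_cons_self a s)
    by_cases h0 : s = 0
    · subst h0; simpa using ha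
    · have := ih h0 fun r hr => h r (Multiset.mem_cons_of_mem hr)
      linarith

theorem Multiset.im_sum_map_eq_zero {s : Multiset ℂ} {f : ℂ → ℂ}
    (h : ∀ r ∈ s, (f r).im = 0) : (s.map f).sum.im = 0 := by
  induction s using Multiset.induction_on with
  | empty => simp
  | cons a s ih =>
    rw [Multiset.map_cons, Multiset.sum_cons, Complex.add_im, h a (Multiset.mem_cons_self a s),
      ih fun r hr => h r (Multiset.mem_cons_of_mem hr), add_zero]

/-- A nonconstant polynomial with all roots in the open left half-plane has
`P'(0) / P(0)` in the open right half-plane. -/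
theorem Polynomial.re_coeff_one_div_pos {P : Polynomial ℂ} (hdeg : P.natDegree ≠ 0)
    (hroots : ∀ r ∈ P.roots, r.re < 0) (h0 : P.eval 0 ≠ 0) :
    0 < (P.coeff 1 / P.eval 0).re := by
  rw [Polynomial.eval_zero_derivative_div h0]
  refine Multiset.re_sum_map_pos (fun h => hdeg ?_) fun r hr => neg_inv_re_pos (hroots r hr)
  rw [(IsAlgClosed.splits P).natDegree_eq_card_roots, h, Multiset.card_zero]

/-- A polynomial all of whose roots are negative reals is bounded on the positive half-line by
the exponential with the same value and logarithmic derivative at zero. -/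
theorem Polynomial.norm_eval_le_exp {P : Polynomial ℂ}
    (hroots : ∀ r ∈ P.roots, r.im = 0 ∧ r.re < 0) (h0 : P.eval 0 ≠ 0) {t : ℝ} (ht : 0 ≤ t) :
    ‖P.eval (t : ℂ)‖ ≤ ‖P.eval 0‖ * Real.exp (t * (P.coeff 1 / P.eval 0).re) := by
  rw [Polynomial.eval_zero_derivative_div h0]
  have hs := IsAlgClosed.splits P
  rw [hs.eval_eq_prod_roots, hs.eval_eq_prod_roots, norm_mul, norm_mul, mul_assoc]
  refine mul_le_mul_of_nonneg_left ?_ (norm_nonneg _)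
  generalize P.roots = s at hroots ⊢
  induction s using Multiset.induction_on with
  | empty => simp
  | cons a s ih =>
    simp only [Multiset.map_cons, Multiset.prod_cons, Multiset.sum_cons, Complex.add_re, norm_mul,
      mul_add, Real.exp_add]
    have h1 := ih fun r hr => hroots r (Multiset.mem_cons_of_mem hr)
    obtain ⟨him, hre⟩ := hroots a (Multiset.mem_cons_self a s)
    have ha : a = ((a.re : ℝ) : ℂ) := Complex.ext (by simp) (by simp [him])
    have h2 : ‖(t : ℂ) - a‖ ≤ ‖0 - a‖ * Real.exp (t * (-a⁻¹).re) := by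
      rw [ha]
      generalize a.re = x at hre
      rw [zero_sub, norm_neg, ← Complex.ofReal_sub, ← Complex.ofReal_inv, ← Complex.ofReal_neg,
        Complex.ofReal_re, Complex.norm_real, Complex.norm_real, Real.norm_of_nonneg (by linarith),
        Real.norm_of_nonpos hre.le]
      have h3 := Real.add_one_le_exp (t * -x⁻¹)
      calc t - x = -x * (t * -x⁻¹ + 1) := by field_simp [hre.ne]; ring
        _ ≤ _ := mul_le_mul_of_nonneg_left h3 (by linarith)
    calc _ ≤ (‖0 - a‖ * Real.exp (t * (-a⁻¹).re)) * _ :=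
          mul_le_mul h2 h1 (norm_nonneg _) (by positivity)
      _ = _ := by ring

/-- Homogeneous polynomials of degree `n` in `n` variables, positive on the nonzero part of
the nonnegative orthant, without zeros in the right half-space. -/
structure IsStablePoly {n : ℕ} (p : MvPolynomial (Fin n) ℂ) : Prop where
  homog : p.IsHomogeneous n
  ne_zero : ∀ z : Fin n → ℂ, (∀ i, 0 ≤ (z i).re) → (∃ i, 0 < (z i).re) → p.eval z ≠ 0
  pos : ∀ x : Fin n → ℝ, (∀ i, 0 ≤ x i) → (∃ i, 0 < x i) →
    0 < (p.eval fun i => (x i : ℂ)).re ∧ (p.eval fun i => (x i : ℂ)).im = 0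

namespace IsStablePoly

variable {n : ℕ} {p : MvPolynomial (Fin (n + 1)) ℂ}

/-- The restriction of `p` to the first variable. -/
noncomputable def slice (p : MvPolynomial (Fin (n + 1)) ℂ) (z : Fin n → ℂ) : Polynomial ℂ :=
  (MvPolynomial.finSuccEquiv ℂ n p).map (MvPolynomial.eval z)

theorem eval_slice (z : Fin n → ℂ) (t : ℂ) :
    (slice p z).eval t = p.eval (Fin.cons t z : Fin (n + 1) → ℂ) :=
  (MvPolynomial.eval_eq_eval_mv_eval' z t p).symm

/-- The part of `p` linear in the first variable. -/
noncomputable def linPart (p : MvPolynomial (Fin (n + 1)) ℂ) : MvPolynomial (Fin n) ℂ :=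
  (MvPolynomial.finSuccEquiv ℂ n p).coeff 1

theorem coeff_one_slice (z : Fin n → ℂ) : (slice p z).coeff 1 = (linPart p).eval z := by
  rw [slice, Polynomial.coeff_map, linPart]

theorem natDegree_slice_ne_zero (hp : IsStablePoly p) (z : Fin n → ℂ) :
    (slice p z).natDegree ≠ 0 := by
  intro hdeg
  obtain ⟨a, ha⟩ := Polynomial.natDegree_eq_zero.1 hdeg
  have hc : ∀ t : ℂ, p.eval (Fin.cons t z : Fin (n + 1) → ℂ) = a := fun t => by
    rw [← eval_slice, ← ha, Polynomial.eval_C]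
  have key : (fun s : ℂ => p.eval (Fin.cons 1 (fun i => s * z i) : Fin (n + 1) → ℂ)) =
      fun s : ℂ => s ^ (n + 1) * a := by
    refine Continuous.ext_on (dense_compl_singleton (0 : ℂ)) ?_ (by fun_prop) ?_
    · refine (MvPolynomial.continuous_eval p).comp (continuous_pi fun i => ?_)
      refine Fin.cases ?_ (fun j => ?_) i
      · simpa using continuous_const
      · simpa using continuous_mul_const (z j)
    · intro s hs
      have hs' : s ≠ 0 := by simpa using hs
      simp only
      rw [← hc s⁻¹, ← hp.homog.eval_mul_left]
      congr 2
      funext i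
      refine Fin.cases ?_ (fun j => ?_) i
      · simp [hs']
      · simp
  have h0 := congrFun key 0
  simp only [zero_mul, ne_eq, Nat.add_eq_zero_iff, one_ne_zero, and_false, not_false_eq_true,
    zero_pow] at h0
  refine hp.ne_zero _ (fun i => ?_) ⟨0, ?_⟩ h0
  · refine Fin.cases ?_ (fun j => ?_) i <;> simp
  · simp

theorem re_neg_of_mem_roots (hp : IsStablePoly p) {z : Fin n → ℂ} (hz : ∀ i, 0 ≤ (z i).re)
    (hz' : ∃ i, 0 < (z i).re) {r : ℂ} (hr : r ∈ (slice p z).roots) : r.re < 0 := by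
  by_contra! h
  have := Polynomial.isRoot_of_mem_roots hr
  rw [Polynomial.IsRoot, eval_slice] at this
  obtain ⟨i, hi⟩ := hz'
  refine hp.ne_zero _ (fun i => ?_) ⟨i.succ, by simpa using hi⟩ this
  refine Fin.cases ?_ (fun j => ?_) i
  · simpa using h
  · simpa using hz j

theorem eval_slice_zero_ne_zero (hp : IsStablePoly p) {z : Fin n → ℂ} (hz : ∀ i, 0 ≤ (z i).re)
    (hz' : ∃ i, 0 < (z i).re) : (slice p z).eval 0 ≠ 0 := by
  rw [eval_slice]
  obtain ⟨i, hi⟩ := hz'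
  refine hp.ne_zero _ (fun i => ?_) ⟨i.succ, by simpa using hi⟩
  refine Fin.cases ?_ (fun j => ?_) i
  · simp
  · simpa using hz j

theorem im_eq_zero_of_mem_roots (hp : IsStablePoly p) {x : Fin n → ℝ} (hx : ∀ i, 0 ≤ x i)
    (hx' : ∃ i, 0 < x i) {r : ℂ} (hr : r ∈ (slice p fun i => (x i : ℂ)).roots) : r.im = 0 := by
  by_contra h
  have hroot := Polynomial.isRoot_of_mem_roots hr
  rw [Polynomial.IsRoot, eval_slice] at hroot
  obtain ⟨i, hi⟩ := hx'
  set w : ℂ := ⟨1, r.re / r.im⟩ with hw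
  have hmul := hp.homog.eval_mul_left w (Fin.cons r fun i => (x i : ℂ))
  rw [hroot, mul_zero] at hmul
  refine hp.ne_zero _ (fun i => ?_) ⟨i.succ, ?_⟩ hmul
  · refine Fin.cases ?_ (fun j => ?_) i
    · simp [hw, h]
    · simpa [hw] using hx j
  · simpa [hw] using hi

theorem linPart_of_ne (hp : IsStablePoly p) : IsStablePoly (linPart p) where
  homog := hp.homog.finSuccEquiv_coeff_isHomogeneous 1 n (add_comm 1 n)
  ne_zero z hz hz' h := by
    have := Polynomial.re_coeff_one_div_pos (hp.natDegree_slice_ne_zero z)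
      (fun r hr => hp.re_neg_of_mem_roots hz hz' hr) (hp.eval_slice_zero_ne_zero hz hz')
    rw [coeff_one_slice, h, zero_div] at this
    simp at this
  pos x hx hx' := by
    have hz : ∀ i, 0 ≤ ((x i : ℂ)).re := by simpa using hx
    have hz' : ∃ i, 0 < ((x i : ℂ)).re := by simpa using hx'
    have h0 := hp.eval_slice_zero_ne_zero hz hz'
    have hre := Polynomial.re_coeff_one_div_pos (hp.natDegree_slice_ne_zero _)
      (fun r hr => hp.re_neg_of_mem_roots hz hz' hr) h0
    have him : ((slice p fun i => (x i : ℂ)).coeff 1 / (slice p fun i => (x i : ℂ)).eval 0).im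
        = 0 := by
      rw [Polynomial.eval_zero_derivative_div h0]
      refine Multiset.im_sum_map_eq_zero fun r hr => ?_
      simp [Complex.inv_im, hp.im_eq_zero_of_mem_roots hx hx' hr]
    have hP : 0 < ((slice p fun i => (x i : ℂ)).eval 0).re ∧
        ((slice p fun i => (x i : ℂ)).eval 0).im = 0 := by
      obtain ⟨i, hi⟩ := hx'
      have := hp.pos (Fin.cons 0 x) (fun i => by
        refine Fin.cases ?_ (fun j => ?_) i
        · simp
        · simpa using hx j) ⟨i.succ, by simpa using hi⟩
      rw [eval_slice]
      convert this using 5 <;>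
      · funext i
        refine Fin.cases ?_ (fun j => ?_) i <;> simp
    rw [← coeff_one_slice, ← div_mul_cancel₀ ((slice p fun i => (x i : ℂ)).coeff 1) h0,
      Complex.mul_re, Complex.mul_im, him, hP.2]
    exact ⟨by simpa using mul_pos hre hP.1, by simp⟩

/-- Gurvits' capacity inequality for eliminating one variable. -/
theorem capacity_linPart (hp : IsStablePoly p) {x : Fin n → ℝ} (hx : ∀ i, 0 ≤ x i)
    (hx' : ∃ i, 0 < x i) {c : ℝ}
    (hc : ∀ t : ℝ, 0 < t → c * t ≤ ‖p.eval (Fin.cons (t : ℂ) fun i => (x i : ℂ))‖) :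
    c * Real.exp (-1) ≤ ‖(linPart p).eval fun i => (x i : ℂ)‖ := by
  have hz : ∀ i, 0 ≤ ((x i : ℂ)).re := by simpa using hx
  have hz' : ∃ i, 0 < ((x i : ℂ)).re := by simpa using hx'
  set P := slice p fun i => (x i : ℂ) with hP
  have h0 : P.eval 0 ≠ 0 := hp.eval_slice_zero_ne_zero hz hz'
  have hre : 0 < (P.coeff 1 / P.eval 0).re :=
    Polynomial.re_coeff_one_div_pos (hp.natDegree_slice_ne_zero _)
      (fun r hr => hp.re_neg_of_mem_roots hz hz' hr) h0
  set a := (P.coeff 1 / P.eval 0).re with ha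
  have h1 := hc a⁻¹ (inv_pos.2 hre)
  rw [← eval_slice, ← hP] at h1
  have h2 := Polynomial.norm_eval_le_exp (P := P)
    (fun r hr => ⟨hp.im_eq_zero_of_mem_roots hx hx' hr, hp.re_neg_of_mem_roots hz hz' hr⟩) h0
    (inv_pos.2 hre).le
  rw [← ha, inv_mul_cancel₀ hre.ne'] at h2
  have h3 : a ≤ ‖P.coeff 1‖ / ‖P.eval 0‖ := by
    rw [← norm_div]; exact Complex.re_le_norm _
  have h4 : a * ‖P.eval 0‖ ≤ ‖P.coeff 1‖ := by
    rwa [le_div_iff₀ (norm_pos_iff.2 h0)] at h3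
  rw [← coeff_one_slice, ← hP]
  have h5 : c ≤ a * ‖P.eval 0‖ * Real.exp 1 := by
    have := mul_le_mul_of_nonneg_left (h1.trans h2) hre.le
    field_simp at this
    linarith
  calc c * Real.exp (-1) ≤ (a * ‖P.eval 0‖ * Real.exp 1) * Real.exp (-1) := by gcongr
    _ = a * ‖P.eval 0‖ := by rw [mul_assoc, ← Real.exp_add]; simp
    _ ≤ _ := h4

end IsStablePoly

/-- Gurvits' capacity inequality: the coefficient of the multilinear monomial. -/
theorem IsStablePoly.capacity_le {n : ℕ} {p : MvPolynomial (Fin n) ℂ} (hp : IsStablePoly p)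
    {c : ℝ} (hc0 : 0 ≤ c)
    (hc : ∀ x : Fin n → ℝ, (∀ i, 0 < x i) → c * ∏ i, x i ≤ ‖p.eval fun i => (x i : ℂ)‖) :
    c * Real.exp (-n) ≤ ‖p.coeff (Finsupp.equivFunOnFinite.symm fun _ => 1)‖ := by
  induction n generalizing c with
  | zero =>
    have := hc 0 (fun i => i.elim0)
    rw [MvPolynomial.eq_C_of_isEmpty p] at this ⊢
    rw [MvPolynomial.eval_C] at this
    simp only [Finset.univ_eq_empty, Finset.prod_empty, mul_one] at this
    simpa [Subsingleton.elim (Finsupp.equivFunOnFinite.symm fun _ : Fin 0 => 1) 0] using this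
  | succ n ih =>
    have key : ∀ x : Fin n → ℝ, (∀ i, 0 < x i) →
        (c * Real.exp (-1)) * ∏ i, x i ≤ ‖(linPart p).eval fun i => (x i : ℂ)‖ := by
      intro x hx
      have hct : ∀ t : ℝ, 0 < t →
          (c * ∏ i, x i) * t ≤ ‖p.eval (Fin.cons (t : ℂ) fun i => (x i : ℂ))‖ := by
        intro t ht
        have := hc (Fin.cons t x) (fun i => by
          refine Fin.cases ?_ (fun j => ?_) i
          · simpa using ht
          · simpa using hx j)
        rw [Fin.prod_univ_succ] at this
        simp only [Fin.cons_zero, Fin.cons_succ] at this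
        convert this using 1
        · ring
        · congr 3
          funext i
          refine Fin.cases ?_ (fun j => ?_) i <;> simp
      rcases Nat.eq_zero_or_pos n with rfl | hn
      · have hcon : (slice p fun i => (x i : ℂ)).eval 0 = 0 := by
          rw [eval_slice]
          have := hp.homog.eval_mul_left 0 0
          simp only [zero_mul, zero_add, pow_one] at this
          convert this with i
          refine Fin.cases ?_ (fun j => j.elim0) i
          simp
        have hdeg : (slice p fun i => (x i : ℂ)).natDegree ≤ 1 := by
          rw [Polynomial.natDegree_le_iff_coeff_eq_zero]
          intro N hN
          rw [slice, Polynomial.coeff_map]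
          have : (MvPolynomial.finSuccEquiv ℂ 0 p).coeff N = 0 := by
            ext m
            rw [MvPolynomial.finSuccEquiv_coeff_coeff, MvPolynomial.coeff_zero]
            refine hp.homog.coeff_eq_zero ?_
            rw [Finsupp.degree_eq_sum]
            simp; omega
          rw [this, map_zero]
        have h1 := hct 1 one_pos
        rw [← Complex.ofReal_one.symm, ← eval_slice, 
          Polynomial.eq_X_add_C_of_natDegree_le_one hdeg, Polynomial.coeff_zero_eq_eval_zero, hcon,
          coeff_one_slice] at h1
        simp only [Polynomial.eval_add, Polynomial.eval_mul, Polynomial.eval_C, Polynomial.eval_X,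
          mul_one, add_zero] at h1
        refine le_trans ?_ h1
        simp only [Finset.univ_eq_empty, Finset.prod_empty, mul_one]
        have : Real.exp (-1) ≤ 1 := by rw [Real.exp_le_one_iff]; norm_num
        nlinarith
      · have := hp.capacity_linPart (fun i => (hx i).le) ⟨⟨0, hn⟩, hx _⟩ hct
        calc _ = (c * ∏ i, x i) * Real.exp (-1) := by ring
          _ ≤ _ := this
    have := ih hp.linPart_of_ne (mul_nonneg hc0 (Real.exp_pos _).le) key
    rw [linPart, MvPolynomial.finSuccEquiv_coeff_coeff] at this
    convert this using 1
    · rw [mul_assoc, ← Real.exp_add]; push_cast; ring_nf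
    · congr 2
      ext i
      refine Fin.cases ?_ (fun j => ?_) i <;> simp

theorem isStablePoly_prod_linear {n : ℕ} {a : Fin n → Fin n → ℝ} (ha : ∀ i j, 0 < a i j) :
    IsStablePoly (∏ i, ∑ j, MvPolynomial.C ((a i j : ℝ) : ℂ) * MvPolynomial.X j) where
  homog := by
    have := MvPolynomial.IsHomogeneous.prod (Finset.univ : Finset (Fin n))
      (fun i => ∑ j, MvPolynomial.C ((a i j : ℝ) : ℂ) * MvPolynomial.X j) (fun _ => 1)
      (fun i _ => MvPolynomial.IsHomogeneous.sum _ _ _ fun j _ => by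
        simpa using (MvPolynomial.isHomogeneous_C _ ((a i j : ℝ) : ℂ)).mul
          (MvPolynomial.isHomogeneous_X ℂ j))
    simpa using this
  ne_zero z hz := by
    rintro ⟨k, hk⟩
    simp only [map_prod, map_sum, map_mul, MvPolynomial.eval_C, MvPolynomial.eval_X]
    refine Finset.prod_ne_zero_iff.2 fun i _ h0 => ?_
    have h1 : 0 < (∑ j, ((a i j : ℝ) : ℂ) * z j).re := by
      rw [Complex.re_sum]
      refine Finset.sum_pos' (fun j _ => ?_) ⟨k, Finset.mem_univ _, ?_⟩
      · rw [Complex.re_ofReal_mul]; exact mul_nonneg (ha i j).le (hz j)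
      · rw [Complex.re_ofReal_mul]; exact mul_pos (ha i k) hk
    rw [h0] at h1
    exact lt_irrefl _ h1
  pos x hx := by
    rintro ⟨k, hk⟩
    have h : MvPolynomial.eval (fun i => (x i : ℂ))
        (∏ i, ∑ j, MvPolynomial.C ((a i j : ℝ) : ℂ) * MvPolynomial.X j) =
        ((∏ i, ∑ j, a i j * x j : ℝ) : ℂ) := by
      simp [map_prod, map_sum]
    rw [h]
    refine ⟨?_, Complex.ofReal_im _⟩
    rw [Complex.ofReal_re]
    exact Finset.prod_pos fun i _ => Finset.sum_pos'
      (fun j _ => mul_nonneg (ha i j).le (hx j)) ⟨k, Finset.mem_univ _, mul_pos (ha i k) hk⟩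

theorem coeff_prod_linear {n : ℕ} (a : Fin n → Fin n → ℝ) :
    (∏ i, ∑ j, MvPolynomial.C ((a i j : ℝ) : ℂ) * MvPolynomial.X j).coeff
      (Finsupp.equivFunOnFinite.symm fun _ => 1) =
      ((∑ σ : Equiv.Perm (Fin n), ∏ i, a i (σ i) : ℝ) : ℂ) := by
  classical
  have key : ∀ f : Fin n → Fin n, (∏ i, MvPolynomial.C ((a i (f i) : ℝ) : ℂ) *
      MvPolynomial.X (f i) : MvPolynomial (Fin n) ℂ) =
      MvPolynomial.monomial (∑ i, Finsupp.single (f i) 1) (∏ i, ((a i (f i) : ℝ) : ℂ)) := by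
    intro f
    simp_rw [MvPolynomial.C_mul_X_eq_monomial, MvPolynomial.monomial_sum_prod]
  simp_rw [Finset.prod_univ_sum, MvPolynomial.coeff_sum, key, MvPolynomial.coeff_monomial]
  push_cast
  rw [Fintype.piFinset_univ]
  refine (Fintype.sum_of_injective (fun σ : Equiv.Perm (Fin n) => (σ : Fin n → Fin n))
    DFunLike.coe_injective _ _ (fun f hf => ?_) fun σ => ?_).symm
  · refine if_neg fun h => hf ?_
    have hsurj : Function.Surjective f := by
      intro k
      by_contra! hk
      have := DFunLike.congr_fun h k
      simp [hk] at this
    exact ⟨Equiv.ofBijective f (Finite.surjective_iff_bijective.1 hsurj), rfl⟩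
  · refine (if_pos ?_).symm
    ext k
    simp only [Finsupp.coe_finsetSum, Finset.sum_apply, Finsupp.single_apply]
    rw [Equiv.sum_comp σ (fun i => if i = k then 1 else 0)]
    simp

theorem exp_entropy_mul_prod_le {n : ℕ} {D : Fin n → Fin n → ℝ} (hD : ∀ i j, 0 ≤ D i j)
    (hrow : ∀ i, ∑ j, D i j = 1) (hcol : ∀ j, ∑ i, D i j = 1) {a : Fin n → Fin n → ℝ}
    (ha0 : ∀ i j, 0 ≤ a i j) (ha : ∀ i j, D i j ≠ 0 → 1 ≤ a i j) {x : Fin n → ℝ}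
    (hx : ∀ i, 0 < x i) :
    exp (∑ i, ∑ j, negMulLog (D i j)) * ∏ j, x j ≤ ∏ i, ∑ j, a i j * x j := by
  have hrow_le : ∀ i, ∏ j, (x j / D i j) ^ D i j ≤ ∑ j, a i j * x j := by
    intro i
    refine (Real.geom_mean_le_arith_mean_weighted Finset.univ (D i) (fun j => x j / D i j)
      (fun j _ => hD i j) (hrow i) fun j _ => div_nonneg (hx j).le (hD i j)).trans ?_
    refine Finset.sum_le_sum fun j _ => ?_
    by_cases h : D i j = 0
    · simpa [h] using mul_nonneg (ha0 i j) (hx j).le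
    · rw [mul_div_cancel₀ _ h]
      exact le_mul_of_one_le_left (hx j).le (ha i j h)
  have hfac : ∀ i j, (x j / D i j) ^ D i j = exp (negMulLog (D i j)) * x j ^ D i j := by
    intro i j
    rcases (hD i j).eq_or_lt with h | h
    · simp [← h]
    · rw [div_rpow (hx j).le (hD i j), rpow_def_of_pos h, negMulLog, div_eq_mul_inv,
        ← Real.exp_neg, mul_comm]
      ring_nf
  calc exp (∑ i, ∑ j, negMulLog (D i j)) * ∏ j, x j
      = ∏ i, ∏ j, (x j / D i j) ^ D i j := by
        simp_rw [hfac, Finset.prod_mul_distrib, Real.exp_sum]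
        congr 1
        rw [Finset.prod_comm]
        refine Finset.prod_congr rfl fun j _ => ?_
        rw [← Real.rpow_sum_of_pos (hx j), hcol j, rpow_one]
    _ ≤ ∏ i, ∑ j, a i j * x j := Finset.prod_le_prod (fun i _ => Finset.prod_nonneg fun j _ =>
        rpow_nonneg (div_nonneg (hx j).le (hD i j)) _) fun i _ => hrow_le i

/-- A lower bound for the number of permutations compatible with a relation that supports a doubly
stochastic matrix, in terms of the entropy of the matrix. -/
theorem exp_entropy_sub_le_card_perm {n : ℕ} {R : Fin n → Fin n → Prop} {D : Fin n → Fin n → ℝ}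
    (hD : ∀ i j, 0 ≤ D i j) (hrow : ∀ i, ∑ j, D i j = 1) (hcol : ∀ j, ∑ i, D i j = 1)
    (hR : ∀ i j, D i j ≠ 0 → R i j) :
    exp (∑ i, ∑ j, negMulLog (D i j) - n) ≤
      (Nat.card {σ : Equiv.Perm (Fin n) // ∀ m, R m (σ m)} : ℝ) := by
  classical
  set a : ℝ → Fin n → Fin n → ℝ := fun δ i j => (if R i j then 1 else 0) + δ with ha
  have hpos : ∀ δ > 0, exp (∑ i, ∑ j, negMulLog (D i j) - n) ≤
      ∑ σ : Equiv.Perm (Fin n), ∏ i, a δ i (σ i) := by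
    intro δ hδ
    have ha0 : ∀ i j, 0 < a δ i j := fun i j => by simp only [ha]; split_ifs <;> positivity
    have h := (isStablePoly_prod_linear ha0).capacity_le (Real.exp_pos _).le fun x hx => by
      have hle := exp_entropy_mul_prod_le hD hrow hcol (fun i j => (ha0 i j).le)
        (fun i j h => by simp [ha, hR i j h, hδ.le]) hx
      refine hle.trans (le_of_eq ?_)
      have : MvPolynomial.eval (fun i => (x i : ℂ))
          (∏ i, ∑ j, MvPolynomial.C ((a δ i j : ℝ) : ℂ) * MvPolynomial.X j) =
          ((∏ i, ∑ j, a δ i j * x j : ℝ) : ℂ) := by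
        simp [map_prod, map_sum]
      rw [this, Complex.norm_real, Real.norm_of_nonneg]
      exact Finset.prod_nonneg fun i _ => Finset.sum_nonneg fun j _ =>
        mul_nonneg (ha0 i j).le (hx j).le
    rw [coeff_prod_linear, Complex.norm_real, Real.norm_of_nonneg
      (Finset.sum_nonneg fun σ _ => Finset.prod_nonneg fun i _ => (ha0 i _).le)] at h
    rwa [sub_eq_add_neg, Real.exp_add]
  have hcount : (Nat.card {σ : Equiv.Perm (Fin n) // ∀ m, R m (σ m)} : ℝ) =
      ∑ σ : Equiv.Perm (Fin n), ∏ i, a 0 i (σ i) := by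
    rw [Nat.card_eq_fintype_card, Fintype.card_subtype, Finset.card_filter]
    push_cast
    refine Finset.sum_congr rfl fun σ _ => ?_
    simp [ha, Finset.prod_ite_zero]
  rw [hcount]
  have hcont : Continuous fun δ : ℝ => ∑ σ : Equiv.Perm (Fin n), ∏ i, a δ i (σ i) := by
    simp only [ha]; fun_prop
  refine ge_of_tendsto (hcont.continuousWithinAt.tendsto (x := 0) (s := Set.Ioi 0)) ?_
  filter_upwards [self_mem_nhdsWithin] with δ hδ using hpos δ hδ

/-- The odd primes up to `n`. -/
def oddPrimes (n : ℕ) : Finset ℕ := {p ∈ Finset.range (n + 1) | p.Prime ∧ p ≠ 2}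

theorem mem_oddPrimes {n p : ℕ} : p ∈ oddPrimes n ↔ p ≤ n ∧ p.Prime ∧ p ≠ 2 := by
  simp [oddPrimes]

theorem three_le_of_mem_oddPrimes {n p : ℕ} (hp : p ∈ oddPrimes n) : 3 ≤ p := by
  obtain ⟨-, hp, h2⟩ := mem_oddPrimes.1 hp
  have := hp.two_le
  omega

theorem three_le_cast_of_mem_oddPrimes {n p : ℕ} (hp : p ∈ oddPrimes n) : (3 : ℝ) ≤ p := by
  exact_mod_cast three_le_of_mem_oddPrimes hp

theorem odd_of_mem_oddPrimes {n p : ℕ} (hp : p ∈ oddPrimes n) : Odd p :=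
  (mem_oddPrimes.1 hp).2.1.odd_of_ne_two (mem_oddPrimes.1 hp).2.2

theorem prod_oddPrimes_succ (n : ℕ) (f : ℕ → ℝ) :
    ∏ p ∈ oddPrimes (n + 1), f p =
      (∏ p ∈ oddPrimes n, f p) * if (n + 1).Prime ∧ n + 1 ≠ 2 then f (n + 1) else 1 := by
  rw [oddPrimes, Finset.prod_filter, Finset.prod_range_succ, oddPrimes, Finset.prod_filter]

/-- The multiplicative weight attached to `m`. -/
noncomputable def weight (n m : ℕ) : ℝ :=
  ∏ p ∈ oddPrimes n with p ∣ m, ((p : ℝ) - 1) / (p - 2)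

/-- The density of the main term of the coprimality kernel. -/
noncomputable def density (n : ℕ) : ℝ := ∏ p ∈ oddPrimes n, (p : ℝ) * (p - 2) / (p - 1) ^ 2

/-- The coprimality kernel, whose row sums over an opposite parity class are close to `1`. -/
noncomputable def kernel (n i j : ℕ) : ℝ :=
  if i.Coprime j then 2 * density n * weight n i * weight n j / n else 0

theorem one_le_weight (n m : ℕ) : 1 ≤ weight n m := by
  refine Finset.one_le_prod fun p hp => ?_
  have := three_le_cast_of_mem_oddPrimes (Finset.mem_filter.1 hp).1
  rw [le_div_iff₀] <;> linarith

theorem weight_le {n m : ℕ} : weight n m ≤ 2 ^ ((oddPrimes n).filter (· ∣ m)).card := by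
  rw [weight, ← Finset.prod_const]
  refine Finset.prod_le_prod (fun p hp => ?_) fun p hp => ?_
  all_goals have := three_le_cast_of_mem_oddPrimes (Finset.mem_filter.1 hp).1
  · apply div_nonneg <;> linarith
  · rw [div_le_iff₀] <;> linarith

theorem density_le_one (n : ℕ) : density n ≤ 1 := by
  refine Finset.prod_le_one (fun p hp => ?_) fun p hp => ?_
  all_goals have := three_le_cast_of_mem_oddPrimes hp
  · apply div_nonneg _ (sq_nonneg _)
    apply mul_nonneg <;> linarith
  · rw [div_le_one (by nlinarith)]
    nlinarith

theorem half_le_density (n : ℕ) : 1 / 2 ≤ density n := by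
  suffices h : ∀ k : ℕ, ((k : ℝ) + 2) / (2 * (k + 1)) ≤ density (k + 2) by
    rcases n with _ | _ | k
    · norm_num [density, show oddPrimes 0 = ∅ by decide]
    · norm_num [density, show oddPrimes 1 = ∅ by decide]
    · refine le_trans ?_ (h k)
      rw [div_le_div_iff₀ (by norm_num) (by positivity)]
      linarith
  intro k
  induction k with
  | zero =>
    have : oddPrimes 2 = ∅ := by decide
    norm_num [density, this]
  | succ k ih =>
    have hk : (0 : ℝ) ≤ k := k.cast_nonneg
    rw [density, prod_oddPrimes_succ, ← density]
    have h0 : 0 ≤ density (k + 2) := le_trans (by positivity) ih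
    split_ifs
    · push_cast
      calc ((k : ℝ) + 1 + 2) / (2 * (k + 1 + 1)) =
          (k + 2) / (2 * (k + 1)) * ((k + 3) * (k + 1) / (k + 2) ^ 2) := by field_simp; ring
        _ ≤ density (k + 2) * ((k + 3) * (k + 1) / (k + 2) ^ 2) := by gcongr
        _ = _ := by congr 2 <;> ring
    · push_cast
      rw [mul_one]
      refine le_trans ?_ ih
      rw [div_le_div_iff₀ (by positivity) (by positivity)]
      nlinarith

theorem prod_oddPrimes_sq_le (n : ℕ) (hn : n ≠ 0) :
    (∏ p ∈ oddPrimes n, ((p : ℝ) - 1) / (p - 2)) ^ 2 ≤ 4 * n := by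
  have hstep : ∀ k : ℕ, ∏ p ∈ oddPrimes (2 * k + 4), ((p : ℝ) - 1) / (p - 2) =
      ∏ p ∈ oddPrimes (2 * k + 3), ((p : ℝ) - 1) / (p - 2) := by
    intro k
    rw [prod_oddPrimes_succ, if_neg, mul_one]
    rintro ⟨h1, h2⟩
    have := h1.odd_of_ne_two h2
    grind
  have hodd : ∀ k : ℕ, (∏ p ∈ oddPrimes (2 * k + 3), ((p : ℝ) - 1) / (p - 2)) ^ 2 ≤ 4 * (k + 1) := by
    intro k
    induction k with
    | zero =>
      have : oddPrimes 3 = {3} := by decide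
      norm_num [this]
    | succ k ih =>
      rw [show 2 * (k + 1) + 3 = 2 * k + 4 + 1 by ring, prod_oddPrimes_succ, hstep, mul_pow]
      split_ifs
      · push_cast
        calc _ ≤ 4 * ((k : ℝ) + 1) * ((2 * k + 4 + 1 - 1) / (2 * k + 4 + 1 - 2)) ^ 2 := by gcongr
          _ ≤ _ := by
            rw [div_pow, mul_div_assoc', div_le_iff₀ (by ring_nf; positivity)]
            have : (0 : ℝ) ≤ k := k.cast_nonneg
            nlinarith
      · push_cast
        linarith
  rcases Nat.lt_or_ge n 3 with h | h
  · have h1 : (1 : ℝ) ≤ n := by exact_mod_cast Nat.one_le_iff_ne_zero.2 hn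
    have : oddPrimes n = ∅ := by interval_cases n <;> decide
    rw [this, Finset.prod_empty]
    linarith
  · obtain ⟨k, rfl | rfl⟩ : ∃ k, n = 2 * k + 3 ∨ n = 2 * k + 4 := ⟨(n - 3) / 2, by omega⟩
    · refine (hodd k).trans ?_
      push_cast
      have : (0 : ℝ) ≤ k := k.cast_nonneg
      linarith
    · rw [hstep]
      refine (hodd k).trans ?_
      push_cast
      have : (0 : ℝ) ≤ k := k.cast_nonneg
      linarith

theorem prod_oddPrimes_le_sqrt {n : ℕ} (hn : n ≠ 0) :
    ∏ p ∈ oddPrimes n, ((p : ℝ) - 1) / (p - 2) ≤ 2 * √n := by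
  refine (Real.le_sqrt_of_sq_le (prod_oddPrimes_sq_le n hn)).trans (le_of_eq ?_)
  rw [Real.sqrt_mul (by norm_num), show (4 : ℝ) = 2 ^ 2 by norm_num, Real.sqrt_sq (by norm_num)]

theorem coprime_iff_oddPrimes {n m j : ℕ} (hm : m ≠ 0) (hmn : m ≤ n) (h2 : ¬(2 ∣ m ∧ 2 ∣ j)) :
    m.Coprime j ↔ ∀ p ∈ oddPrimes n, ¬(p ∣ m ∧ p ∣ j) := by
  constructor
  · rintro h p hp ⟨h1, h3⟩
    exact Nat.not_coprime_of_dvd_of_dvd (mem_oddPrimes.1 hp).2.1.one_lt h1 h3 h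
  · intro h
    refine Nat.coprime_of_dvd fun p hp h1 h3 => h p (mem_oddPrimes.2 ⟨?_, hp, ?_⟩) ⟨h1, h3⟩
    · exact (Nat.le_of_dvd (Nat.pos_of_ne_zero hm) h1).trans hmn
    · rintro rfl
      exact h2 ⟨h1, h3⟩

/-- The local factor of the coprimality kernel. -/
noncomputable def localFactor (m p : ℕ) : ℝ := if p ∣ m then -1 else 1 / ((p : ℝ) - 2)

theorem ite_coprime_weight {n m j : ℕ} (hm : m ≠ 0) (hmn : m ≤ n) (h2 : ¬(2 ∣ m ∧ 2 ∣ j)) :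
    (if m.Coprime j then weight n j else 0) =
      ∏ p ∈ oddPrimes n, (1 + localFactor m p * if p ∣ j then 1 else 0) := by
  split_ifs with h
  · rw [weight, Finset.prod_filter]
    refine Finset.prod_congr rfl fun p hp => ?_
    have h3 := three_le_cast_of_mem_oddPrimes hp
    have hnot := (coprime_iff_oddPrimes hm hmn h2).1 h p hp
    split_ifs with hpj
    · rw [localFactor, if_neg fun hpm => hnot ⟨hpm, hpj⟩]
      have : (p : ℝ) - 2 ≠ 0 := by linarith
      field_simp
      ring
    · simp
  · rw [coprime_iff_oddPrimes hm hmn h2] at h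
    push Not at h
    obtain ⟨p, hp, hpm, hpj⟩ := h
    exact (Finset.prod_eq_zero hp (by simp [localFactor, hpm, hpj])).symm

theorem prod_dvd_iff_of_subset_oddPrimes {n j : ℕ} {U : Finset ℕ} (hU : U ⊆ oddPrimes n) :
    ∏ p ∈ U, p ∣ j ↔ ∀ p ∈ U, p ∣ j :=
  ⟨fun h _ hp => (Finset.dvd_prod_of_mem _ hp).trans h, fun h =>
    Finset.prod_primes_dvd _ (fun _ hp => (mem_oddPrimes.1 (hU hp)).2.1.prime) h⟩

theorem sum_ite_coprime_weight {n m : ℕ} (hm : m ≠ 0) (hmn : m ≤ n) {J : Finset ℕ}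
    (h2 : ∀ j ∈ J, ¬(2 ∣ m ∧ 2 ∣ j)) :
    ∑ j ∈ J, (if m.Coprime j then weight n j else 0) =
      ∑ U ∈ (oddPrimes n).powerset, (∏ p ∈ U, localFactor m p) *
        (J.filter (∏ p ∈ U, p ∣ ·)).card := by
  calc _ = ∑ j ∈ J, ∑ U ∈ (oddPrimes n).powerset, (∏ p ∈ U, localFactor m p) *
        if ∏ p ∈ U, p ∣ j then 1 else 0 := by
        refine Finset.sum_congr rfl fun j hj => ?_
        rw [ite_coprime_weight hm hmn (h2 j hj), Finset.prod_one_add]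
        refine Finset.sum_congr rfl fun U hU => ?_
        rw [Finset.prod_mul_distrib, Finset.prod_ite_zero, Finset.prod_const_one]
        simp_rw [prod_dvd_iff_of_subset_oddPrimes (Finset.mem_powerset.1 hU)]
    _ = _ := by
        rw [Finset.sum_comm]
        refine Finset.sum_congr rfl fun U _ => ?_
        rw [← Finset.mul_sum, Finset.card_filter]
        push_cast
        rfl

theorem prod_one_add_localFactor_div {n m : ℕ} :
    ∏ p ∈ oddPrimes n, (1 + localFactor m p / p) = 1 / (density n * weight n m) := by
  rw [density, weight, Finset.prod_filter, ← Finset.prod_mul_distrib, one_div,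
    ← Finset.prod_inv_distrib]
  refine Finset.prod_congr rfl fun p hp => ?_
  have h3 := three_le_cast_of_mem_oddPrimes hp
  have h0 : (p : ℝ) ≠ 0 := by linarith
  have h1 : (p : ℝ) - 1 ≠ 0 := by linarith
  have h2 : (p : ℝ) - 2 ≠ 0 := by linarith
  unfold localFactor
  split_ifs <;> field_simp <;> ring

theorem prod_one_add_abs_localFactor_le {n m : ℕ} (hn : n ≠ 0) :
    ∏ p ∈ oddPrimes n, (1 + |localFactor m p|) ≤
      2 ^ ((oddPrimes n).filter (· ∣ m)).card * (2 * √n) := by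
  have h : ∀ p ∈ oddPrimes n, 1 + |localFactor m p| ≤
      (if p ∣ m then 2 else 1) * (((p : ℝ) - 1) / (p - 2)) := by
    intro p hp
    have h3 := three_le_cast_of_mem_oddPrimes hp
    have h2 : (0 : ℝ) < (p : ℝ) - 2 := by linarith
    have h1 : 1 ≤ ((p : ℝ) - 1) / (p - 2) := by rw [le_div_iff₀] <;> linarith
    unfold localFactor
    split_ifs
    · norm_num
      linarith
    · rw [abs_of_pos (by positivity)]
      refine le_of_eq ?_
      field_simp
      ring
  refine (Finset.prod_le_prod (fun p _ => by positivity) h).trans ?_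
  rw [Finset.prod_mul_distrib, ← Finset.prod_filter, Finset.prod_const]
  gcongr
  exact prod_oddPrimes_le_sqrt hn

theorem abs_sum_kernel_sub_one_le {n m : ℕ} (hm : m ≠ 0) (hmn : m ≤ n) {J : Finset ℕ}
    (h2 : ∀ j ∈ J, ¬(2 ∣ m ∧ 2 ∣ j))
    (hJ : ∀ d : ℕ, Odd d → |((J.filter (d ∣ ·)).card : ℝ) - n / (2 * d)| ≤ 2) {G : ℝ}
    (hG : 2 ^ ((oddPrimes n).filter (· ∣ m)).card ≤ G) :
    |∑ j ∈ J, kernel n m j - 1| ≤ 8 * G ^ 2 / √n := by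
  have hn : n ≠ 0 := by omega
  have hn0 : (0 : ℝ) < n := by positivity
  have hw : 1 ≤ weight n m := one_le_weight n m
  have hwG : weight n m ≤ G := weight_le.trans hG
  have hG0 : 0 ≤ G := by linarith
  have hβ := half_le_density n
  have hβ1 := density_le_one n
  set P := oddPrimes n with hP
  have hmain : ∑ U ∈ P.powerset, (∏ p ∈ U, localFactor m p) * ((n : ℝ) / (2 * (∏ p ∈ U, p : ℕ))) =
      n / (2 * density n * weight n m) := by
    rw [mul_assoc, ← div_div, div_eq_mul_one_div (n / 2 : ℝ) (density n * weight n m),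
      ← prod_one_add_localFactor_div, Finset.prod_one_add, Finset.mul_sum]
    refine Finset.sum_congr rfl fun U _ => ?_
    rw [Finset.prod_div_distrib]
    push_cast
    ring
  have herr : |∑ j ∈ J, (if m.Coprime j then weight n j else 0) -
      n / (2 * density n * weight n m)| ≤ 2 * (G * (2 * √n)) := by
    rw [sum_ite_coprime_weight hm hmn h2, ← hmain, ← Finset.sum_sub_distrib]
    calc _ ≤ ∑ U ∈ P.powerset, (∏ p ∈ U, |localFactor m p|) * 2 := by
          refine (Finset.abs_sum_le_sum_abs _ _).trans (Finset.sum_le_sum fun U hU => ?_)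
          rw [← mul_sub, abs_mul, Finset.abs_prod]
          refine mul_le_mul_of_nonneg_left (hJ _ ?_) (Finset.prod_nonneg fun _ _ => abs_nonneg _)
          exact Finset.prod_induction _ Odd (fun _ _ => Odd.mul) odd_one fun p hp =>
            odd_of_mem_oddPrimes (Finset.mem_powerset.1 hU hp)
      _ = 2 * ∏ p ∈ P, (1 + |localFactor m p|) := by
          rw [← Finset.sum_mul, Finset.prod_one_add, mul_comm]
      _ ≤ _ := by
          gcongr
          exact (prod_one_add_abs_localFactor_le hn).trans (by gcongr)
  have hsum : ∑ j ∈ J, kernel n m j = 2 * density n * weight n m / n *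
      ∑ j ∈ J, (if m.Coprime j then weight n j else 0) := by
    rw [Finset.mul_sum]
    refine Finset.sum_congr rfl fun j _ => ?_
    rw [kernel]
    split_ifs <;> ring
  have hone : (1 : ℝ) = 2 * density n * weight n m / n * (n / (2 * density n * weight n m)) := by
    have : density n ≠ 0 := by linarith
    field_simp
  rw [hsum, hone, ← mul_sub, abs_mul, abs_of_nonneg (by positivity)]
  calc _ ≤ 2 * 1 * G / n * (2 * (G * (2 * √n))) := by gcongr
    _ = 8 * G ^ 2 / √n := by
      have h := Real.sq_sqrt hn0.le
      have h0 : √(n : ℝ) ≠ 0 := by positivity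
      field_simp
      rw [h]
      ring

/-- A nonnegative kernel `B` on `(S ∪ T) × E` with approximately correct marginals, rescaled by `τ`
on `S × E`, is completed to a matrix with unit row and column sums by adding a small set `Q` of rows
and a set `V` of columns of the same size, with vanishing block `(T ∪ Q) × V`. -/
theorem exists_doubly_stochastic_completion {S T Q E V : Finset ℕ} (hST : Disjoint S T)
    (hSQ : Disjoint S Q) (hTQ : Disjoint T Q) (hEV : Disjoint E V) (hQV : Q.card = V.card)
    (hQ : 0 < Q.card) (hcard : S.card + T.card = E.card) {B : ℕ → ℕ → ℝ} (hB : ∀ i j, 0 ≤ B i j)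
    {τ : ℝ} (hτ0 : 0 ≤ τ) (hτ : τ * ∑ i ∈ S, ∑ j ∈ E, B i j = S.card - Q.card)
    (hr : ∀ i ∈ S, τ * ∑ j ∈ E, B i j ≤ 1) (hT : ∀ i ∈ T, 0 < ∑ j ∈ E, B i j)
    (hs : ∀ j ∈ E, τ * ∑ i ∈ S, B i j + ∑ i ∈ T, B i j / ∑ k ∈ E, B i k ≤ 1) :
    ∃ W : ℕ → ℕ → ℝ, (∀ i j, 0 ≤ W i j) ∧ (∀ i ∈ S ∪ T ∪ Q, ∑ j ∈ E ∪ V, W i j = 1) ∧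
      (∀ j ∈ E ∪ V, ∑ i ∈ S ∪ T ∪ Q, W i j = 1) ∧ (∀ i ∈ S, ∀ j ∈ E, W i j = τ * B i j) ∧
      ∀ i j, W i j ≠ 0 →
        (i ∈ S ∪ T ∧ j ∈ E ∧ B i j ≠ 0) ∨ (i ∈ S ∧ j ∈ V) ∨ (i ∈ Q ∧ j ∈ E) := by
  set u : ℝ := (Q.card : ℝ) with hu
  have hu0 : 0 < u := by rw [hu]; exact_mod_cast hQ
  set R : ℕ → ℝ := fun i => ∑ j ∈ E, B i j with hR
  set c : ℕ → ℝ := fun j => τ * ∑ i ∈ S, B i j + ∑ i ∈ T, B i j / R i with hc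
  let W : ℕ → ℕ → ℝ := fun i j =>
    if i ∈ S then (if j ∈ E then τ * B i j else if j ∈ V then (1 - τ * R i) / u else 0)
    else if i ∈ T then (if j ∈ E then B i j / R i else 0)
    else if i ∈ Q then (if j ∈ E then (1 - c j) / u else 0) else 0
  have hVE : ∀ j ∈ V, j ∉ E := fun j hj h => Finset.disjoint_left.1 hEV h hj
  have hTS : ∀ j ∈ T, j ∉ S := fun j hj h => Finset.disjoint_left.1 hST h hj
  have hQS : ∀ j ∈ Q, j ∉ S := fun j hj h => Finset.disjoint_left.1 hSQ h hj
  have hQT : ∀ j ∈ Q, j ∉ T := fun j hj h => Finset.disjoint_left.1 hTQ h hj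
  have wSE : ∀ i ∈ S, ∀ j ∈ E, W i j = τ * B i j := fun i hi j hj => by simp [W, hi, hj]
  have wSV : ∀ i ∈ S, ∀ j ∈ V, W i j = (1 - τ * R i) / u := fun i hi j hj => by
    simp [W, hi, hj, hVE j hj]
  have wTE : ∀ i ∈ T, ∀ j ∈ E, W i j = B i j / R i := fun i hi j hj => by
    simp [W, hi, hj, hTS i hi]
  have wTV : ∀ i ∈ T, ∀ j ∈ V, W i j = 0 := fun i hi j hj => by
    simp [W, hi, hVE j hj, hTS i hi]
  have wQE : ∀ i ∈ Q, ∀ j ∈ E, W i j = (1 - c j) / u := fun i hi j hj => by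
    simp [W, hi, hj, hQS i hi, hQT i hi]
  have wQV : ∀ i ∈ Q, ∀ j ∈ V, W i j = 0 := fun i hi j hj => by
    simp [W, hi, hVE j hj, hQS i hi, hQT i hi]
  have hcE : ∑ j ∈ E, c j = E.card - u := by
    simp only [hc, Finset.sum_add_distrib]
    rw [← Finset.mul_sum, Finset.sum_comm, hτ, Finset.sum_comm]
    have : ∀ i ∈ T, ∑ j ∈ E, B i j / R i = 1 := fun i hi => by
      rw [← Finset.sum_div]
      exact div_self (hT i hi).ne'
    rw [Finset.sum_congr rfl this, ← hcard]
    push_cast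
    simp
    ring
  refine ⟨W, ?_, ?_, ?_, wSE, ?_⟩
  · intro i j
    simp only [W]
    split_ifs with h1 h2 h3 h4 h5 h6 h7
    · exact mul_nonneg hτ0 (hB i j)
    · exact div_nonneg (sub_nonneg.2 (hr i h1)) hu0.le
    · exact le_rfl
    · exact div_nonneg (hB i j) (hT i h4).le
    · exact le_rfl
    · exact div_nonneg (sub_nonneg.2 (hs j h7)) hu0.le
    · exact le_rfl
    · exact le_rfl
  · intro i hi
    rw [Finset.sum_union hEV]
    rcases Finset.mem_union.1 hi with hi | hi
    · rcases Finset.mem_union.1 hi with hi | hi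
      · rw [Finset.sum_congr rfl (wSE i hi), Finset.sum_congr rfl (wSV i hi), ← Finset.mul_sum,
          Finset.sum_const, nsmul_eq_mul, ← hQV, ← hu]
        simp only [hR]
        field_simp
        ring
      · rw [Finset.sum_congr rfl (wTE i hi), Finset.sum_congr rfl (wTV i hi), ← Finset.sum_div,
          Finset.sum_const_zero, add_zero]
        exact div_self (hT i hi).ne'
    · rw [Finset.sum_congr rfl (wQE i hi), Finset.sum_congr rfl (wQV i hi), ← Finset.sum_div,
        Finset.sum_const_zero, Finset.sum_sub_distrib, hcE, Finset.sum_const, nsmul_eq_mul]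
      field_simp
      ring
  · intro j hj
    rw [Finset.sum_union (Finset.disjoint_union_left.2 ⟨hSQ, hTQ⟩), Finset.sum_union hST]
    rcases Finset.mem_union.1 hj with hj | hj
    · rw [Finset.sum_congr rfl fun i hi => wSE i hi j hj,
        Finset.sum_congr rfl fun i hi => wTE i hi j hj,
        Finset.sum_congr rfl fun i hi => wQE i hi j hj, ← Finset.mul_sum, Finset.sum_const,
        nsmul_eq_mul, ← hu]
      simp only [hc]
      field_simp
      ring
    · rw [Finset.sum_congr rfl fun i hi => wSV i hi j hj,
        Finset.sum_congr rfl fun i hi => wTV i hi j hj,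
        Finset.sum_congr rfl fun i hi => wQV i hi j hj, ← Finset.sum_div, Finset.sum_sub_distrib,
        ← Finset.mul_sum, hτ, Finset.sum_const, nsmul_eq_mul]
      simp only [Finset.sum_const_zero]
      field_simp
      ring
  · intro i j h
    simp only [W] at h
    split_ifs at h with h1 h2 h3 h4 h5 h6 h7
    · exact Or.inl ⟨Finset.mem_union_left _ h1, h2, right_ne_zero_of_mul h⟩
    · exact Or.inr (Or.inl ⟨h1, h3⟩)
    · exact absurd rfl h
    · exact Or.inl ⟨Finset.mem_union_right _ h4, h5, fun h0 => h (by rw [h0, zero_div])⟩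
    · exact absurd rfl h
    · exact Or.inr (Or.inr ⟨h6, h7⟩)
    · exact absurd rfl h
    · exact absurd rfl h

theorem exists_doubly_stochastic_of_approx {S T Q E V : Finset ℕ} (hST : Disjoint S T)
    (hSQ : Disjoint S Q) (hTQ : Disjoint T Q) (hEV : Disjoint E V) (hQV : Q.card = V.card)
    (hQ : 0 < Q.card) (hTle : T.card ≤ Q.card) (hSle : 3 * Q.card ≤ S.card)
    (hcard : S.card + T.card = E.card) {B : ℕ → ℕ → ℝ} (hB : ∀ i j, 0 ≤ B i j) {η b ν : ℝ}
    (hη0 : 0 ≤ η) (hη : η ≤ 1 / 4) (hb0 : 0 ≤ b) (hb : ∀ i ∈ S ∪ T, ∀ j ∈ E ∪ V, B i j ≤ b)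
    (hrow : ∀ i ∈ S ∪ T, |∑ j ∈ E ∪ V, B i j - 1| ≤ η)
    (hcol : ∀ j ∈ E ∪ V, |∑ i ∈ S ∪ T ∪ Q, B i j - 1| ≤ η)
    (hSV : ∀ i ∈ S, ∀ j ∈ V, ν ≤ B i j) (hQE : ∀ i ∈ Q, ∀ j ∈ E, ν ≤ B i j)
    (hηb : η + Q.card * b ≤ 1 / 2) (hν : 6 * η + 2 * (Q.card * b) ^ 2 ≤ Q.card * ν) :
    ∃ (τ : ℝ) (W : ℕ → ℕ → ℝ), 0 < τ ∧ τ ≤ 1 + 4 * η ∧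
      τ * ∑ i ∈ S, ∑ j ∈ E, B i j = S.card - Q.card ∧
      (∀ i j, 0 ≤ W i j) ∧ (∀ i ∈ S ∪ T ∪ Q, ∑ j ∈ E ∪ V, W i j = 1) ∧
      (∀ j ∈ E ∪ V, ∑ i ∈ S ∪ T ∪ Q, W i j = 1) ∧ (∀ i ∈ S, ∀ j ∈ E, W i j = τ * B i j) ∧
      ∀ i j, W i j ≠ 0 →
        (i ∈ S ∪ T ∧ j ∈ E ∧ B i j ≠ 0) ∨ (i ∈ S ∧ j ∈ V) ∨ (i ∈ Q ∧ j ∈ E) := by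
  set u : ℝ := (Q.card : ℝ) with hu
  have hu0 : 0 < u := by rw [hu]; exact_mod_cast hQ
  have hTu : (T.card : ℝ) ≤ u := by rw [hu]; exact_mod_cast hTle
  have hSu : 3 * u ≤ S.card := by rw [hu]; exact_mod_cast hSle
  have hVu : (V.card : ℝ) = u := by rw [hu, hQV]
  set M := ∑ i ∈ S, ∑ j ∈ E, B i j with hM
  have hrow' : ∀ i ∈ S ∪ T, ∑ j ∈ E, B i j + ∑ j ∈ V, B i j ≤ 1 + η ∧
      1 - η ≤ ∑ j ∈ E, B i j + ∑ j ∈ V, B i j := fun i hi => by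
    have := abs_le.1 (hrow i hi)
    rw [Finset.sum_union hEV] at this
    constructor <;> linarith
  have hcol' : ∀ j ∈ E ∪ V, ∑ i ∈ S, B i j + ∑ i ∈ T, B i j + ∑ i ∈ Q, B i j ≤ 1 + η :=
    fun j hj => by
    have := abs_le.1 (hcol j hj)
    rw [Finset.sum_union (Finset.disjoint_union_left.2 ⟨hSQ, hTQ⟩), Finset.sum_union hST] at this
    linarith
  have hMle : S.card * (1 - η) - u * (1 + η) ≤ M := by
    have h1 : S.card * (1 - η) ≤ ∑ i ∈ S, (∑ j ∈ E, B i j + ∑ j ∈ V, B i j) := by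
      rw [← nsmul_eq_mul]
      exact Finset.card_nsmul_le_sum _ _ _ fun i hi => (hrow' i (Finset.mem_union_left _ hi)).2
    have h2 : ∑ j ∈ V, ∑ i ∈ S, B i j ≤ u * (1 + η) := by
      rw [← hVu, ← nsmul_eq_mul]
      refine Finset.sum_le_card_nsmul _ _ _ fun j hj => ?_
      have := hcol' j (Finset.mem_union_right _ hj)
      have h3 := Finset.sum_nonneg fun i (_ : i ∈ T) => hB i j
      have h4 := Finset.sum_nonneg fun i (_ : i ∈ Q) => hB i j
      linarith
    rw [Finset.sum_add_distrib, Finset.sum_comm (s := S) (t := V)] at h1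
    linarith
  have hM0 : 0 < M := by nlinarith
  have hτM : (S.card - u) / M * M = S.card - u := div_mul_cancel₀ _ hM0.ne'
  have hτ0 : 0 < (S.card - u) / M := div_pos (by linarith) hM0
  have hτ1 : (S.card - u) / M ≤ 1 + 4 * η := by
    rw [div_le_iff₀ hM0]
    have : 0 ≤ η * (S.card * (3 - 4 * η) - u * (5 + 4 * η)) :=
      mul_nonneg hη0 (by nlinarith)
    nlinarith
  set τ := (S.card - u) / M
  have hscale : ∀ y, 0 ≤ y → y ≤ 1 + η - u * ν → τ * y + 2 * (u * b) ^ 2 ≤ 1 := by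
    intro y hy0 hy
    have h1 : τ * y ≤ (1 + 4 * η) * (1 + η - u * ν) := by gcongr
    have : 0 ≤ u * ν := by nlinarith [sq_nonneg (u * b)]
    nlinarith
  have hSrow : ∀ i ∈ S, τ * ∑ j ∈ E, B i j ≤ 1 := by
    intro i hi
    have h1 := (hrow' i (Finset.mem_union_left _ hi)).1
    have h2 : u * ν ≤ ∑ j ∈ V, B i j := by
      rw [← hVu, ← nsmul_eq_mul]
      exact Finset.card_nsmul_le_sum _ _ _ fun j hj => hSV i hi j hj
    have := hscale (∑ j ∈ E, B i j) (Finset.sum_nonneg fun j _ => hB i j) (by linarith)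
    nlinarith [sq_nonneg (u * b)]
  have hTrow : ∀ i ∈ T, 1 - η - u * b ≤ ∑ j ∈ E, B i j := by
    intro i hi
    have hi' := Finset.mem_union_right S hi
    have h1 := (hrow' i hi').2
    have h2 : ∑ j ∈ V, B i j ≤ u * b := by
      rw [← hVu, ← nsmul_eq_mul]
      exact Finset.sum_le_card_nsmul _ _ _ fun j hj => hb i hi' j (Finset.mem_union_right _ hj)
    linarith
  refine ⟨τ, (exists_doubly_stochastic_completion hST hSQ hTQ hEV hQV hQ hcard hB hτ0.le hτM hSrow
    (fun i hi => lt_of_lt_of_le (by linarith) (hTrow i hi)) fun j hj => ?_).imp fun W hW =>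
      ⟨hτ0, hτ1, hτM, hW⟩⟩
  have hj' := Finset.mem_union_left V hj
  set y := ∑ i ∈ T, B i j with hy
  have hy0 : 0 ≤ y := Finset.sum_nonneg fun i _ => hB i j
  have hyb : y ≤ u * b := by
    refine (Finset.sum_le_card_nsmul _ _ _ fun i hi =>
      hb i (Finset.mem_union_right _ hi) j hj').trans ?_
    rw [nsmul_eq_mul]
    gcongr
  have h1 : u * ν ≤ ∑ i ∈ Q, B i j := by
    rw [hu, ← nsmul_eq_mul]
    exact Finset.card_nsmul_le_sum _ _ _ fun i hi => hQE i hi j hj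
  have h2 := hcol' j hj'
  have h3 : ∑ i ∈ T, B i j / ∑ k ∈ E, B i k ≤ y * (1 + 2 * (η + u * b)) := by
    rw [hy, Finset.sum_mul]
    refine Finset.sum_le_sum fun i hi => ?_
    have h4 := hTrow i hi
    have h5 : 0 ≤ u * b := mul_nonneg hu0.le hb0
    rw [div_eq_mul_one_div]
    refine mul_le_mul_of_nonneg_left ?_ (hB i j)
    rw [div_le_iff₀ (by linarith)]
    nlinarith
  have hS0 : 0 ≤ ∑ i ∈ S, B i j := Finset.sum_nonneg fun i _ => hB i j
  have h6 : τ * ∑ i ∈ S, B i j ≤ (1 + 4 * η) * (1 + η - u * ν - y) :=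
    mul_le_mul hτ1 (by linarith) hS0 (by linarith)
  have h7 : y * (u * b) ≤ (u * b) ^ 2 := by
    rw [sq]
    exact mul_le_mul_of_nonneg_right hyb (mul_nonneg hu0.le hb0)
  have h8 : 0 ≤ u * ν := by nlinarith [sq_nonneg (u * b)]
  nlinarith [mul_nonneg hη0 hy0]

theorem sub_sum_le_sum_negMulLog {S E : Finset ℕ} {w : ℕ → ℕ → ℝ} {L : ℝ} {y : ℕ → ℝ}
    (hrow : ∀ i ∈ S, ∑ j ∈ E, w i j ≤ 1)
    (hcol : ∀ j ∈ E, ∑ i ∈ S, w i j ≤ 1) (hy : ∀ i, 0 ≤ y i)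
    (h : ∀ i ∈ S, ∀ j ∈ E, w i j * (L - y i - y j) ≤ negMulLog (w i j)) :
    L * ∑ i ∈ S, ∑ j ∈ E, w i j - ∑ i ∈ S, y i - ∑ j ∈ E, y j ≤
      ∑ i ∈ S, ∑ j ∈ E, negMulLog (w i j) := by
  have h1 : ∑ i ∈ S, y i * ∑ j ∈ E, w i j ≤ ∑ i ∈ S, y i :=
    Finset.sum_le_sum fun i hi => mul_le_of_le_one_right (hy i) (hrow i hi)
  have h2 : ∑ j ∈ E, y j * ∑ i ∈ S, w i j ≤ ∑ j ∈ E, y j :=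
    Finset.sum_le_sum fun j hj => mul_le_of_le_one_right (hy j) (hcol j hj)
  have h3 : ∑ i ∈ S, ∑ j ∈ E, w i j * (L - y i - y j) = L * ∑ i ∈ S, ∑ j ∈ E, w i j -
      ∑ i ∈ S, y i * ∑ j ∈ E, w i j - ∑ j ∈ E, y j * ∑ i ∈ S, w i j := by
    simp_rw [Finset.mul_sum]
    rw [Finset.sum_comm (s := E) (t := S)]
    simp_rw [← Finset.sum_sub_distrib]
    exact Finset.sum_congr rfl fun i _ => Finset.sum_congr rfl fun j _ => by ring
  have h4 := Finset.sum_le_sum fun i hi => Finset.sum_le_sum fun j hj => h i hi j hj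
  linarith

/-- The even numbers up to `n`. -/
def evenClass (n : ℕ) : Finset ℕ := {j ∈ Finset.Ioc 0 n | 2 ∣ j}

/-- The odd numbers up to `n`, without `1` when `n` is odd, so that there are as many of them as
even numbers. -/
def oddClass (n : ℕ) : Finset ℕ := {j ∈ Finset.Ioc 0 n | ¬2 ∣ j ∧ (2 ∣ n ∨ j ≠ 1)}

theorem mem_evenClass {n j : ℕ} : j ∈ evenClass n ↔ (0 < j ∧ j ≤ n) ∧ 2 ∣ j := by
  simp [evenClass]

theorem mem_oddClass {n j : ℕ} : j ∈ oddClass n ↔ (0 < j ∧ j ≤ n) ∧ ¬2 ∣ j ∧ (2 ∣ n ∨ j ≠ 1) := by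
  simp [oddClass]

theorem card_filter_dvd_evenClass {n d : ℕ} (hd : Odd d) :
    ((evenClass n).filter (d ∣ ·)).card = n / (2 * d) := by
  rw [← Nat.Ioc_filter_dvd_card_eq_div, evenClass, Finset.filter_filter]
  congr 1
  ext j
  simp only [Finset.mem_filter, and_congr_right_iff]
  have hcop : Nat.Coprime 2 d := (Nat.coprime_two_left).2 hd
  exact fun _ => ⟨fun h => hcop.mul_dvd_of_dvd_of_dvd h.1 h.2, fun h =>
    ⟨(Dvd.intro _ rfl).trans h, (Dvd.intro_left _ rfl).trans h⟩⟩

theorem card_filter_dvd_odd {n d : ℕ} (hd : Odd d) :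
    ((Finset.Ioc 0 n).filter fun j => ¬2 ∣ j ∧ d ∣ j).card + n / (2 * d) = n / d := by
  rw [← card_filter_dvd_evenClass hd, ← Nat.Ioc_filter_dvd_card_eq_div n d, evenClass,
    Finset.filter_filter, add_comm,
    ← Finset.card_filter_add_card_filter_not (s := (Finset.Ioc 0 n).filter (d ∣ ·)) (2 ∣ ·),
    Finset.filter_filter, Finset.filter_filter]
  simp only [and_comm]

theorem card_filter_dvd_oddClass {n d : ℕ} :
    ((oddClass n).filter (d ∣ ·)).card + (if ¬2 ∣ n ∧ d = 1 then 1 else 0) =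
      ((Finset.Ioc 0 n).filter fun j => ¬2 ∣ j ∧ d ∣ j).card := by
  split_ifs with h
  · obtain ⟨hn, rfl⟩ := h
    have h1 : 1 ∈ (Finset.Ioc 0 n).filter fun j => ¬2 ∣ j ∧ 1 ∣ j := by
      simp only [Finset.mem_filter, Finset.mem_Ioc]
      omega
    rw [← Finset.card_erase_add_one h1, oddClass, Finset.filter_filter]
    congr 2
    ext j
    simp only [Finset.mem_filter, Finset.mem_Ioc, Finset.mem_erase, hn]
    simp
    tauto
  · rw [add_zero, oddClass, Finset.filter_filter]
    congr 1
    ext j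
    simp only [Finset.mem_filter, Finset.mem_Ioc, and_congr_right_iff]
    refine fun hj => ⟨fun h1 => ⟨h1.1.1, h1.2⟩, fun h1 => ⟨⟨h1.1, ?_⟩, h1.2⟩⟩
    by_contra! h2
    exact h ⟨h2.1, Nat.dvd_one.1 (h2.2 ▸ h1.2)⟩

theorem card_evenClass (n : ℕ) : (evenClass n).card = n / 2 := by
  simpa using card_filter_dvd_evenClass (n := n) odd_one

theorem card_oddClass (n : ℕ) : (oddClass n).card = n / 2 := by
  have h1 := card_filter_dvd_oddClass (n := n) (d := 1)
  have h2 := card_filter_dvd_odd (n := n) odd_one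
  simp only [one_dvd, Finset.filter_true, and_true] at h1 h2
  split_ifs at h1 <;> omega

theorem abs_natCast_div_sub_le (n d : ℕ) : |((n / d : ℕ) : ℝ) - n / d| ≤ 1 := by
  rcases d.eq_zero_or_pos with rfl | hd
  · simp
  have h1 : ((n / d : ℕ) : ℝ) ≤ n / d := Nat.cast_div_le
  have h2 : (n : ℝ) / d < (n / d : ℕ) + 1 := by
    rw [div_lt_iff₀ (by positivity)]
    exact_mod_cast (Nat.div_lt_iff_lt_mul hd).1 (Nat.lt_succ_self (n / d))
  rw [abs_le]
  constructor <;> linarith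

theorem abs_card_filter_dvd_evenClass {n d : ℕ} (hd : Odd d) :
    |(((evenClass n).filter (d ∣ ·)).card : ℝ) - n / (2 * d)| ≤ 2 := by
  rw [card_filter_dvd_evenClass hd]
  have := abs_natCast_div_sub_le n (2 * d)
  push_cast at this
  linarith

theorem abs_card_filter_dvd_oddClass {n d : ℕ} (hd : Odd d) :
    |(((oddClass n).filter (d ∣ ·)).card : ℝ) - n / (2 * d)| ≤ 2 := by
  have h1 := card_filter_dvd_oddClass (n := n) (d := d)
  have h2 := card_filter_dvd_odd (n := n) hd
  have hd0 : 0 < d := hd.pos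
  have h3 : (n / (2 * d) : ℕ) = (n / d) / 2 := by rw [mul_comm, Nat.div_div_eq_div_mul]
  have h4 : |((n / d : ℕ) : ℝ) - n / d| ≤ 1 := abs_natCast_div_sub_le n d
  have h5 : (n / d : ℕ) - 1 ≤ 2 * (((oddClass n).filter (d ∣ ·)).card + 1) := by
    split_ifs at h1 <;> omega
  have h6 : 2 * ((oddClass n).filter (d ∣ ·)).card ≤ (n / d : ℕ) + 1 := by
    split_ifs at h1 <;> omega
  have h7 : ((n / d : ℕ) : ℝ) ≤ 2 * (((oddClass n).filter (d ∣ ·)).card + 1) + 1 := by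
    exact_mod_cast Nat.sub_le_iff_le_add.1 h5
  have h8 : 2 * (((oddClass n).filter (d ∣ ·)).card : ℝ) ≤ (n / d : ℕ) + 1 := by
    exact_mod_cast h6
  have h9 : (n : ℝ) / (2 * d) = n / d / 2 := by rw [div_div, mul_comm]
  rw [h9, abs_le]
  have := abs_le.1 h4
  constructor <;> linarith

theorem kernel_comm (n i j : ℕ) : kernel n i j = kernel n j i := by
  simp only [kernel, Nat.coprime_comm (n := i)]
  split_ifs <;> ring

theorem kernel_nonneg (n i j : ℕ) : 0 ≤ kernel n i j := by
  have h1 := half_le_density n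
  have h2 := one_le_weight n i
  have h3 := one_le_weight n j
  unfold kernel
  split_ifs
  · positivity
  · exact le_rfl

theorem kernel_le {n i j : ℕ} {G : ℝ} (hi : weight n i ≤ G) (hj : weight n j ≤ G) :
    kernel n i j ≤ 2 * G ^ 2 / n := by
  have h0 := half_le_density n
  have h1 := density_le_one n
  have h2 := one_le_weight n i
  have h3 := one_le_weight n j
  have h4 : 0 ≤ G := by linarith
  unfold kernel
  split_ifs
  · calc 2 * density n * weight n i * weight n j / n ≤ 2 * 1 * G * G / n := by gcongr
      _ = _ := by ring
  · positivity

theorem inv_le_kernel {n i j : ℕ} (h : i.Coprime j) : 1 / (n : ℝ) ≤ kernel n i j := by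
  have h0 := half_le_density n
  have h2 := one_le_weight n i
  have h3 := one_le_weight n j
  rw [kernel, if_pos h]
  gcongr
  nlinarith [mul_nonneg (sub_nonneg.2 h2) (sub_nonneg.2 h3)]

theorem coprime_of_ne_zero_kernel {n i j : ℕ} (h : kernel n i j ≠ 0) : i.Coprime j := by
  by_contra h1
  exact h (by rw [kernel, if_neg h1])

theorem mul_le_negMulLog_mul_kernel {n : ℕ} (hn : n ≠ 0) {τ η : ℝ} (hτ : 0 < τ)
    (hτη : τ ≤ 1 + 4 * η) (i j : ℕ) :
    τ * kernel n i j * (log (n / (2 * density n)) - 4 * η - log (weight n i) - log (weight n j)) ≤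
      negMulLog (τ * kernel n i j) := by
  have h0 : 0 < density n := by linarith [half_le_density n]
  have h2 : 0 < weight n i := by linarith [one_le_weight n i]
  have h3 : 0 < weight n j := by linarith [one_le_weight n j]
  have hn0 : (0 : ℝ) < n := by positivity
  by_cases h : i.Coprime j
  · rw [negMulLog, neg_mul_comm]
    refine mul_le_mul_of_nonneg_left ?_ (mul_nonneg hτ.le (kernel_nonneg n i j))
    have h4 := log_le_sub_one_of_pos hτ
    rw [kernel, if_pos h, log_mul hτ.ne' (by positivity), log_div (by positivity) hn0.ne',
      log_mul (by positivity) h3.ne', log_mul (by positivity) h2.ne',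
      log_div hn0.ne' (by positivity)]
    linarith
  · simp [kernel, h]

theorem sum_fin_eq_sum_Ioc (n : ℕ) (f : ℕ → ℝ) :
    ∑ i : Fin n, f (i + 1) = ∑ i ∈ Finset.Ioc 0 n, f i := by
  rw [Fin.sum_univ_eq_sum_range (fun i => f (i + 1)) n, Finset.range_eq_Ico,
    Finset.sum_Ico_add' f 0 n 1]
  rfl

/-- The symmetrization of a matrix supported on `oddClass n × evenClass n`, with a fixed point at
`1` when `n` is odd. -/
noncomputable def symmetrize (n : ℕ) (W : ℕ → ℕ → ℝ) (i j : ℕ) : ℝ :=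
  W i j + W j i + if i = 1 ∧ j = 1 ∧ ¬2 ∣ n then 1 else 0

theorem symmetrize_comm (n : ℕ) (W : ℕ → ℕ → ℝ) (i j : ℕ) :
    symmetrize n W i j = symmetrize n W j i := by
  simp only [symmetrize, and_left_comm]
  ring

theorem disjoint_oddClass_evenClass (n : ℕ) : Disjoint (oddClass n) (evenClass n) :=
  Finset.disjoint_left.2 fun _ h1 h2 => (mem_oddClass.1 h1).2.1 (mem_evenClass.1 h2).2

theorem oddClass_subset (n : ℕ) : oddClass n ⊆ Finset.Ioc 0 n := Finset.filter_subset _ _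

theorem evenClass_subset (n : ℕ) : evenClass n ⊆ Finset.Ioc 0 n := Finset.filter_subset _ _

theorem sum_symmetrize {n : ℕ} {W : ℕ → ℕ → ℝ}
    (hrow : ∀ i ∈ oddClass n, ∑ j ∈ evenClass n, W i j = 1)
    (hcol : ∀ j ∈ evenClass n, ∑ i ∈ oddClass n, W i j = 1)
    (hW : ∀ i j, W i j ≠ 0 → i ∈ oddClass n ∧ j ∈ evenClass n) {i : ℕ} (hi : i ∈ Finset.Ioc 0 n) :
    ∑ j ∈ Finset.Ioc 0 n, symmetrize n W i j = 1 := by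
  have hi' := Finset.mem_Ioc.1 hi
  have hdis := Finset.disjoint_left.1 (disjoint_oddClass_evenClass n)
  have hW1 : ∀ i j, i ∉ oddClass n → W i j = 0 := fun i j h => by
    by_contra h1
    exact h (hW i j h1).1
  have hW2 : ∀ i j, j ∉ evenClass n → W i j = 0 := fun i j h => by
    by_contra h1
    exact h (hW i j h1).2
  simp only [symmetrize, Finset.sum_add_distrib]
  rw [← Finset.sum_subset (evenClass_subset n) fun j _ h => hW2 i j h,
    ← Finset.sum_subset (oddClass_subset n) fun j _ h => hW1 j i h]
  by_cases h1 : i ∈ oddClass n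
  · rw [hrow i h1, Finset.sum_eq_zero fun j _ => hW2 j i (hdis h1), Finset.sum_eq_zero, add_zero,
      add_zero]
    intro j _
    refine if_neg fun h => ?_
    have := (mem_oddClass.1 h1).2.2
    tauto
  · rw [Finset.sum_eq_zero fun j _ => hW1 i j h1]
    by_cases h2 : i ∈ evenClass n
    · rw [hcol i h2, Finset.sum_eq_zero, add_zero, zero_add]
      intro j _
      refine if_neg fun h => ?_
      have := (mem_evenClass.1 h2).2
      omega
    · rw [Finset.sum_eq_zero fun j _ => hW2 j i h2]
      have h3 : i = 1 ∧ ¬2 ∣ n := by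
        rw [mem_oddClass] at h1
        rw [mem_evenClass] at h2
        tauto
      obtain ⟨rfl, h3⟩ := h3
      simp only [true_and, h3, not_false_eq_true, and_true, Finset.sum_ite_eq', hi, if_true,
        add_zero, zero_add]

theorem exp_entropy_symmetrize_le {n : ℕ} {W : ℕ → ℕ → ℝ} (hW0 : ∀ i j, 0 ≤ W i j)
    (hrow : ∀ i ∈ oddClass n, ∑ j ∈ evenClass n, W i j = 1)
    (hcol : ∀ j ∈ evenClass n, ∑ i ∈ oddClass n, W i j = 1)
    (hW : ∀ i j, W i j ≠ 0 → i ∈ oddClass n ∧ j ∈ evenClass n ∧ i.Coprime j)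
    {S E : Finset ℕ} (hS : S ⊆ oddClass n) (hE : E ⊆ evenClass n) :
    exp (2 * ∑ i ∈ S, ∑ j ∈ E, negMulLog (W i j) - n) ≤ (coprimePermCount n : ℝ) := by
  have hsum : ∀ i ∈ Finset.Ioc 0 n, ∑ j ∈ Finset.Ioc 0 n, symmetrize n W i j = 1 := fun i =>
    sum_symmetrize hrow hcol fun i j h => ⟨(hW i j h).1, (hW i j h).2.1⟩
  have hmem : ∀ i : Fin n, (i : ℕ) + 1 ∈ Finset.Ioc 0 n := fun i => by
    rw [Finset.mem_Ioc]
    omega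
  have hD0 : ∀ i j, 0 ≤ symmetrize n W i j := fun i j => by
    unfold symmetrize
    have h1 := hW0 i j
    have h2 := hW0 j i
    split_ifs <;> positivity
  have hD1 : ∀ i ∈ Finset.Ioc 0 n, ∀ j ∈ Finset.Ioc 0 n, symmetrize n W i j ≤ 1 :=
    fun i hi j hj => by
      rw [← hsum i hi]
      exact Finset.single_le_sum (fun j _ => hD0 i j) hj
  have hR : ∀ i j, symmetrize n W i j ≠ 0 → i.Coprime j := by
    intro i j h
    by_contra hc
    refine h ?_
    have h1 : W i j = 0 := by
      by_contra h1
      exact hc (hW i j h1).2.2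
    have h2 : W j i = 0 := by
      by_contra h1
      exact hc (hW j i h1).2.2.symm
    rw [symmetrize, h1, h2, if_neg, add_zero, add_zero]
    rintro ⟨rfl, rfl, -⟩
    exact hc (Nat.coprime_one_left 1)
  have hmain := exp_entropy_sub_le_card_perm (n := n)
    (R := fun i j => Nat.gcd (i.1 + 1) (j.1 + 1) = 1)
    (D := fun i j => symmetrize n W (i + 1) (j + 1)) (fun i j => hD0 _ _)
    (fun i => by
      rw [sum_fin_eq_sum_Ioc n fun j => symmetrize n W (i + 1) j]
      exact hsum _ (hmem i))
    (fun j => by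
      simp_rw [symmetrize_comm n W _ (j + 1)]
      rw [sum_fin_eq_sum_Ioc n fun i => symmetrize n W (j + 1) i]
      exact hsum _ (hmem j))
    fun i j h => hR _ _ h
  refine le_trans (Real.exp_le_exp.2 (sub_le_sub_right ?_ _)) hmain
  have hSE : ∀ i ∈ S, ∀ j ∈ E, symmetrize n W i j = W i j := by
    intro i hi j hj
    have h1 := mem_evenClass.1 (hE hj)
    have h2 : W j i = 0 := by
      by_contra h2
      exact (mem_oddClass.1 (hW j i h2).1).2.1 h1.2
    rw [symmetrize, h2, if_neg (by omega), add_zero, add_zero]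
  have hdis : Disjoint S E := (disjoint_oddClass_evenClass n).mono hS hE
  have hSI : S ⊆ Finset.Ioc 0 n := hS.trans (oddClass_subset n)
  have hEI : E ⊆ Finset.Ioc 0 n := hE.trans (evenClass_subset n)
  have hneg : ∀ i ∈ Finset.Ioc 0 n, ∀ j ∈ Finset.Ioc 0 n, 0 ≤ negMulLog (symmetrize n W i j) :=
    fun i hi j hj => negMulLog_nonneg (hD0 i j) (hD1 i hi j hj)
  have hle : ∀ A ⊆ Finset.Ioc 0 n, ∀ i ∈ Finset.Ioc 0 n, ∑ j ∈ A, negMulLog (symmetrize n W i j) ≤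
      ∑ j ∈ Finset.Ioc 0 n, negMulLog (symmetrize n W i j) := fun A hA i hi =>
    Finset.sum_le_sum_of_subset_of_nonneg hA fun j hj _ => hneg i hi j hj
  calc 2 * ∑ i ∈ S, ∑ j ∈ E, negMulLog (W i j)
      = ∑ i ∈ S, ∑ j ∈ E, negMulLog (symmetrize n W i j) +
        ∑ i ∈ E, ∑ j ∈ S, negMulLog (symmetrize n W i j) := by
        rw [Finset.sum_comm (s := E) (t := S), two_mul]
        congr 1 <;> refine Finset.sum_congr rfl fun i hi => Finset.sum_congr rfl fun j hj => ?_
        · rw [hSE i hi j hj]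
        · rw [symmetrize_comm, hSE i hi j hj]
    _ ≤ ∑ i ∈ S, ∑ j ∈ Finset.Ioc 0 n, negMulLog (symmetrize n W i j) +
        ∑ i ∈ E, ∑ j ∈ Finset.Ioc 0 n, negMulLog (symmetrize n W i j) :=
        add_le_add (Finset.sum_le_sum fun i hi => hle E hEI i (hSI hi))
          (Finset.sum_le_sum fun i hi => hle S hSI i (hEI hi))
    _ = ∑ i ∈ S ∪ E, ∑ j ∈ Finset.Ioc 0 n, negMulLog (symmetrize n W i j) :=
        (Finset.sum_union hdis).symm
    _ ≤ ∑ i ∈ Finset.Ioc 0 n, ∑ j ∈ Finset.Ioc 0 n, negMulLog (symmetrize n W i j) :=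
        Finset.sum_le_sum_of_subset_of_nonneg (Finset.union_subset hSI hEI) fun i hi _ =>
          Finset.sum_nonneg fun j hj => hneg i hi j hj
    _ = _ := by
        rw [← sum_fin_eq_sum_Ioc n fun i => ∑ j ∈ Finset.Ioc 0 n, negMulLog (symmetrize n W i j)]
        refine Finset.sum_congr rfl fun i _ => ?_
        rw [← sum_fin_eq_sum_Ioc n fun j => negMulLog (symmetrize n W (i + 1) j)]

theorem exp_le_coprimePermCount {n : ℕ} (hn : 12 ≤ n) {Q : Finset ℕ} (hQp : ∀ q ∈ Q, q.Prime)
    (hQ : ∀ q ∈ Q, n < 4 * q ∧ 2 * q ≤ n) (hQ0 : 0 < Q.card) (hQn : 5 * Q.card ≤ n / 2)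
    {G η : ℝ} (hG : ∀ m ∈ Finset.Ioc 0 n, 2 ^ ((oddPrimes n).filter (· ∣ m)).card ≤ G)
    (hηG : η = 8 * G ^ 2 / √n) (hη : η ≤ 1 / 4) (hηb : η + Q.card * (2 * G ^ 2 / n) ≤ 1 / 2)
    (hν : 6 * η + 2 * (Q.card * (2 * G ^ 2 / n)) ^ 2 ≤ Q.card * (1 / n)) :
    exp (n * log (n / (2 * density n)) - 8 * Q.card * log n - 4 * η * n -
      2 * ∑ m ∈ Finset.Ioc 0 n, log (weight n m) - n) ≤ (coprimePermCount n : ℝ) := by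
  classical
  set S := (oddClass n).filter fun i => ∀ q ∈ Q, ¬q ∣ i with hSdef
  set T := (oddClass n).filter fun i => i ∉ Q ∧ ∃ q ∈ Q, q ∣ i with hTdef
  set V := Q.image (2 * ·) with hVdef
  set E := evenClass n \ V with hEdef
  have hn0 : (0 : ℝ) < n := by exact_mod_cast (by omega : 0 < n)
  have hQO : Q ⊆ oddClass n := by
    intro q hq
    have h1 := hQ q hq
    have h2 := (hQp q hq).eq_one_or_self_of_dvd 2
    rw [mem_oddClass]
    omega
  have hQodd : ∀ q ∈ Q, ¬2 ∣ q := fun q hq => (mem_oddClass.1 (hQO hq)).2.1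
  have hVE : V ⊆ evenClass n := by
    intro v hv
    obtain ⟨q, hq, rfl⟩ := Finset.mem_image.1 hv
    have h1 := hQ q hq
    rw [mem_evenClass]
    omega
  have hVcard : Q.card = V.card :=
    (Finset.card_image_of_injective _ fun a b h => by simpa using h).symm
  have hST : Disjoint S T := by
    rw [Finset.disjoint_left]
    intro i h1 h2
    obtain ⟨-, -, q, hq, hqi⟩ := Finset.mem_filter.1 h2
    exact (Finset.mem_filter.1 h1).2 q hq hqi
  have hSQ : Disjoint S Q := by
    rw [Finset.disjoint_left]
    exact fun i h1 h2 => (Finset.mem_filter.1 h1).2 i h2 dvd_rfl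
  have hTQ : Disjoint T Q := by
    rw [Finset.disjoint_left]
    exact fun i h1 h2 => (Finset.mem_filter.1 h1).2.1 h2
  have hO : S ∪ T ∪ Q = oddClass n := by
    ext i
    simp only [Finset.mem_union, hSdef, hTdef, Finset.mem_filter]
    constructor
    · rintro ((h | h) | h)
      exacts [h.1, h.1, hQO h]
    · intro h
      by_cases h1 : i ∈ Q
      · exact Or.inr h1
      · by_cases h2 : ∃ q ∈ Q, q ∣ i
        · exact Or.inl (Or.inr ⟨h, h1, h2⟩)
        · push Not at h2
          exact Or.inl (Or.inl ⟨h, h2⟩)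
  have hEV' : E ∪ V = evenClass n := Finset.sdiff_union_of_subset hVE
  have hEV : Disjoint E V := Finset.sdiff_disjoint
  have hTle : T.card ≤ Q.card := by
    have : T ⊆ Q.image (3 * ·) := by
      intro i hi
      obtain ⟨h1, h2, q, hq, k, rfl⟩ := Finset.mem_filter.1 hi
      have h3 := hQ q hq
      obtain ⟨⟨h4, h5⟩, h6, -⟩ := mem_oddClass.1 h1
      have hk : k < 4 := by
        by_contra! hk
        nlinarith
      refine Finset.mem_image.2 ⟨q, hq, ?_⟩
      interval_cases k
      · omega
      · simp only [mul_one] at h2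
        exact absurd hq h2
      · omega
      · ring
    exact (Finset.card_le_card this).trans Finset.card_image_le
  have hOcard : S.card + T.card + Q.card = n / 2 := by
    rw [← card_oddClass, ← hO, Finset.card_union_of_disjoint
      (Finset.disjoint_union_left.2 ⟨hSQ, hTQ⟩), Finset.card_union_of_disjoint hST]
  have hEcard : E.card + V.card = n / 2 := by
    rw [← card_evenClass, ← hEV', Finset.card_union_of_disjoint hEV]
  have hw : ∀ m ∈ Finset.Ioc 0 n, weight n m ≤ G := fun m hm => weight_le.trans (hG m hm)
  have hOI := oddClass_subset n
  have hEI := evenClass_subset n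
  have hSTO : S ∪ T ⊆ oddClass n := hO ▸ Finset.subset_union_left
  have hcop_odd : ∀ i ∈ oddClass n, ∀ q ∈ Q, ¬q ∣ i → i.Coprime (2 * q) := fun i hi q hq h =>
    Nat.Coprime.mul_right
      (((Nat.prime_two.coprime_iff_not_dvd).2 (mem_oddClass.1 hi).2.1).symm)
      ((((hQp q hq).coprime_iff_not_dvd).2 h).symm)
  have hcopSV : ∀ i ∈ S, ∀ j ∈ V, i.Coprime j := by
    intro i hi j hj
    obtain ⟨q, hq, rfl⟩ := Finset.mem_image.1 hj
    obtain ⟨h1, h2⟩ := Finset.mem_filter.1 hi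
    exact hcop_odd i h1 q hq (h2 q hq)
  have hcopQE : ∀ i ∈ Q, ∀ j ∈ E, i.Coprime j := by
    intro q hq j hj
    obtain ⟨h1, h2⟩ := Finset.mem_sdiff.1 hj
    obtain ⟨⟨h3, h4⟩, h5⟩ := mem_evenClass.1 h1
    refine ((hQp q hq).coprime_iff_not_dvd).2 ?_
    rintro ⟨k, rfl⟩
    have h6 := hQ q hq
    have h7 := hQodd q hq
    have hk : k < 4 := by
      by_contra! hk
      nlinarith
    interval_cases k
    · omega
    · omega
    · exact h2 (Finset.mem_image.2 ⟨q, hq, by ring⟩)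
    · omega
  have hη0 : 0 ≤ η := hηG ▸ by positivity
  have hmne : ∀ m ∈ Finset.Ioc 0 n, m ≠ 0 ∧ m ≤ n := fun m hm => by
    rw [Finset.mem_Ioc] at hm
    omega
  obtain ⟨τ, W, hτ0, hτ1, hτM, hW0, hWrow, hWcol, hWS, hWsupp⟩ :=
    exists_doubly_stochastic_of_approx (B := kernel n) (η := η) (b := 2 * G ^ 2 / n)
      (ν := 1 / n) hST hSQ hTQ hEV hVcard hQ0 hTle (by omega) (by omega) (kernel_nonneg n)
      hη0 hη (by positivity)
      (fun i hi j hj => kernel_le (hw i (hOI (hSTO hi))) (hw j (hEI (hEV' ▸ hj))))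
      (fun i hi => by
        have h1 := hSTO hi
        obtain ⟨h2, h3⟩ := hmne i (hOI h1)
        rw [hEV', hηG]
        exact abs_sum_kernel_sub_one_le h2 h3 (fun j _ h => (mem_oddClass.1 h1).2.1 h.1)
          (fun d hd => abs_card_filter_dvd_evenClass hd) (hG i (hOI h1)))
      (fun j hj => by
        rw [hEV'] at hj
        obtain ⟨h2, h3⟩ := hmne j (hEI hj)
        rw [hO, hηG]
        simp_rw [kernel_comm n _ j]
        exact abs_sum_kernel_sub_one_le h2 h3 (fun i hi h => (mem_oddClass.1 hi).2.1 h.2)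
          (fun d hd => abs_card_filter_dvd_oddClass hd) (hG j (hEI hj)))
      (fun i hi j hj => inv_le_kernel (hcopSV i hi j hj))
      (fun i hi j hj => inv_le_kernel (hcopQE i hi j hj)) hηb hν
  rw [hO, hEV'] at hWrow hWcol
  have hSO : S ⊆ oddClass n := Finset.filter_subset _ _
  have hEE : E ⊆ evenClass n := Finset.sdiff_subset
  refine le_trans (Real.exp_le_exp.2 (sub_le_sub_right ?_ _))
    (exp_entropy_symmetrize_le hW0 hWrow hWcol (fun i j h => ?_) hSO hEE)
  · have hent := sub_sum_le_sum_negMulLog (S := S) (E := E) (w := W)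
      (L := log (n / (2 * density n)) - 4 * η) (y := fun m => log (weight n m))
      (fun i hi => by
        rw [← hWrow i (hSO hi)]
        exact Finset.sum_le_sum_of_subset_of_nonneg hEE fun j _ _ => hW0 i j)
      (fun j hj => by
        rw [← hWcol j (hEE hj)]
        exact Finset.sum_le_sum_of_subset_of_nonneg hSO fun i _ _ => hW0 i j)
      (fun m => log_nonneg (one_le_weight n m))
      fun i hi j hj => by
        rw [hWS i hi j hj]
        exact mul_le_negMulLog_mul_kernel (by omega) hτ0 hτ1 i j
    have hmass : ∑ i ∈ S, ∑ j ∈ E, W i j = S.card - Q.card := by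
      rw [← hτM, Finset.mul_sum]
      refine Finset.sum_congr rfl fun i hi => ?_
      rw [Finset.mul_sum]
      exact Finset.sum_congr rfl fun j hj => hWS i hi j hj
    rw [hmass] at hent
    have hlogsum : ∑ i ∈ S, log (weight n i) + ∑ j ∈ E, log (weight n j) ≤
        ∑ m ∈ Finset.Ioc 0 n, log (weight n m) := by
      rw [← Finset.sum_union ((disjoint_oddClass_evenClass n).mono hSO hEE)]
      exact Finset.sum_le_sum_of_subset_of_nonneg
        (Finset.union_subset (hSO.trans hOI) (hEE.trans hEI)) fun m _ _ =>
          log_nonneg (one_le_weight n m)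
    have hβ := half_le_density n
    have hL1 : log (n / (2 * density n)) ≤ log n := by
      refine log_le_log (by positivity) (div_le_self hn0.le (by linarith))
    have hL0 : 0 ≤ log (n / (2 * density n)) := by
      refine log_nonneg ?_
      rw [le_div_iff₀ (by linarith)]
      have := density_le_one n
      have h12 : (12 : ℝ) ≤ n := by exact_mod_cast hn
      linarith
    have hc1 : (n : ℝ) ≤ 2 * (S.card - Q.card) + 8 * Q.card := by
      have : n ≤ 2 * S.card + 6 * Q.card := by omega
      have : (n : ℝ) ≤ 2 * S.card + 6 * Q.card := by exact_mod_cast this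
      linarith
    have hc2 : 2 * ((S.card : ℝ) - Q.card) ≤ n := by
      have : 2 * S.card ≤ n := by omega
      have : 2 * (S.card : ℝ) ≤ n := by exact_mod_cast this
      have : (0 : ℝ) ≤ Q.card := Nat.cast_nonneg _
      linarith
    have h1 := mul_le_mul_of_nonneg_right hc1 hL0
    have h2 := mul_le_mul_of_nonneg_left hL1 (Nat.cast_nonneg (α := ℝ) Q.card)
    have h3 := mul_le_mul_of_nonneg_right hc2 hη0
    nlinarith
  · rcases hWsupp i j h with ⟨h1, h2, h3⟩ | ⟨h1, h2⟩ | ⟨h1, h2⟩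
    · exact ⟨hSTO h1, hEE h2, coprime_of_ne_zero_kernel h3⟩
    · exact ⟨hSO h1, hVE h2, hcopSV i h1 j h2⟩
    · exact ⟨hQO h1, hEE h2, hcopQE i h1 j h2⟩

/-- The local factor at `p` of the product defining `coprimeConst`. -/
noncomputable def constFactor (p : ℝ) : ℝ :=
  (p - 1) ^ (2 * (1 - 1 / p)) / (p * (p - 2) ^ (1 - 2 / p))

theorem constFactor_two : constFactor 2 = 1 / 2 := by
  norm_num [constFactor]

theorem constFactor_pos {p : ℝ} (hp : 3 ≤ p) : 0 < constFactor p := by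
  unfold constFactor
  have h1 : 0 < p - 1 := by linarith
  have h2 : 0 < p - 2 := by linarith
  positivity

theorem log_constFactor {p : ℝ} (hp : 3 ≤ p) :
    log (constFactor p) = -log (p * (p - 2) / (p - 1) ^ 2) - 2 / p * log ((p - 1) / (p - 2)) := by
  have h0 : 0 < p := by linarith
  have h1 : 0 < p - 1 := by linarith
  have h2 : 0 < p - 2 := by linarith
  rw [constFactor, log_div (by positivity) (by positivity), log_mul h0.ne' (by positivity),
    log_rpow h1, log_rpow h2, log_div (by positivity) (by positivity), log_mul h0.ne' h2.ne',
    log_pow, log_div h1.ne' h2.ne']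
  push_cast
  ring

theorem constFactor_le_one {p : ℝ} (hp : 3 ≤ p) : constFactor p ≤ 1 := by
  have h0 : 0 < p := by linarith
  have h1 : 0 < p - 1 := by linarith
  have h2 : 0 < p - 2 := by linarith
  rw [← log_nonpos_iff (constFactor_pos hp).le, log_constFactor hp, ← log_inv]
  have h3 := log_le_sub_one_of_pos (x := (p * (p - 2) / (p - 1) ^ 2)⁻¹) (by positivity)
  have h4 : 1 / (p - 1) ≤ log ((p - 1) / (p - 2)) := by
    have := one_sub_inv_le_log_of_pos (x := (p - 1) / (p - 2)) (by positivity)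
    refine le_trans (le_of_eq ?_) this
    field_simp
    ring
  have h5 : 2 / p * (1 / (p - 1)) ≤ 2 / p * log ((p - 1) / (p - 2)) := by gcongr
  have h6 : (p * (p - 2) / (p - 1) ^ 2)⁻¹ - 1 ≤ 2 / p * (1 / (p - 1)) := by
    rw [show (p * (p - 2) / (p - 1) ^ 2)⁻¹ - 1 = 1 / (p * (p - 2)) by field_simp; ring,
      div_mul_div_comm, div_le_div_iff₀ (by positivity) (by positivity)]
    nlinarith
  linarith

theorem pow_three_le_constFactor {p : ℝ} (hp : 3 ≤ p) :
    (p * (p - 2) / (p - 1) ^ 2) ^ 3 ≤ constFactor p := by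
  have h0 : 0 < p := by linarith
  have h1 : 0 < p - 1 := by linarith
  have h2 : 0 < p - 2 := by linarith
  rw [← log_le_log_iff (by positivity) (constFactor_pos hp), log_constFactor hp, log_pow]
  have h3 := log_le_sub_one_of_pos (x := p * (p - 2) / (p - 1) ^ 2) (by positivity)
  have h4 := log_le_sub_one_of_pos (x := (p - 1) / (p - 2)) (by positivity)
  have h5 : 2 / p * log ((p - 1) / (p - 2)) ≤ 2 / p * ((p - 1) / (p - 2) - 1) := by gcongr
  have h6 : 2 / p * ((p - 1) / (p - 2) - 1) ≤ 4 * (1 - p * (p - 2) / (p - 1) ^ 2) := by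
    rw [show 2 / p * ((p - 1) / (p - 2) - 1) = 2 / (p * (p - 2)) by field_simp; ring,
      show 4 * (1 - p * (p - 2) / (p - 1) ^ 2) = 4 / (p - 1) ^ 2 by field_simp; ring,
      div_le_div_iff₀ (by positivity) (by positivity)]
    nlinarith
  push_cast
  linarith

theorem half_le_prod_oddPrimes_constFactor (n : ℕ) :
    (1 / 2) ^ 3 ≤ ∏ p ∈ oddPrimes n, constFactor p := by
  calc ((1 : ℝ) / 2) ^ 3 ≤ density n ^ 3 := by
        gcongr
        exact half_le_density n
    _ = ∏ p ∈ oddPrimes n, ((p : ℝ) * (p - 2) / (p - 1) ^ 2) ^ 3 := by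
        rw [density, Finset.prod_pow]
    _ ≤ _ := by
        refine Finset.prod_le_prod (fun p hp => ?_) fun p hp =>
          pow_three_le_constFactor (three_le_cast_of_mem_oddPrimes hp)
        have h3 := three_le_cast_of_mem_oddPrimes hp
        have h1 : 0 < (p : ℝ) - 1 := by linarith
        have h2 : 0 < (p : ℝ) - 2 := by linarith
        positivity

theorem prod_insert_two_constFactor (n : ℕ) :
    ∏ p ∈ insert 2 (oddPrimes n), constFactor p = 1 / 2 * ∏ p ∈ oddPrimes n, constFactor p := by
  rw [Finset.prod_insert fun h => (mem_oddPrimes.1 h).2.2 rfl]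
  norm_num [constFactor_two]

theorem constFactor_primes_mem {p : ℕ} (hp : p.Prime) :
    0 ≤ constFactor p ∧ constFactor p ≤ 1 := by
  rcases hp.two_le.eq_or_lt with rfl | h
  · norm_num [constFactor_two]
  · have : (3 : ℝ) ≤ p := by exact_mod_cast h
    exact ⟨(constFactor_pos this).le, constFactor_le_one this⟩

theorem le_prod_primes_constFactor (s : Finset Nat.Primes) :
    1 / 16 ≤ ∏ p ∈ s, constFactor (p : ℕ) := by
  obtain ⟨N, hN⟩ := (s.image fun p : Nat.Primes => (p : ℕ)).exists_nat_subset_range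
  have hsub : (s.image fun p : Nat.Primes => (p : ℕ)) ⊆ insert 2 (oddPrimes N) := by
    intro q hq
    have h1 := Finset.mem_range.1 (hN hq)
    obtain ⟨p, -, rfl⟩ := Finset.mem_image.1 hq
    by_cases h2 : (p : ℕ) = 2
    · exact Finset.mem_insert.2 (Or.inl h2)
    · exact Finset.mem_insert_of_mem (mem_oddPrimes.2 ⟨h1.le, p.2, h2⟩)
  have hprime : ∀ p ∈ insert 2 (oddPrimes N), p.Prime := by
    intro p hp
    rcases Finset.mem_insert.1 hp with rfl | hp
    exacts [Nat.prime_two, (mem_oddPrimes.1 hp).2.1]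
  calc (1 : ℝ) / 16 ≤ ∏ p ∈ insert 2 (oddPrimes N), constFactor p := by
        rw [prod_insert_two_constFactor]
        linarith [half_le_prod_oddPrimes_constFactor N]
    _ ≤ ∏ p ∈ s.image fun p : Nat.Primes => (p : ℕ), constFactor p :=
        Finset.prod_le_prod_of_subset_of_le_one hsub
          (fun p hp => (constFactor_primes_mem (hprime p hp)).1)
          fun p hp _ => (constFactor_primes_mem (hprime p hp)).2
    _ = _ := Finset.prod_image fun p _ q _ h => Subtype.ext h

theorem hasProd_constFactor :
    HasProd (fun p : Nat.Primes => constFactor (p : ℕ))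
      (⨅ s : Finset Nat.Primes, ∏ p ∈ s, constFactor (p : ℕ)) := by
  refine tendsto_atTop_ciInf (fun s t hst => ?_) ⟨1 / 16, ?_⟩
  · exact Finset.prod_le_prod_of_subset_of_le_one hst
      (fun p _ => (constFactor_primes_mem p.2).1) fun p _ _ => (constFactor_primes_mem p.2).2
  · rintro _ ⟨s, rfl⟩
    exact le_prod_primes_constFactor s

theorem coprimeConst_eq_iInf :
    coprimeConst = ⨅ s : Finset Nat.Primes, ∏ p ∈ s, constFactor (p : ℕ) :=
  hasProd_constFactor.tprod_eq

theorem le_coprimeConst : 1 / 16 ≤ coprimeConst := by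
  rw [coprimeConst_eq_iInf]
  exact le_ciInf le_prod_primes_constFactor

theorem coprimeConst_le_prod (s : Finset Nat.Primes) :
    coprimeConst ≤ ∏ p ∈ s, constFactor (p : ℕ) := by
  rw [coprimeConst_eq_iInf]
  exact ciInf_le ⟨1 / 16, by
    rintro _ ⟨s, rfl⟩
    exact le_prod_primes_constFactor s⟩ s

theorem coprimeConst_le_one : coprimeConst ≤ 1 := by
  simpa using coprimeConst_le_prod ∅

theorem coprimeConst_le_prod_oddPrimes {n : ℕ} :
    coprimeConst ≤ 1 / 2 * ∏ p ∈ oddPrimes n, constFactor p := by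
  rw [← prod_insert_two_constFactor, ← Finset.prod_subtype_of_mem (p := Nat.Prime)
    (fun q : ℕ => constFactor q)]
  · exact coprimeConst_le_prod _
  · intro p hp
    rcases Finset.mem_insert.1 hp with rfl | hp
    exacts [Nat.prime_two, (mem_oddPrimes.1 hp).2.1]

theorem sum_log_weight_le (n : ℕ) :
    ∑ m ∈ Finset.Ioc 0 n, log (weight n m) ≤
      n * ∑ p ∈ oddPrimes n, 1 / (p : ℝ) * log (((p : ℝ) - 1) / (p - 2)) := by
  have h : ∀ m, log (weight n m) = ∑ p ∈ oddPrimes n,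
      if p ∣ m then log (((p : ℝ) - 1) / (p - 2)) else 0 := by
    intro m
    rw [weight, log_prod, Finset.sum_filter]
    intro p hp
    have h3 := three_le_cast_of_mem_oddPrimes (Finset.mem_filter.1 hp).1
    have h1 : 0 < (p : ℝ) - 1 := by linarith
    have h2 : 0 < (p : ℝ) - 2 := by linarith
    positivity
  simp_rw [h]
  rw [Finset.sum_comm, Finset.mul_sum]
  refine Finset.sum_le_sum fun p hp => ?_
  have h3 := three_le_cast_of_mem_oddPrimes hp
  rw [← Finset.sum_filter, Finset.sum_const, Nat.Ioc_filter_dvd_card_eq_div, nsmul_eq_mul,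
    ← mul_assoc, mul_one_div]
  refine mul_le_mul_of_nonneg_right Nat.cast_div_le (log_nonneg ?_)
  rw [le_div_iff₀] <;> linarith

theorem log_coprimeConst_le {n : ℕ} (hn : n ≠ 0) :
    n * log n + n * log coprimeConst ≤ n * log (n / (2 * density n)) -
      2 * ∑ m ∈ Finset.Ioc 0 n, log (weight n m) := by
  have hc : 0 < coprimeConst := lt_of_lt_of_le (by norm_num) le_coprimeConst
  have h1 := log_le_log hc (coprimeConst_le_prod_oddPrimes (n := n))
  have h2 : ∏ p ∈ oddPrimes n, constFactor p ≠ 0 := Finset.prod_ne_zero_iff.2 fun p hp =>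
    (constFactor_pos (three_le_cast_of_mem_oddPrimes hp)).ne'
  have h3 : log (∏ p ∈ oddPrimes n, constFactor p) = -log (density n) -
      2 * ∑ p ∈ oddPrimes n, 1 / (p : ℝ) * log (((p : ℝ) - 1) / (p - 2)) := by
    rw [density, log_prod, log_prod, Finset.mul_sum, ← Finset.sum_neg_distrib,
      ← Finset.sum_sub_distrib]
    · refine Finset.sum_congr rfl fun p hp => ?_
      rw [log_constFactor (three_le_cast_of_mem_oddPrimes hp)]
      ring
    · intro p hp
      have h3 := three_le_cast_of_mem_oddPrimes hp
      have h1 : 0 < (p : ℝ) - 1 := by linarith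
      have h2 : 0 < (p : ℝ) - 2 := by linarith
      positivity
    · exact Finset.prod_ne_zero_iff.1 h2
  have h4 := half_le_density n
  have hn0 : (0 : ℝ) < n := by positivity
  rw [log_mul (by norm_num) h2, h3, one_div, log_inv] at h1
  rw [log_div hn0.ne' (by linarith), log_mul (by norm_num) (by linarith)]
  have h5 := sum_log_weight_le n
  have h6 := mul_le_mul_of_nonneg_left h1 hn0.le
  linarith

/-- Erdős's estimate of the central binomial coefficient, keeping the primes of `(M, 2 * M]`. -/
theorem centralBinom_le_mul_pow_card_primes {M : ℕ} (hM : 2 < M) :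
    M.centralBinom ≤ (2 * M) ^ Nat.sqrt (2 * M) * 4 ^ (2 * M / 3) *
      (2 * M) ^ ((Finset.Ioc M (2 * M)).filter Nat.Prime).card := by
  have hM2 : 1 ≤ 2 * M := by omega
  set f : ℕ → ℕ := fun p ↦ p ^ M.centralBinom.factorization p with hf
  set S := (Finset.range (2 * M + 1)).filter Nat.Prime with hS
  set A := S.filter (· ≤ Nat.sqrt (2 * M))
  set B := (S.filter (fun p ↦ ¬ p ≤ Nat.sqrt (2 * M))).filter (· ≤ 2 * M / 3)
  set D := (S.filter (fun p ↦ ¬ p ≤ Nat.sqrt (2 * M))).filter (fun p ↦ ¬ p ≤ 2 * M / 3)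
  have hprod : M.centralBinom = (∏ p ∈ A, f p) * ((∏ p ∈ B, f p) * ∏ p ∈ D, f p) := by
    rw [Finset.prod_filter_mul_prod_filter_not, Finset.prod_filter_mul_prod_filter_not,
      Finset.prod_filter_of_ne, Nat.prod_pow_factorization_centralBinom]
    intro p _ h
    contrapose! h
    simp only [hf]
    rw [Nat.factorization_eq_zero_of_not_prime _ h, pow_zero]
  have hle : ∀ p, f p ≤ 2 * M := fun p ↦ Nat.pow_factorization_choose_le (by omega)
  rw [hprod, ← mul_assoc]
  refine Nat.mul_le_mul (Nat.mul_le_mul ?_ ?_) ?_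
  · refine (Finset.prod_le_pow_card _ _ _ fun p _ ↦ hle p).trans (pow_right_mono₀ hM2 ?_)
    have hsub : A ⊆ Finset.Icc 1 (Nat.sqrt (2 * M)) := fun p hp ↦ by
      obtain ⟨h1, h2⟩ := Finset.mem_filter.1 hp
      exact Finset.mem_Icc.2 ⟨(Finset.mem_filter.1 h1).2.one_lt.le, h2⟩
    simpa using Finset.card_le_card hsub
  · refine le_trans ?_ (primorial_le_four_pow (2 * M / 3))
    refine (Finset.prod_le_prod' fun p hp ↦ (?_ : f p ≤ p)).trans ?_
    · obtain ⟨h1, -⟩ := Finset.mem_filter.1 hp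
      obtain ⟨h2, h3⟩ := Finset.mem_filter.1 h1
      refine (pow_right_mono₀ (Finset.mem_filter.1 h2).2.one_lt.le ?_).trans (pow_one p).le
      exact Nat.factorization_choose_le_one (Nat.sqrt_lt'.mp <| not_le.1 h3)
    · refine Finset.prod_le_prod_of_subset_of_one_le' (fun p hp ↦ ?_) fun p hp _ ↦ ?_
      · obtain ⟨h1, h2⟩ := Finset.mem_filter.1 hp
        have h3 := (Finset.mem_filter.1 (Finset.mem_filter.1 h1).1).2
        simp [h3]
        omega
      · exact (Finset.mem_filter.1 hp).2.one_lt.le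
  · have hD : ∏ p ∈ D, f p = ∏ p ∈ D.filter (M < ·), f p := by
      refine (Finset.prod_filter_of_ne fun p hp h ↦ ?_).symm
      obtain ⟨h1, h2⟩ := Finset.mem_filter.1 hp
      by_contra hlt
      refine h ?_
      simp only [hf]
      rw [Nat.factorization_centralBinom_of_two_mul_self_lt_three_mul hM (by omega) (by omega),
        pow_zero]
    rw [hD]
    refine (Finset.prod_le_pow_card _ _ _ fun p _ ↦ hle p).trans
      (pow_right_mono₀ hM2 (Finset.card_le_card fun p hp ↦ ?_))
    obtain ⟨h1, h2⟩ := Finset.mem_filter.1 hp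
    have h3 := (Finset.mem_filter.1 (Finset.mem_filter.1 h1).1).1
    rw [hS, Finset.mem_filter, Finset.mem_range] at h3
    rw [Finset.mem_filter, Finset.mem_Ioc]
    exact ⟨⟨h2, by omega⟩, h3.2⟩

theorem le_card_primes_mul_log {M : ℕ} (hM : 4 ≤ M) :
    M * log 4 / 3 ≤
      (√(2 * M) + 1 + ((Finset.Ioc M (2 * M)).filter Nat.Prime).card) * log (2 * M) := by
  set k := ((Finset.Ioc M (2 * M)).filter Nat.Prime).card
  have h1 : 4 ^ M ≤ M * ((2 * M) ^ Nat.sqrt (2 * M) * 4 ^ (2 * M / 3) * (2 * M) ^ k) :=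
    (Nat.four_pow_lt_mul_centralBinom M hM).le.trans
      (Nat.mul_le_mul le_rfl (centralBinom_le_mul_pow_card_primes (by omega)))
  have hM0 : (4 : ℝ) ≤ M := by exact_mod_cast hM
  have h2 : (4 : ℝ) ^ M ≤ M * ((2 * M) ^ Nat.sqrt (2 * M) * 4 ^ (2 * M / 3) * (2 * M) ^ k) := by
    exact_mod_cast h1
  have h3 := log_le_log (by positivity) h2
  rw [log_mul (by positivity) (by positivity), log_mul (by positivity) (by positivity),
    log_mul (by positivity) (by positivity), log_pow, log_pow, log_pow, log_pow] at h3
  have h4 : ((2 * M / 3 : ℕ) : ℝ) ≤ 2 * M / 3 := by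
    simpa using (Nat.cast_div_le (m := 2 * M) (n := 3) (α := ℝ))
  have h5 : ((Nat.sqrt (2 * M) : ℕ) : ℝ) ≤ √(2 * M) := by
    simpa using Real.nat_sqrt_le_real_sqrt (a := 2 * M)
  have h6 : log M ≤ log (2 * M) := log_le_log (by positivity) (by linarith)
  have h7 : 0 ≤ log (2 * M) := log_nonneg (by linarith)
  have h8 : 0 ≤ log (4 : ℝ) := log_nonneg (by norm_num)
  have h9 := mul_le_mul_of_nonneg_right h4 h8
  have h10 := mul_le_mul_of_nonneg_right h5 h7
  linarith

theorem eventually_exists_primes : ∀ᶠ n : ℕ in atTop, ∃ Q : Finset ℕ, (∀ q ∈ Q, q.Prime) ∧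
    (∀ q ∈ Q, n < 4 * q ∧ 2 * q ≤ n) ∧ Q.card = ⌈(n : ℝ) ^ (3 / 4 : ℝ)⌉₊ := by
  have hlog : ∀ᶠ n : ℕ in atTop, log (n : ℝ) ≤ 1 / 1000 * (n : ℝ) ^ (1 / 4 : ℝ) := by
    have := ((isLittleO_log_rpow_atTop (r := 1 / 4) (by norm_num)).comp_tendsto
      tendsto_natCast_atTop_atTop).bound (c := 1 / 1000) (by norm_num)
    filter_upwards [this] with n hn
    simp only [Function.comp, norm_eq_abs] at hn
    rw [abs_of_nonneg (by positivity : 0 ≤ (n : ℝ) ^ (1 / 4 : ℝ))] at hn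
    exact (le_abs_self _).trans hn
  filter_upwards [hlog, eventually_ge_atTop 32] with n hn hn32
  set M := n / 4 with hMdef
  set P := (Finset.Ioc M (2 * M)).filter Nat.Prime
  have hn32' : (32 : ℝ) ≤ n := by exact_mod_cast hn32
  have hMn : (n : ℝ) ≤ 4 * M + 4 := by
    have : n ≤ 4 * M + 4 := by omega
    exact_mod_cast this
  have hMn' : (2 * M : ℝ) ≤ n := by
    have : 2 * M ≤ n := by omega
    exact_mod_cast this
  have hM4 : 4 ≤ M := by omega
  have hM4' : (4 : ℝ) ≤ M := by exact_mod_cast hM4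
  set t := (n : ℝ) ^ (3 / 4 : ℝ) with ht
  set s := (n : ℝ) ^ (1 / 4 : ℝ) with hs
  have hst : t * s = n := by
    rw [ht, hs, ← rpow_add (by linarith)]; norm_num
  have ht1 : 1 ≤ t := one_le_rpow (by linarith) (by norm_num)
  have hs1 : 1 ≤ s := one_le_rpow (by linarith) (by norm_num)
  have hcard : ⌈t⌉₊ ≤ P.card := by
    by_contra hlt
    have hPt : (P.card : ℝ) ≤ t := by
      have := Nat.lt_ceil.1 (not_le.1 hlt)
      exact this.le
    have hsq : √(2 * M) ≤ t := by
      refine (sqrt_le_sqrt hMn').trans ?_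
      rw [sqrt_eq_rpow]
      exact rpow_le_rpow_of_exponent_le (by linarith) (by norm_num)
    have h1 := le_card_primes_mul_log hM4
    have h2 : log (2 * M) ≤ log n := log_le_log (by positivity) hMn'
    have h3 : (√(2 * M) + 1 + P.card) * log (2 * M) ≤ (3 * t) * (1 / 1000 * s) := by
      apply mul_le_mul (by linarith) (h2.trans hn) (log_nonneg (by linarith)) (by linarith)
    have h4 : (1 : ℝ) ≤ log 4 := by
      rw [le_log_iff_exp_le (by norm_num)]
      linarith [exp_one_lt_d9]
    nlinarith
  obtain ⟨Q, hQP, hQc⟩ := Finset.exists_subset_card_eq hcard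
  refine ⟨Q, fun q hq ↦ (Finset.mem_filter.1 (hQP hq)).2, fun q hq ↦ ?_, hQc⟩
  have := Finset.mem_Ioc.1 (Finset.mem_filter.1 (hQP hq)).1
  omega

/-- The number of square-free divisors is at most a small power. -/
theorem exists_two_pow_card_le {κ : ℝ} (hκ : 0 < κ) : ∃ C : ℝ, 1 ≤ C ∧ ∀ n : ℕ,
    ∀ m ∈ Finset.Ioc 0 n, (2 : ℝ) ^ ((oddPrimes n).filter (· ∣ m)).card ≤ C * (n : ℝ) ^ κ := by
  obtain ⟨K, hK⟩ := eventually_atTop.1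
    ((tendsto_rpow_atTop hκ).comp tendsto_natCast_atTop_atTop |>.eventually_ge_atTop (2 : ℝ))
  refine ⟨2 ^ K, one_le_pow₀ (by norm_num), fun n m hm ↦ ?_⟩
  obtain ⟨hm0, hmn⟩ := Finset.mem_Ioc.1 hm
  set T := (oddPrimes n).filter (· ∣ m)
  have hprime : ∀ p ∈ T, p.Prime := fun p hp ↦
    (mem_oddPrimes.1 (Finset.mem_filter.1 hp).1).2.1
  have hdvd : ∏ p ∈ T, p ∣ m :=
    Finset.prod_primes_dvd m (fun p hp ↦ (hprime p hp).prime)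
      fun p hp ↦ (Finset.mem_filter.1 hp).2
  have hle : (∏ p ∈ T, (p : ℝ)) ≤ n := by
    rw [← Nat.cast_prod]
    exact_mod_cast (Nat.le_of_dvd hm0 hdvd).trans hmn
  have hone : ∀ p ∈ T, (1 : ℝ) ≤ p := fun p hp ↦ by exact_mod_cast (hprime p hp).one_lt.le
  calc (2 : ℝ) ^ T.card = ∏ p ∈ T, 2 := by simp
    _ ≤ ∏ p ∈ T, ((if p < K then 2 else 1) * (p : ℝ) ^ κ) := by
        refine Finset.prod_le_prod (fun _ _ ↦ by norm_num) fun p hp ↦ ?_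
        split_ifs with h
        · have := one_le_rpow (hone p hp) hκ.le
          linarith
        · rw [one_mul]
          exact hK p (not_lt.1 h)
    _ = (∏ p ∈ T, if p < K then (2 : ℝ) else 1) * (∏ p ∈ T, (p : ℝ)) ^ κ := by
        rw [Finset.prod_mul_distrib, Real.finsetProd_rpow _ _ fun p _ ↦ Nat.cast_nonneg p]
    _ ≤ 2 ^ K * (n : ℝ) ^ κ := by
        refine mul_le_mul ?_ (rpow_le_rpow (Finset.prod_nonneg fun p _ ↦ Nat.cast_nonneg p)
          hle hκ.le) (by positivity) (by positivity)
        rw [Finset.prod_ite, Finset.prod_const, Finset.prod_const, one_pow, mul_one]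
        refine pow_right_mono₀ (by norm_num) ?_
        calc (T.filter (· < K)).card ≤ (Finset.range K).card := Finset.card_le_card fun p hp ↦
              Finset.mem_range.2 (Finset.mem_filter.1 hp).2
          _ = K := Finset.card_range K

theorem factorial_le_exp {n : ℕ} (hn : 1 ≤ n) :
    (n.factorial : ℝ) ≤ exp (n * log n - n + 1 + log n) := by
  induction n, hn using Nat.le_induction with
  | base => simp
  | succ n hn ih =>
    have hn0 : (0 : ℝ) < n := by exact_mod_cast hn
    have h1 : log (n / (n + 1)) ≤ n / (n + 1) - 1 := log_le_sub_one_of_pos (by positivity)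
    rw [log_div (by positivity) (by positivity)] at h1
    have h2 : ((n : ℝ) + 1) * (log n - log (n + 1)) ≤ -1 := by
      refine (mul_le_mul_of_nonneg_left h1 (by positivity)).trans_eq ?_
      field_simp
      ring
    rw [Nat.factorial_succ]
    push_cast
    calc ((n : ℝ) + 1) * n.factorial
        ≤ exp (log (n + 1)) * exp (n * log n - n + 1 + log n) := by
          rw [exp_log (by positivity)]
          gcongr
      _ ≤ _ := by
          rw [← exp_add, exp_le_exp]
          linarith

theorem eventually_rpow_le_exp_neg_sqrt : ∀ᶠ n : ℕ in atTop,
    1 / (n : ℝ) ^ (1 / 16 : ℝ) ≤ exp (-1 * √(log n * log (log n))) ∧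
      exp (-1 * √(log n * log (log n))) ≤ 1 / 16 := by
  have hlog : Tendsto (fun n : ℕ ↦ log (n : ℝ)) atTop atTop :=
    tendsto_log_atTop.comp tendsto_natCast_atTop_atTop
  have hloglog : ∀ᶠ x : ℝ in atTop, log x ≤ 1 / 256 * x := by
    filter_upwards [isLittleO_log_id_atTop.bound (c := 1 / 256) (by norm_num),
      eventually_ge_atTop 0] with x hx hx0
    simp only [norm_eq_abs, id, abs_of_nonneg hx0] at hx
    exact (le_abs_self _).trans hx
  filter_upwards [hlog.eventually hloglog, hlog.eventually_ge_atTop 16, eventually_ge_atTop 1]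
    with n h1 h2 hn
  have hn0 : (0 : ℝ) < n := by exact_mod_cast hn
  have h3 : 1 ≤ log (log n) := by
    rw [le_log_iff_exp_le (by linarith)]
    linarith [exp_one_lt_d9]
  constructor
  · rw [one_div, ← rpow_neg hn0.le, rpow_def_of_pos hn0, exp_le_exp]
    have : √(log n * log (log n)) ≤ log n / 16 := by
      rw [sqrt_le_iff]
      constructor
      · linarith
      · nlinarith
    linarith
  · have h4 : 4 ≤ √(log n * log (log n)) := by
      apply le_sqrt_of_sq_le
      nlinarith
    have h5 : (16 : ℝ) ≤ exp 4 := by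
      have h6 : exp 4 = exp 1 ^ 4 := by rw [← exp_nat_mul]; norm_num
      rw [h6]
      have h7 : (2 : ℝ) ≤ exp 1 := by linarith [add_one_le_exp (1 : ℝ)]
      calc (16 : ℝ) = 2 ^ 4 := by norm_num
        _ ≤ exp 1 ^ 4 := by gcongr
    calc exp (-1 * √(log n * log (log n))) ≤ exp (-4) := by gcongr; linarith
      _ = (exp 4)⁻¹ := exp_neg 4
      _ ≤ 1 / 16 := by rw [one_div]; exact inv_anti₀ (by norm_num) h5

/-- The lower bound for `coprimePermCount` with explicit error terms. -/
theorem eventually_exp_le_coprimePermCount : ∃ C : ℝ, 1 ≤ C ∧ ∀ᶠ n : ℕ in atTop,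
    exp (n * log n + n * log coprimeConst - n - 16 * (n : ℝ) ^ (3 / 4 : ℝ) * log n -
      32 * C ^ 2 * (n : ℝ) ^ (9 / 16 : ℝ)) ≤ (coprimePermCount n : ℝ) := by
  obtain ⟨C, hC1, hC⟩ := exists_two_pow_card_le (κ := 1 / 32) (by norm_num)
  refine ⟨C, hC1, ?_⟩
  have hy : Tendsto (fun n : ℕ ↦ (n : ℝ) ^ (1 / 16 : ℝ)) atTop atTop :=
    (tendsto_rpow_atTop (by norm_num)).comp tendsto_natCast_atTop_atTop
  filter_upwards [eventually_exists_primes, hy.eventually_ge_atTop (80 * C ^ 4),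
    eventually_ge_atTop 12] with n hQ hyC hn
  obtain ⟨Q, hQp, hQn, hQc⟩ := hQ
  have hn0 : (0 : ℝ) < n := by
    have : 0 < n := by omega
    exact_mod_cast this
  set y := (n : ℝ) ^ (1 / 16 : ℝ) with hydef
  have hpow : ∀ k : ℕ, y ^ k = (n : ℝ) ^ ((k : ℝ) / 16) := fun k ↦ by
    rw [hydef, ← rpow_natCast, ← rpow_mul hn0.le]
    congr 1
    ring
  have hny : (n : ℝ) = y ^ 16 := by rw [hpow]; norm_num
  have h34 : (n : ℝ) ^ (3 / 4 : ℝ) = y ^ 12 := by rw [hpow]; norm_num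
  have h916 : (n : ℝ) ^ (9 / 16 : ℝ) = y ^ 9 := by rw [hpow]; norm_num
  have hsq : √(n : ℝ) = y ^ 8 := by rw [hpow, sqrt_eq_rpow]; norm_num
  have hG : ((n : ℝ) ^ (1 / 32 : ℝ)) ^ 2 = y := by
    rw [← rpow_natCast, ← rpow_mul hn0.le, hydef]; norm_num
  have hC2 : 1 ≤ C ^ 2 := one_le_pow₀ hC1
  have hC24 : C ^ 2 ≤ C ^ 4 := pow_le_pow_right₀ hC1 (by norm_num)
  have hy80 : 80 ≤ y := by linarith [one_le_pow₀ hC1 (n := 4)]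
  have hy0 : 0 < y := by linarith
  have hyC2 : 80 * C ^ 2 ≤ y := by linarith
  have hut : y ^ 12 ≤ (Q.card : ℝ) := by rw [hQc, h34]; exact Nat.le_ceil _
  have hu : (Q.card : ℝ) ≤ 2 * y ^ 12 := by
    have h1 := (Nat.ceil_lt_add_one (by positivity : 0 ≤ y ^ 12)).le
    have h2 : 1 ≤ y ^ 12 := one_le_pow₀ (by linarith)
    rw [hQc, h34]
    linarith
  have hu0 : 0 < Q.card := by
    have : (0 : ℝ) < Q.card := (by positivity : (0 : ℝ) < y ^ 12).trans_le hut
    exact_mod_cast this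
  have hy3 : y ≤ y ^ 3 := le_self_pow₀ (by linarith) (by norm_num)
  have hy7 : y ^ 3 ≤ y ^ 7 := pow_le_pow_right₀ (by linarith) (by norm_num)
  have hu5 : 5 * Q.card ≤ n / 2 := by
    have h1 : (10 : ℝ) * Q.card ≤ n := by
      rw [hny]
      have : y ^ 16 = y ^ 12 * (y * y ^ 3) := by ring
      have h2 : 20 ≤ y * y ^ 3 := by nlinarith
      have h3 : 0 < y ^ 12 := by positivity
      nlinarith
    have h2 : 10 * Q.card ≤ n := by exact_mod_cast h1
    omega
  set η := 8 * (C * (n : ℝ) ^ (1 / 32 : ℝ)) ^ 2 / √n with hη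
  have hηy : η = 8 * C ^ 2 / y ^ 7 := by
    rw [hη, mul_pow, hG, hsq]
    field_simp
  set ν := (Q.card : ℝ) * (2 * (C * (n : ℝ) ^ (1 / 32 : ℝ)) ^ 2 / n) with hν
  have hν0 : 0 ≤ ν := mul_nonneg (Nat.cast_nonneg _) (by positivity)
  have hνy : ν ≤ 4 * C ^ 2 / y ^ 3 := by
    rw [hν, mul_pow, hG, hny]
    calc (Q.card : ℝ) * (2 * (C ^ 2 * y) / y ^ 16) ≤ 2 * y ^ 12 * (2 * (C ^ 2 * y) / y ^ 16) := by
          gcongr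
      _ = 4 * C ^ 2 / y ^ 3 := by field_simp; ring
  have hη' : η ≤ 1 / 4 := by
    rw [hηy, div_le_iff₀ (by positivity)]
    linarith
  have hν' : ν ≤ 1 / 4 := by
    refine hνy.trans ?_
    rw [div_le_iff₀ (by positivity)]
    linarith
  have hcond : 6 * η + 2 * ν ^ 2 ≤ Q.card * (1 / n) := by
    calc 6 * η + 2 * ν ^ 2 ≤ 6 * (8 * C ^ 2 / y ^ 7) + 2 * (4 * C ^ 2 / y ^ 3) ^ 2 := by
          rw [hηy]
          linarith [pow_le_pow_left₀ hν0 hνy 2]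
      _ = (48 * C ^ 2 + 32 * C ^ 4 * y) / y ^ 7 := by field_simp; ring
      _ ≤ y ^ 3 / y ^ 7 := by
          gcongr
          have h1 : 32 * C ^ 4 * y ≤ y / 2 * y := by gcongr; linarith
          nlinarith
      _ = y ^ 12 * (1 / y ^ 16) := by field_simp
      _ ≤ Q.card * (1 / n) := by rw [hny]; gcongr
  refine le_trans ?_ (exp_le_coprimePermCount hn hQp hQn hu0 hu5 (hC n) hη hη' (by linarith) hcond)
  have hlogn : 0 ≤ log n := log_natCast_nonneg n
  have hconst := log_coprimeConst_le (n := n) (by omega)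
  have h1 : 8 * (Q.card : ℝ) * log n ≤ 16 * y ^ 12 * log n := by
    gcongr ?_ * _
    linarith
  have h2 : 4 * η * n = 32 * C ^ 2 * y ^ 9 := by
    rw [hηy, hny]
    field_simp
    ring
  rw [exp_le_exp, h34, h916, h2]
  linarith

/-- Lower bound: there are `δ > 0` and `N` such that for all `n ≥ N`,
`C(n) ≥ n!·(c − exp(−δ√(log n log log n)))^n`. -/
theorem coprimePermCount_lower :
    ∃ δ : ℝ, 0 < δ ∧ ∃ N : ℕ, ∀ n : ℕ, N ≤ n →
      (n.factorial : ℝ) *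
          (coprimeConst - Real.exp (-δ * Real.sqrt (Real.log n * Real.log (Real.log n)))) ^ n
        ≤ (coprimePermCount n : ℝ) := by
  obtain ⟨C, hC1, hC⟩ := eventually_exp_le_coprimePermCount
  have hy : Tendsto (fun n : ℕ ↦ (n : ℝ) ^ (1 / 16 : ℝ)) atTop atTop :=
    (tendsto_rpow_atTop (by norm_num)).comp tendsto_natCast_atTop_atTop
  have hlog : ∀ᶠ n : ℕ in atTop, log (n : ℝ) ≤ (n : ℝ) ^ (1 / 16 : ℝ) := by
    have := ((isLittleO_log_rpow_atTop (r := 1 / 16) (by norm_num)).comp_tendsto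
      tendsto_natCast_atTop_atTop).bound (c := 1) one_pos
    filter_upwards [this] with n hn
    simp only [Function.comp, norm_eq_abs, one_mul] at hn
    rw [abs_of_nonneg (by positivity : 0 ≤ (n : ℝ) ^ (1 / 16 : ℝ))] at hn
    exact (le_abs_self _).trans hn
  refine ⟨1, one_pos, eventually_atTop.1 ?_⟩
  filter_upwards [hC, hlog, eventually_rpow_le_exp_neg_sqrt, hy.eventually_ge_atTop (50 * C ^ 2),
    eventually_ge_atTop 1] with n hn hlogn hε hyC hn1
  obtain ⟨hεy, hε16⟩ := hε
  have hn0 : (0 : ℝ) < n := by exact_mod_cast hn1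
  set ε := exp (-1 * √(log n * log (log n)))
  set y := (n : ℝ) ^ (1 / 16 : ℝ) with hydef
  have hpow : ∀ k : ℕ, y ^ k = (n : ℝ) ^ ((k : ℝ) / 16) := fun k ↦ by
    rw [hydef, ← rpow_natCast, ← rpow_mul hn0.le]
    congr 1
    ring
  have hny : (n : ℝ) = y ^ 16 := by rw [hpow]; norm_num
  have h34 : (n : ℝ) ^ (3 / 4 : ℝ) = y ^ 12 := by rw [hpow]; norm_num
  have h916 : (n : ℝ) ^ (9 / 16 : ℝ) = y ^ 9 := by rw [hpow]; norm_num
  have hC2 : 1 ≤ C ^ 2 := one_le_pow₀ hC1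
  have hy1 : 1 ≤ y := by linarith
  have hy0 : 0 < y := by linarith
  have hc0 : 0 < coprimeConst := by linarith [le_coprimeConst]
  have hbase : coprimeConst - ε ≤ coprimeConst * exp (-ε) := by
    have h1 := mul_le_mul_of_nonneg_left (add_one_le_exp (-ε)) hc0.le
    have h2 : coprimeConst * ε ≤ ε :=
      mul_le_of_le_one_left (exp_pos _).le coprimeConst_le_one
    linarith
  have herr : 1 + log n + 16 * y ^ 12 * log n + 32 * C ^ 2 * y ^ 9 ≤ n * ε := by
    have h1 : y ^ 15 ≤ n * ε := by
      calc y ^ 15 = n * (1 / y) := by rw [hny]; field_simp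
        _ ≤ n * ε := by gcongr
    have h2 : 16 * y ^ 12 * log n ≤ 16 * y ^ 13 := by
      calc 16 * y ^ 12 * log n ≤ 16 * y ^ 12 * y := by gcongr
        _ = 16 * y ^ 13 := by ring
    have h3 : 1 ≤ y ^ 13 := one_le_pow₀ hy1
    have h4 : y ≤ y ^ 13 := le_self_pow₀ hy1 (by norm_num)
    have h5 : C ^ 2 * y ^ 9 ≤ C ^ 2 * y ^ 13 := by
      gcongr
      norm_num
    have h6 : 50 * C ^ 2 * y ^ 13 ≤ y ^ 15 := by
      calc 50 * C ^ 2 * y ^ 13 ≤ y * y ^ 13 := by gcongr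
        _ = y ^ 14 := by ring
        _ ≤ y ^ 15 := pow_le_pow_right₀ hy1 (by norm_num)
    have h7 : y ^ 13 ≤ C ^ 2 * y ^ 13 := le_mul_of_one_le_left (by positivity) hC2
    linarith
  rw [h34, h916] at hn
  refine le_trans ?_ hn
  calc (n.factorial : ℝ) * (coprimeConst - ε) ^ n
      ≤ exp (n * log n - n + 1 + log n) * (coprimeConst * exp (-ε)) ^ n := by
        refine mul_le_mul (factorial_le_exp hn1) (pow_le_pow_left₀ ?_ hbase n) ?_ (exp_pos _).le
        · linarith [le_coprimeConst]
        · exact pow_nonneg (by linarith [le_coprimeConst]) n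
    _ = exp (n * log n - n + 1 + log n + (n * log coprimeConst + n * -ε)) := by
        rw [exp_add _ (n * log coprimeConst + n * -ε), exp_add (n * log coprimeConst),
          exp_nat_mul, exp_nat_mul, exp_log hc0, mul_pow]
    _ ≤ _ := by
        rw [exp_le_exp]
        linarith
end
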